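/- Let Γ be a finitely generated group which is linear over a field of characteristic 0, i.e., Γ embeds as a subgroup of GL_n(F) for some n ≥ 1 and some field F of characteristic 0. Then Γ has exponential growth if and only if Γ has uniform exponential growth. -/

import Mathlib

/-!
Uniform exponential growth implies exponential growth because the infimum bounds the growth rate of
any generating set from below. For the converse it is enough to find `M` such that every generating
set has two words of length at most `M` generating a free semigroup (`UniformFree`): such a pair
forces `ω_S ≥ 2 ^ (1 / M)`. This property passes from a finite-index subgroup to the whole group,
since that subgroup is generated by words of bounded length in `S` (Schreier).

Embed the group in `GL_n(K)` with `K` algebraically closed of characteristic zero.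
`structure_theorem` shows that some finite-index subgroup satisfies one of three alternatives.

* It has a block-triangular basis: lower triangular matrices whose entries between different
  diagonal characters vanish. Up to a diagonal part, which commutes with everything, a word is then
  a product of unipotent matrices, so the growth is polynomial (`polyGrowth_of_block`). This is
  incompatible with exponential growth.
* It acts on the affine line without fixed point and with infinite linear part. After specialisation
  to a number field, Northcott's theorem gives a generator a uniform power of which expands at some
  place, and this power plays ping-pong with a conjugate (`AffineAction.uniformFree`).
* It has a strongly irreducible representation `ρ` of dimension `d ≥ 2`
  (`StronglyIrred.uniformFree`).

In the last case the determinant is made trivial by a finite central extension, and `ρ` is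
specialised to a number field so that it stays infinite and spans the matrix algebra on all
subgroups of bounded index (`separated_pairs'`). There remain finitely many bad primes, dividing
`m`, and the relevant absolute values are the archimedean ones and those above `m`. By Northcott,
for every `S` there are a word `γ` of bounded length and a place `v` for which `|tr ρ(γ)|_v` is
large, and maximal among all places and all words of that length (`exists_large_trace`). Write `q`
for a fixed root of this maximum. In the left regular representation, in a basis of the matrix
algebra consisting of short words, the matrix of a short word is expressed by traces of short words.
All data derived from it (eigenvalues, spectral projections, inverses) are therefore *tame*: bounded
at all places by a power of `q` with exponent independent of `S`, and, by Liouville's inequality,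
bounded below by such a power when nonzero. As `ρ(γ)` has determinant one and a large trace, its
eigenvalues have a gap by a factor of at least `q`; let `π` be the spectral projection onto the
large ones. A word `b` of bounded length moves the image of `π` into general position
(`exists_general_position`), because otherwise the stabiliser of this image would have bounded index
and `ρ` would be reducible on it. Tameness then turns the gap `q` into a contraction that beats all
other constants after a power `t` independent of `S`, and `γ ^ t` and `b * γ ^ t` play ping-pong at
`v` (`ping_pong`, `local_ping_pong`).
-/

open Filter

/-- The ball of radius `n` in the word metric on a group with respect to a finite set `S`:
the set of elements expressible as a product of at most `n` elements of `S ∪ S⁻¹`. -/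
def wordBall {G : Type*} [Group G] (S : Finset G) (n : ℕ) : Set G :=
  {x | ∃ l : List G, l.length ≤ n ∧ (∀ y ∈ l, y ∈ S ∨ y⁻¹ ∈ S) ∧ l.prod = x}

/-- `S` is a (finite) generating set of the group `G`. -/
def Generates {G : Type*} [Group G] (S : Finset G) : Prop :=
  Subgroup.closure (S : Set G) = ⊤

/-- The growth rate `ω_S = lim_{n → ∞} |B_S(n)|^{1/n}` of a group with respect to a finite
generating set `S`.  (The limit exists by submultiplicativity, so it coincides with the
`limsup`, which we use to define it.) -/
noncomputable def growthRate {G : Type*} [Group G] (S : Finset G) : ℝ :=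
  limsup (fun n : ℕ => (Nat.card (wordBall S n) : ℝ) ^ (1 / (n : ℝ))) atTop

/-- A group has exponential growth if `ω_S > 1` for some (equivalently, any) finite
generating set `S`. -/
def HasExponentialGrowth (G : Type*) [Group G] : Prop :=
  ∃ S : Finset G, Generates S ∧ 1 < growthRate S

/-- A group has uniform exponential growth if `inf_S ω_S > 1`, the infimum being taken over
all finite generating sets `S`. -/
def HasUniformExponentialGrowth (G : Type*) [Group G] : Prop :=
  1 < ⨅ S : {S : Finset G // Generates S}, growthRate S.1

/-! ### Word balls, growth rates and free pairs -/

namespace EMO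

section WordBall
variable {G : Type*} [Group G]

theorem one_mem_wordBall (S : Finset G) (n : ℕ) : (1 : G) ∈ wordBall S n :=
  ⟨[], by simp, by simp, by simp⟩

theorem wordBall_mono (S : Finset G) {m n : ℕ} (h : m ≤ n) : wordBall S m ⊆ wordBall S n := by
  rintro x ⟨l, hl, h1, h2⟩
  exact ⟨l, hl.trans h, h1, h2⟩

theorem mul_mem_wordBall {S : Finset G} {m n : ℕ} {x y : G} (hx : x ∈ wordBall S m)
    (hy : y ∈ wordBall S n) : x * y ∈ wordBall S (m + n) := by
  obtain ⟨l, hl, h1, rfl⟩ := hx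
  obtain ⟨l', hl', h1', rfl⟩ := hy
  refine ⟨l ++ l', by simp; omega, ?_, by simp⟩
  intro z hz
  rcases List.mem_append.1 hz with h | h
  exacts [h1 z h, h1' z h]

theorem inv_mem_wordBall {S : Finset G} {m : ℕ} {x : G} (hx : x ∈ wordBall S m) :
    x⁻¹ ∈ wordBall S m := by
  obtain ⟨l, hl, h1, rfl⟩ := hx
  refine ⟨(l.map (·⁻¹)).reverse, by simpa, ?_, by rw [List.prod_inv_reverse]⟩
  intro z hz
  simp only [List.mem_reverse, List.mem_map] at hz
  obtain ⟨w, hw, rfl⟩ := hz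
  simpa using (h1 w hw).symm

theorem pow_mem_wordBall {S : Finset G} {m : ℕ} {x : G} (hx : x ∈ wordBall S m) (k : ℕ) :
    x ^ k ∈ wordBall S (k * m) := by
  induction k with
  | zero => simpa using one_mem_wordBall S _
  | succ k ih => rw [pow_succ, add_mul, one_mul]; exact mul_mem_wordBall ih hx

theorem mem_wordBall_one {S : Finset G} {x : G} (hx : x ∈ S ∨ x⁻¹ ∈ S) : x ∈ wordBall S 1 :=
  ⟨[x], by simp, by simpa using hx, by simp⟩

/-- Induction on word length. -/
theorem wordBall_induction {S : Finset G} {p : ℕ → G → Prop} (h1 : ∀ n, p n 1)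
    (hs : ∀ n s x, (s ∈ S ∨ s⁻¹ ∈ S) → x ∈ wordBall S n → p n x → p (n + 1) (s * x)) :
    ∀ n, ∀ x ∈ wordBall S n, p n x := by
  rintro n x ⟨l, hl, hm, rfl⟩
  induction l generalizing n with
  | nil => simpa using h1 n
  | cons a l ih =>
    obtain _ | n := n
    · simp at hl
    · rw [List.prod_cons]
      have hl' : l.length ≤ n := by simpa using hl
      have hm' : ∀ y ∈ l, y ∈ S ∨ y⁻¹ ∈ S := fun y hy => hm y (List.mem_cons_of_mem _ hy)
      exact hs n a _ (hm a (by simp)) ⟨l, hl', hm', rfl⟩ (ih n hl' hm')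

/-- Induction over a group along left multiplication by generators and their inverses. -/
theorem generates_induction {S : Finset G} (hS : Generates S) {p : G → Prop} (h1 : p 1)
    (hs : ∀ s x, (s ∈ S ∨ s⁻¹ ∈ S) → p x → p (s * x)) (g : G) : p g := by
  have hg : g ∈ Subgroup.closure (S : Set G) := by rw [hS]; trivial
  induction hg using Subgroup.closure_induction_left with
  | one => exact h1
  | mul_left x hx y _ ih => exact hs x y (Or.inl hx) ih
  | inv_mul_cancel x hx y _ ih => exact hs x⁻¹ y (Or.inr (by simpa using hx)) ih

theorem exists_mem_wordBall {S : Finset G} (hS : Generates S) (g : G) :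
    ∃ n, g ∈ wordBall S n := by
  refine generates_induction hS (p := fun g => ∃ n, g ∈ wordBall S n)
    ⟨0, one_mem_wordBall S 0⟩ ?_ g
  rintro s x hs ⟨n, hn⟩
  exact ⟨1 + n, mul_mem_wordBall (mem_wordBall_one hs) hn⟩

theorem wordBall_subset_wordBall {S T : Finset G} {k : ℕ} (h : ∀ s ∈ S, s ∈ wordBall T k) (n : ℕ) :
    wordBall S n ⊆ wordBall T (k * n) := by
  refine wordBall_induction (p := fun n x => x ∈ wordBall T (k * n))
    (fun n => one_mem_wordBall T _) ?_ n
  intro n s x hs _ ih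
  rw [mul_add, mul_one, add_comm]
  refine mul_mem_wordBall ?_ ih
  rcases hs with hs | hs
  · exact h s hs
  · simpa using inv_mem_wordBall (h _ hs)

open scoped Pointwise in
theorem wordBall_bound (S : Finset G) : ∃ c : ℕ, ∀ n, (wordBall S n).Finite ∧
    Nat.card (wordBall S n) ≤ c ^ n := by
  classical
  let T : Finset G := insert 1 (S ∪ S⁻¹)
  have key : ∀ n, wordBall S n ⊆ ((T ^ n : Finset G) : Set G) := by
    refine wordBall_induction (fun n => ?_) ?_
    · exact_mod_cast Finset.one_mem_pow (Finset.mem_insert_self _ _)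
    · intro n s x hs _ ih
      rw [pow_succ', Finset.mem_coe]
      refine Finset.mul_mem_mul ?_ ih
      simpa [T] using Or.inr hs
  refine ⟨T.card, fun n => ⟨(Finset.finite_toSet _).subset (key n), ?_⟩⟩
  calc Nat.card (wordBall S n) ≤ Nat.card ((T ^ n : Finset G) : Set G) :=
        Nat.card_mono (Finset.finite_toSet _) (key n)
    _ = (T ^ n).card := by rw [Nat.card_coe_set_eq, Set.ncard_coe_finset]
    _ ≤ T.card ^ n := Finset.card_pow_le

theorem wordBall_finite (S : Finset G) (n : ℕ) : (wordBall S n).Finite :=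
  ((wordBall_bound S).choose_spec n).1

theorem card_wordBall_pos (S : Finset G) (n : ℕ) : 0 < Nat.card (wordBall S n) := by
  have := (wordBall_finite S n).to_subtype
  have : Nonempty (wordBall S n) := ⟨⟨1, one_mem_wordBall S n⟩⟩
  exact Nat.card_pos

theorem isBoundedUnder_growth (S : Finset G) : IsBoundedUnder (· ≤ ·) atTop
    (fun n : ℕ => (Nat.card (wordBall S n) : ℝ) ^ (1 / (n : ℝ))) := by
  obtain ⟨c, hc⟩ := wordBall_bound S
  refine ⟨c, eventually_map.2 ((eventually_gt_atTop 0).mono fun n hn => ?_)⟩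
  have h0 : (0 : ℝ) ≤ c := by positivity
  calc (Nat.card (wordBall S n) : ℝ) ^ (1 / (n : ℝ)) ≤ ((c : ℝ) ^ n) ^ (1 / (n : ℝ)) := by
        gcongr
        exact_mod_cast (hc n).2
    _ = c := by
        rw [one_div]; exact Real.pow_rpow_inv_natCast h0 hn.ne'

theorem isCoboundedUnder_growth (S : Finset G) : IsCoboundedUnder (· ≤ ·) atTop
    (fun n : ℕ => (Nat.card (wordBall S n) : ℝ) ^ (1 / (n : ℝ))) :=
  isCoboundedUnder_le_of_le atTop (x := 0) (fun n => by positivity)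

theorem growthRate_nonneg (S : Finset G) : 0 ≤ growthRate S :=
  le_limsup_of_frequently_le (Frequently.of_forall fun n => by positivity)
    (isBoundedUnder_growth S)

/-- `a` and `b` freely generate a free semigroup, in the strong form that no element of `aM`
equals one of `bM`, where `M` is the submonoid they generate. -/
def FreePair (a b : G) : Prop :=
  ∀ u ∈ Submonoid.closure {a, b}, ∀ u' ∈ Submonoid.closure {a, b}, a * u ≠ b * u'

/-- Distinct words of the same length in a free pair have distinct products. -/
theorem FreePair.prod_injective {a b : G} (h : FreePair a b) :
    ∀ l l' : List Bool, l.length = l'.length →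
      (l.map fun t => cond t a b).prod = (l'.map fun t => cond t a b).prod → l = l' := by
  have hm : ∀ l : List Bool, (l.map fun t => cond t a b).prod ∈ Submonoid.closure {a, b} := by
    intro l
    refine Submonoid.list_prod_mem _ fun x hx => ?_
    obtain ⟨t, _, rfl⟩ := List.mem_map.1 hx
    cases t <;> exact Submonoid.subset_closure (by simp)
  intro l
  induction l with
  | nil => intro l' hl _; exact (List.length_eq_zero_iff.1 hl.symm).symm
  | cons t l ih =>
    rintro (_ | ⟨t', l'⟩) hl he
    · simp at hl
    · have hl' : l.length = l'.length := by simpa using hl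
      simp only [List.map_cons, List.prod_cons] at he
      cases t <;> cases t' <;> simp only [cond_true, cond_false] at he
      · rw [ih l' hl' (mul_left_cancel he)]
      · exact absurd he.symm (h _ (hm _) _ (hm _))
      · exact absurd he (h _ (hm _) _ (hm _))
      · rw [ih l' hl' (mul_left_cancel he)]

theorem FreePair.two_pow_le_card {a b : G} (h : FreePair a b) {S : Finset G} {M : ℕ}
    (ha : a ∈ wordBall S M) (hb : b ∈ wordBall S M) (k : ℕ) :
    2 ^ k ≤ Nat.card (wordBall S (M * k)) := by
  have hmem : ∀ l : List Bool, (l.map fun t => cond t a b).prod ∈ wordBall S (M * l.length) := by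
    intro l
    induction l with
    | nil => simpa using one_mem_wordBall S _
    | cons t l ih =>
      rw [List.map_cons, List.prod_cons, List.length_cons, mul_add, mul_one, add_comm]
      refine mul_mem_wordBall ?_ ih
      cases t <;> assumption
  have := (wordBall_finite S (M * k)).to_subtype
  let f : List.Vector Bool k → wordBall S (M * k) := fun v =>
    ⟨(v.1.map fun t => cond t a b).prod, by simpa [v.2] using hmem v.1⟩
  have hf : Function.Injective f := by
    intro v w hvw
    exact Subtype.ext (h.prod_injective _ _ (v.2.trans w.2.symm) (congrArg Subtype.val hvw))
  have := Nat.card_le_card_of_injective f hf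
  simpa [Nat.card_eq_fintype_card] using this

theorem FreePair.le_growthRate {a b : G} (h : FreePair a b) {S : Finset G} {M : ℕ} (hM : 1 ≤ M)
    (ha : a ∈ wordBall S M) (hb : b ∈ wordBall S M) :
    (2 : ℝ) ^ (1 / (M : ℝ)) ≤ growthRate S := by
  refine le_limsup_of_frequently_le (frequently_atTop.2 fun k => ?_) (isBoundedUnder_growth S)
  refine ⟨M * (k + 1), by nlinarith, ?_⟩
  have h1 : ((2 : ℝ) ^ (k + 1)) ≤ Nat.card (wordBall S (M * (k + 1))) := by
    exact_mod_cast h.two_pow_le_card ha hb (k + 1)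
  calc (2 : ℝ) ^ (1 / (M : ℝ)) = ((2 : ℝ) ^ (k + 1)) ^ (1 / ((M * (k + 1) : ℕ) : ℝ)) := by
        rw [← Real.rpow_natCast, ← Real.rpow_mul (by norm_num)]
        congr 1
        have : (M : ℝ) ≠ 0 := by positivity
        push_cast
        field_simp
    _ ≤ _ := by gcongr

/-- Balls with respect to every finite set grow at most polynomially. -/
def PolyGrowth (G : Type*) [Group G] : Prop :=
  ∀ S : Finset G, ∃ C : ℕ, ∀ n, Nat.card (wordBall S n) ≤ C * (n + 1) ^ C

/-- Polynomially bounded balls force `ω_S ≤ 1`, as `(C * (n + 1) ^ C) ^ (1 / n)` tends to `1`. -/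
theorem growthRate_le_one_of_poly {S : Finset G} {C : ℕ}
    (h : ∀ n, Nat.card (wordBall S n) ≤ C * (n + 1) ^ C) : growthRate S ≤ 1 := by
  refine le_of_forall_pos_le_add fun ε hε => ?_
  refine limsup_le_of_le (isCoboundedUnder_growth S) ?_
  have h1 : (1 : ℝ) < 1 + ε := by linarith
  have h2 := (isLittleO_pow_const_const_pow_of_one_lt (R := ℝ) C h1).bound
    (show (0 : ℝ) < 1 / (C * 2 ^ C + 1) by positivity)
  filter_upwards [h2, eventually_gt_atTop 0] with n hn hn0
  have hn1 : (1 : ℝ) ≤ n := by exact_mod_cast hn0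
  simp only [norm_pow, Real.norm_eq_abs, Nat.abs_cast, abs_of_pos (zero_lt_one.trans h1)] at hn
  have h3 : (Nat.card (wordBall S n) : ℝ) ≤ (1 + ε) ^ n := by
    have h4 : (Nat.card (wordBall S n) : ℝ) ≤ C * ((n : ℝ) + 1) ^ C := by exact_mod_cast h n
    have h5 : ((n : ℝ) + 1) ^ C ≤ 2 ^ C * (n : ℝ) ^ C := by
      rw [← mul_pow]; gcongr; linarith
    have hp : (0 : ℝ) < C * 2 ^ C + 1 := by positivity
    rw [one_div, inv_mul_eq_div, le_div_iff₀ hp] at hn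
    have : (0 : ℝ) ≤ (n : ℝ) ^ C := by positivity
    calc (Nat.card (wordBall S n) : ℝ) ≤ C * (2 ^ C * (n : ℝ) ^ C) := h4.trans (by gcongr)
      _ ≤ (n : ℝ) ^ C * (C * 2 ^ C + 1) := by nlinarith
      _ ≤ _ := hn
  calc (Nat.card (wordBall S n) : ℝ) ^ (1 / (n : ℝ)) ≤ ((1 + ε) ^ n) ^ (1 / (n : ℝ)) := by gcongr
    _ = 1 + ε := by
      rw [one_div]; exact Real.pow_rpow_inv_natCast (by linarith) hn0.ne'

/-- In an action of a group generated by `S`, the image of a point under the ball of radius `k`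
is either the whole orbit or has at least `k + 1` points. -/
theorem orbit_chain {X : Type*} [MulAction G X] {S : Finset G} (hS : Generates S) (x : X) (k : ℕ) :
    (∀ g : G, ∃ w ∈ wordBall S k, w • x = g • x) ∨
      k + 1 ≤ ((fun g : G => g • x) '' wordBall S k).ncard := by
  have hfin : ∀ k, ((fun g : G => g • x) '' wordBall S k).Finite :=
    fun k => (wordBall_finite S k).image _
  induction k with
  | zero =>
    right
    rw [Nat.succ_le_iff, Set.ncard_pos (hfin 0)]
    exact ⟨_, 1, one_mem_wordBall S 0, rfl⟩
  | succ k ih =>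
    rcases ih with ih | ih
    · left
      intro g
      obtain ⟨w, hw, h⟩ := ih g
      exact ⟨w, wordBall_mono S (Nat.le_succ k) hw, h⟩
    · have hsub : (fun g : G => g • x) '' wordBall S k ⊆ (fun g : G => g • x) '' wordBall S (k + 1) :=
        Set.image_mono (wordBall_mono S (Nat.le_succ k))
      by_cases heq : (fun g : G => g • x) '' wordBall S k = (fun g : G => g • x) '' wordBall S (k + 1)
      · left
        intro g
        suffices ∃ w ∈ wordBall S k, w • x = g • x by
          obtain ⟨w, hw, h⟩ := this
          exact ⟨w, wordBall_mono S (Nat.le_succ k) hw, h⟩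
        refine generates_induction hS (p := fun g => ∃ w ∈ wordBall S k, w • x = g • x)
          ⟨1, one_mem_wordBall S k, rfl⟩ ?_ g
        rintro s y hs ⟨w, hw, h⟩
        have : (s * w) • x ∈ (fun g : G => g • x) '' wordBall S k := by
          rw [heq]
          exact ⟨s * w, by rw [add_comm]; exact mul_mem_wordBall (mem_wordBall_one hs) hw, rfl⟩
        obtain ⟨w', hw', h'⟩ := this
        exact ⟨w', hw', by rw [show w' • x = (s * w) • x from h', mul_smul, mul_smul, h]⟩
      · right
        have := Set.ncard_lt_ncard (hsub.ssubset_of_ne heq) (hfin (k + 1))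
        omega

/-- The span of the image of the ball of radius `k` under a multiplicative map to an algebra is
either the span of the whole image or has dimension at least `k + 1`. -/
theorem span_chain {K A : Type*} [Field K] [Ring A] [Algebra K A] [FiniteDimensional K A]
    [Nontrivial A] (ρ : G →* A) {S : Finset G} (hS : Generates S) (k : ℕ) :
    (∀ g : G, ρ g ∈ Submodule.span K (ρ '' wordBall S k)) ∨
      k + 1 ≤ Module.finrank K (Submodule.span K (ρ '' wordBall S k)) := by
  induction k with
  | zero =>
    right
    have : (1 : A) ∈ Submodule.span K (ρ '' wordBall S 0) :=
      Submodule.subset_span ⟨1, one_mem_wordBall S 0, map_one ρ⟩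
    rw [zero_add, Submodule.one_le_finrank_iff]
    rintro h
    rw [h] at this
    exact one_ne_zero ((Submodule.mem_bot K).1 this)
  | succ k ih =>
    have hsub : Submodule.span K (ρ '' wordBall S k) ≤ Submodule.span K (ρ '' wordBall S (k + 1)) :=
      Submodule.span_mono (Set.image_mono (wordBall_mono S (Nat.le_succ k)))
    rcases ih with ih | ih
    · exact Or.inl fun g => hsub (ih g)
    · by_cases heq : Submodule.span K (ρ '' wordBall S k) = Submodule.span K (ρ '' wordBall S (k + 1))
      · left
        intro g
        refine hsub ?_
        refine generates_induction hS (p := fun g => ρ g ∈ Submodule.span K (ρ '' wordBall S k))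
          (Submodule.subset_span ⟨1, one_mem_wordBall S k, rfl⟩) ?_ g
        intro s y hs hy
        rw [map_mul, heq]
        have : Submodule.span K (ρ '' wordBall S k) ≤
            (Submodule.span K (ρ '' wordBall S (k + 1))).comap (LinearMap.mulLeft K (ρ s)) := by
          rw [Submodule.span_le]
          rintro _ ⟨w, hw, rfl⟩
          refine Submodule.subset_span ⟨s * w, ?_, by simp⟩
          rw [add_comm]; exact mul_mem_wordBall (mem_wordBall_one hs) hw
        exact this hy
      · right
        have := Submodule.finrank_lt_finrank_of_lt (lt_of_le_of_ne hsub heq)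
        omega

end WordBall

section FiniteIndex
variable {G : Type*} [Group G]

/-- The finite set of elements of a subgroup `H` in the ball of radius `r` of the ambient group. -/
noncomputable def schreierSet (S : Finset G) (H : Subgroup G) (r : ℕ) : Finset H :=
  ((wordBall_finite S r).preimage (Subtype.val_injective.injOn (s := Subtype.val ⁻¹' wordBall S r)) :
    (Subtype.val ⁻¹' wordBall S r : Set H).Finite).toFinset

theorem mem_schreierSet {S : Finset G} {H : Subgroup G} {r : ℕ} {h : H} :
    h ∈ schreierSet S H r ↔ (h : G) ∈ wordBall S r := by
  simp [schreierSet]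

/-- Every coset of `H` has a representative of length at most the index, because the orbit of the
trivial coset under balls grows strictly until it is everything. -/
theorem exists_coset_rep {S : Finset G} (hS : Generates S) (H : Subgroup G) [H.FiniteIndex] (g : G) :
    ∃ t ∈ wordBall S H.index, t⁻¹ * g ∈ H := by
  have h : ∀ g : G, ∃ w ∈ wordBall S H.index, w • (QuotientGroup.mk 1 : G ⧸ H) =
      g • (QuotientGroup.mk 1 : G ⧸ H) := by
    refine (orbit_chain hS (QuotientGroup.mk 1 : G ⧸ H) H.index).resolve_right fun h => ?_
    have h1 := Set.ncard_le_card ((fun g : G => g • (QuotientGroup.mk 1 : G ⧸ H)) '' wordBall S H.index)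
    have : Nat.card (G ⧸ H) = H.index := rfl
    omega
  obtain ⟨w, hw, h⟩ := h g
  refine ⟨w, hw, ?_⟩
  rw [MulAction.Quotient.smul_mk, MulAction.Quotient.smul_mk, QuotientGroup.eq] at h
  simpa using h

/-- Schreier rewriting: a word of length `n` is a short coset representative times a product of at
most `n` elements of `H` of length at most `2 * H.index + 1`. -/
theorem schreier_decomp {S : Finset G} (hS : Generates S) (H : Subgroup G) [H.FiniteIndex] (n : ℕ) :
    ∀ g ∈ wordBall S n, ∃ t ∈ wordBall S H.index, ∃ h ∈ wordBall (schreierSet S H (2 * H.index + 1)) n,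
      g = t * (h : G) := by
  refine wordBall_induction (p := fun n g => ∃ t ∈ wordBall S H.index,
    ∃ h ∈ wordBall (schreierSet S H (2 * H.index + 1)) n, g = t * (h : G))
    (fun n => ⟨1, one_mem_wordBall _ _, 1, one_mem_wordBall _ _, by simp⟩) ?_ n
  rintro n s x hs - ⟨t, ht, h, hh, rfl⟩
  obtain ⟨t', ht', hm⟩ := exists_coset_rep hS H (s * t)
  refine ⟨t', ht', ⟨_, hm⟩ * h, ?_, by simp [mul_assoc]⟩
  rw [add_comm n 1]
  refine mul_mem_wordBall (mem_wordBall_one (Or.inl ?_)) hh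
  rw [mem_schreierSet]
  have := mul_mem_wordBall (inv_mem_wordBall ht') (mul_mem_wordBall (mem_wordBall_one hs) ht)
  exact wordBall_mono S (by omega) this

theorem schreier_generates {S : Finset G} (hS : Generates S) (H : Subgroup G) [H.FiniteIndex] :
    Generates (schreierSet S H (2 * H.index + 1)) := by
  unfold Generates
  rw [eq_top_iff]
  rintro g -
  obtain ⟨n, hn⟩ := exists_mem_wordBall hS (g : G)
  obtain ⟨t, ht, h, hh, he⟩ := schreier_decomp hS H n _ hn
  have hball : ∀ x ∈ wordBall (schreierSet S H (2 * H.index + 1)) n,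
      x ∈ Subgroup.closure (schreierSet S H (2 * H.index + 1) : Set H) := by
    refine wordBall_induction (p := fun _ x =>
      x ∈ Subgroup.closure (schreierSet S H (2 * H.index + 1) : Set H)) (fun n => one_mem _) ?_ n
    intro n s x hs _ hx
    refine mul_mem ?_ hx
    rcases hs with hs | hs
    · exact Subgroup.subset_closure hs
    · simpa using inv_mem (Subgroup.subset_closure hs :
        s⁻¹ ∈ Subgroup.closure (schreierSet S H (2 * H.index + 1) : Set H))
  have : g = (g * h⁻¹) * h := by group
  rw [this]
  refine mul_mem (Subgroup.subset_closure ?_) (hball h hh)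
  rw [Finset.mem_coe, mem_schreierSet]
  have : ((g * h⁻¹ : H) : G) = t := by simp [he]
  rw [this]
  exact wordBall_mono S (by omega) ht

/-- Polynomial growth of a finite-index subgroup bounds the growth rate of the whole group. -/
theorem PolyGrowth.growthRate_le {H : Subgroup G} [H.FiniteIndex] (hH : PolyGrowth H)
    {S : Finset G} (hS : Generates S) : growthRate S ≤ 1 := by
  obtain ⟨C, hC⟩ := hH (schreierSet S H (2 * H.index + 1))
  let B := Nat.card (wordBall S H.index)
  have hB : 0 < B := card_wordBall_pos S _
  refine growthRate_le_one_of_poly (C := B * C) fun n => ?_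
  have f1 := (wordBall_finite S H.index).to_subtype
  have f2 := (wordBall_finite (schreierSet S H (2 * H.index + 1)) n).to_subtype
  have : Nat.card (wordBall S n) ≤
      Nat.card (wordBall S H.index × wordBall (schreierSet S H (2 * H.index + 1)) n) := by
    choose t ht h hh he using fun g : wordBall S n => schreier_decomp hS H n g.1 g.2
    refine Nat.card_le_card_of_injective (fun g => (⟨t g, ht g⟩, ⟨h g, hh g⟩)) ?_
    intro g g' hg
    simp only [Prod.mk.injEq, Subtype.mk.injEq] at hg
    apply Subtype.ext
    rw [he g, he g', hg.1, hg.2]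
  rw [Nat.card_prod] at this
  calc _ ≤ B * Nat.card (wordBall (schreierSet S H (2 * H.index + 1)) n) := this
    _ ≤ B * (C * (n + 1) ^ C) := by gcongr; exact hC n
    _ ≤ B * C * (n + 1) ^ (B * C) := by
      rw [mul_assoc]
      gcongr
      · omega
      · exact Nat.le_mul_of_pos_left C hB

/-- Every finite generating set has a free pair of words of uniformly bounded length. -/
def UniformFree (G : Type*) [Group G] : Prop :=
  ∃ M : ℕ, ∀ S : Finset G, Generates S → ∃ a ∈ wordBall S M, ∃ b ∈ wordBall S M, FreePair a b

theorem FreePair.map {G' : Type*} [Group G'] (f : G →* G') (hf : Function.Injective f) {a b : G}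
    (h : FreePair a b) : FreePair (f a) (f b) := by
  intro u hu u' hu'
  have : ({f a, f b} : Set G') = f '' {a, b} := by simp [Set.image_pair]
  rw [this, ← MonoidHom.map_mclosure] at hu hu'
  obtain ⟨v, hv, rfl⟩ := hu
  obtain ⟨v', hv', rfl⟩ := hu'
  rw [← map_mul, ← map_mul]
  exact fun he => h v hv v' hv' (hf he)

/-- The subgroup `H` is generated by its elements of length at most `2 * H.index + 1`, and a word of
length `M` in these has length at most `(2 * H.index + 1) * M` in `S`. -/
theorem UniformFree.of_finiteIndex {H : Subgroup G} [H.FiniteIndex] (hH : UniformFree H) :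
    UniformFree G := by
  obtain ⟨M, hM⟩ := hH
  refine ⟨(2 * H.index + 1) * M, fun S hS => ?_⟩
  obtain ⟨a, ha, b, hb, hab⟩ := hM _ (schreier_generates hS H)
  have key : ∀ x ∈ wordBall (schreierSet S H (2 * H.index + 1)) M,
      (x : G) ∈ wordBall S ((2 * H.index + 1) * M) := by
    refine wordBall_induction (p := fun n (x : H) =>
      (x : G) ∈ wordBall S ((2 * H.index + 1) * n)) (fun n => one_mem_wordBall _ _) ?_ M
    intro n s x hs _ hx
    rw [mul_add, mul_one, add_comm, Subgroup.coe_mul]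
    refine mul_mem_wordBall ?_ hx
    rcases hs with hs | hs
    · exact mem_schreierSet.1 hs
    · simpa using inv_mem_wordBall (mem_schreierSet.1 hs)
  exact ⟨a, key a ha, b, key b hb, hab.map H.subtype H.subtype_injective⟩

theorem UniformFree.uniformGrowth (hfg : Group.FG G) (h : UniformFree G) :
    HasUniformExponentialGrowth G := by
  obtain ⟨M, hM⟩ := h
  obtain ⟨S0, hS0⟩ := hfg.out
  have : Nonempty {S : Finset G // Generates S} := ⟨⟨S0, hS0⟩⟩
  have h1 : (1 : ℝ) < (2 : ℝ) ^ (1 / ((M + 1 : ℕ) : ℝ)) :=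
    Real.one_lt_rpow (by norm_num) (by positivity)
  refine h1.trans_le (le_ciInf fun S => ?_)
  obtain ⟨a, ha, b, hb, hab⟩ := hM S.1 S.2
  exact hab.le_growthRate (by omega) (wordBall_mono _ (by omega) ha) (wordBall_mono _ (by omega) hb)

theorem exponential_of_uniform (h : HasUniformExponentialGrowth G) : HasExponentialGrowth G := by
  unfold HasUniformExponentialGrowth at h
  rcases isEmpty_or_nonempty {S : Finset G // Generates S} with he | ⟨⟨S⟩⟩
  · rw [Real.iInf_of_isEmpty] at h; linarith
  · exact ⟨S.1, S.2, h.trans_le (ciInf_le ⟨0, by rintro _ ⟨T, rfl⟩; exact growthRate_nonneg _⟩ S)⟩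

/-- A finitely generated group has a finite-index subgroup contained in all subgroups of index
at most `D`. -/
theorem exists_core (hfg : Group.FG G) (D : ℕ) :
    ∃ G₁ : Subgroup G, G₁.FiniteIndex ∧ ∀ H : Subgroup G, H.index ≠ 0 → H.index ≤ D → G₁ ≤ H := by
  classical
  have hfin : ∀ k : ℕ, Finite (G →* Equiv.Perm (Fin k)) := by
    intro k
    obtain ⟨S0, hS0⟩ := hfg.out
    refine Finite.of_injective (fun f : G →* Equiv.Perm (Fin k) => fun s : S0 => f s) ?_
    intro f g h
    exact MonoidHom.eq_of_eqOn_dense hS0 fun s hs => congrFun h ⟨s, hs⟩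
  refine ⟨⨅ p : Σ k : Fin (D + 1), G →* Equiv.Perm (Fin k), p.2.ker, ?_, ?_⟩
  · exact Subgroup.finiteIndex_iInf fun p => Subgroup.finiteIndex_ker _
  · intro H h0 hD
    have : H.FiniteIndex := ⟨h0⟩
    have hc : Nat.card (G ⧸ H) = H.index := rfl
    let e : G ⧸ H ≃ Fin H.index := Finite.equivFinOfCardEq hc
    let f : G →* Equiv.Perm (Fin H.index) :=
      (e.permCongrHom : _ →* _).comp (MulAction.toPermHom G (G ⧸ H))
    refine (iInf_le _ ⟨⟨H.index, by omega⟩, f⟩).trans ?_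
    intro g hg
    have hg' : f g = 1 := hg
    have h2 : MulAction.toPermHom G (G ⧸ H) g = 1 := by
      apply e.permCongrHom.injective
      rw [map_one]; exact hg'
    have h3 : g • (QuotientGroup.mk 1 : G ⧸ H) = QuotientGroup.mk 1 := by
      have := congrArg (fun p => p (QuotientGroup.mk 1 : G ⧸ H)) h2
      simpa using this
    rw [MulAction.Quotient.smul_mk, QuotientGroup.eq] at h3
    simpa using h3

end FiniteIndex
end EMO

/-! ### Polynomial growth of block-triangular groups -/

namespace EMO
section Nil
open Matrix

variable {K : Type*} [Field K] {m : ℕ}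

/-- A product of `r` strictly lower triangular matrices is supported at distance at least `r` below
the diagonal. -/
theorem list_prod_strictLower (l : List (Matrix (Fin m) (Fin m) K))
    (h : ∀ N ∈ l, ∀ i j, i ≤ j → N i j = 0) :
    ∀ i j : Fin m, (i : ℕ) < j + l.length → l.prod i j = 0 := by
  induction l with
  | nil => 
    intro i j hij
    rw [List.prod_nil, Matrix.one_apply_ne]
    rintro rfl
    simp at hij
  | cons N l ih =>
    intro i j hij
    rw [List.prod_cons, Matrix.mul_apply]
    refine Finset.sum_eq_zero fun k _ => ?_
    by_cases hik : i ≤ k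
    · rw [h N (by simp) i k hik, zero_mul]
    · rw [ih (fun N' hN' => h N' (List.mem_cons_of_mem _ hN')) k j, mul_zero]
      have : (k : ℕ) < i := not_le.1 hik
      simp at hij
      omega

theorem list_prod_strictLower_eq_zero (l : List (Matrix (Fin m) (Fin m) K))
    (h : ∀ N ∈ l, ∀ i j, i ≤ j → N i j = 0) (hl : m ≤ l.length) : l.prod = 0 := by
  ext i j
  exact list_prod_strictLower l h i j (by have := i.2; omega)

/-- Expansion of a product of factors `1 + N y` into monomials, with the multiplicity of a
monomial of degree `k` bounded by the `k`-th power of the number of factors. -/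
theorem exists_expansion {T A : Type*} [Ring A] (N : T → A) (w : List T) :
    ∃ c : List T →₀ ℕ, (∀ τ, c τ ≤ w.length ^ τ.length) ∧
      (w.map fun y => 1 + N y).prod = c.sum fun τ k => k • (τ.map N).prod := by
  classical
  induction w with
  | nil =>
    refine ⟨Finsupp.single [] 1, fun τ => ?_, by simp⟩
    by_cases h : τ = []
    · simp [h]
    · rw [Finsupp.single_eq_of_ne h]; exact Nat.zero_le _
  | cons y w ih =>
    obtain ⟨c, hc, he⟩ := ih
    have hinj : Function.Injective (List.cons y) := List.cons_injective
    refine ⟨c + c.mapDomain (List.cons y), fun τ => ?_, ?_⟩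
    · rw [Finsupp.add_apply, List.length_cons]
      have hmono : w.length ^ τ.length ≤ (w.length + 1) ^ τ.length :=
        Nat.pow_le_pow_left (Nat.le_succ _) _
      by_cases hτ : τ ∈ Set.range (List.cons y)
      · obtain ⟨σ, rfl⟩ := hτ
        rw [Finsupp.mapDomain_apply hinj, List.length_cons]
        have h1 := hc (y :: σ)
        have h2 := hc σ
        rw [List.length_cons] at h1
        calc _ ≤ w.length ^ (σ.length + 1) + w.length ^ σ.length := add_le_add h1 h2
          _ = w.length ^ σ.length * (w.length + 1) := by ring
          _ ≤ (w.length + 1) ^ σ.length * (w.length + 1) := by gcongr; omega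
          _ = _ := by ring
      · rw [Finsupp.mapDomain_of_notMem_range _ _ hτ, add_zero]
        exact (hc τ).trans hmono
    · rw [Finsupp.sum_add_index' (by simp) (by intros; rw [add_smul]),
        Finsupp.sum_mapDomain_index (by simp) (by intros; rw [add_smul])]
      rw [List.map_cons, List.prod_cons, he, add_mul, one_mul, Finsupp.mul_sum]
      congr 1
      refine Finsupp.sum_congr fun τ _ => ?_
      rw [mul_smul_comm, List.map_cons, List.prod_cons]

/-- A group of lower triangular matrices whose entry in position `(j, l)` vanishes identically
whenever the diagonal characters `χ j` and `χ l` differ has polynomial growth. -/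
theorem polyGrowth_of_block {H : Type*} [Group H] (ρ : H →* Matrix (Fin m) (Fin m) K)
    (hρ : Function.Injective ρ) (χ : Fin m → H →* Kˣ)
    (hdiag : ∀ g j, ρ g j j = χ j g) (htri : ∀ g i j, i < j → ρ g i j = 0)
    (hblock : ∀ i j, χ i ≠ χ j → ∀ g, ρ g i j = 0) : PolyGrowth H := by
  classical
  intro S
  let T := {y : H // y ∈ S ∨ y⁻¹ ∈ S}
  have hT : Finite T := by
    refine Set.Finite.to_subtype ((S.finite_toSet.union (S.finite_toSet.preimage
      (inv_injective.injOn (s := (Inv.inv : H → H) ⁻¹' S)))).subset ?_)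
    rintro y (h | h)
    · exact Or.inl h
    · exact Or.inr h
  have := Fintype.ofFinite T
  let D : H → Matrix (Fin m) (Fin m) K := fun g => diagonal fun j => (χ j g : K)
  let D' : H → Matrix (Fin m) (Fin m) K := fun g => diagonal fun j => ((χ j g)⁻¹ : K)
  have hDD' : ∀ g, D g * D' g = 1 := by
    intro g
    simp [D, D', diagonal_mul_diagonal]
  have hcomm : ∀ g h, D g * ρ h = ρ h * D g := by
    intro g h
    ext i j
    simp only [D, diagonal_mul, mul_diagonal]
    by_cases hij : χ i = χ j
    · rw [hij, mul_comm]
    · rw [hblock i j hij, zero_mul, mul_zero]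
  have hDmul : ∀ g h, D (g * h) = D g * D h := by
    intro g h
    simp [D, diagonal_mul_diagonal]
  let N : T → Matrix (Fin m) (Fin m) K := fun y => D' y.1 * ρ y.1 - 1
  have hN : ∀ y : T, D y.1 * (1 + N y) = ρ y.1 := by
    intro y
    simp only [N, add_sub_cancel]
    rw [← mul_assoc, hDD', one_mul]
  have hNlow : ∀ (y : T) i j, i ≤ j → N y i j = 0 := by
    intro y i j hij
    simp only [N, D', Matrix.sub_apply, diagonal_mul]
    rcases hij.eq_or_lt with rfl | h
    · rw [hdiag]; simp
    · rw [htri _ _ _ h, Matrix.one_apply_ne h.ne]; simp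
  -- separate the diagonal part of a word from its unipotent part
  have hprod : ∀ w : List T, ρ (w.map Subtype.val).prod =
      D (w.map Subtype.val).prod * (w.map fun y => 1 + N y).prod := by
    intro w
    induction w with
    | nil => simp [D]
    | cons y w ih =>
      rw [List.map_cons, List.prod_cons, map_mul, ih, hDmul, List.map_cons, List.prod_cons, ← hN y]
      have : D (w.map Subtype.val).prod * (1 + N y) = (1 + N y) * D (w.map Subtype.val).prod := by
        have h1 : (1 + N y) = D' y.1 * ρ y.1 := by simp [N]
        have h2 : ∀ g, D g * D' y.1 = D' y.1 * D g := by
          intro g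
          simp only [D, D', diagonal_mul_diagonal]
          congr 1; ext j; ring
        rw [h1, ← mul_assoc, h2, mul_assoc, hcomm, mul_assoc]
      calc _ = D y.1 * ((1 + N y) * D (w.map Subtype.val).prod) * (w.map fun y => 1 + N y).prod := by
            simp only [mul_assoc]
        _ = _ := by rw [← this]; simp only [mul_assoc]
  let Z : Set (List T) := {τ | τ.length < m}
  have hZ : Z.Finite := List.finite_length_lt T m
  have := hZ.to_subtype
  have := Fintype.ofFinite Z
  have key : ∀ n, ∀ g : wordBall S n, ∃ w : List T, w.length ≤ n ∧ (w.map Subtype.val).prod = g.1 := by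
    rintro n ⟨g, l, hl, hm, rfl⟩
    refine ⟨l.attach.map fun y => ⟨y.1, hm y.1 y.2⟩, by simpa using hl, ?_⟩
    simp [List.map_map, Function.comp_def]
  let E := 3 ^ Fintype.card Z + (m * Fintype.card Z + Fintype.card T)
  refine ⟨E, fun n => ?_⟩
  choose w hwl hwp using key n
  choose c hc he using fun g => exists_expansion N (w g)
  let f : wordBall S n → (Z → Fin (n ^ m + 2)) × (T → Fin (n + 1)) := fun g =>
    (fun τ => ⟨c g τ.1, by
      have h1 := hc g τ.1
      have h2 : (w g).length ^ τ.1.length ≤ n ^ m + 1 := by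
        calc _ ≤ n ^ τ.1.length := Nat.pow_le_pow_left (hwl g) _
          _ ≤ _ := by
            rcases Nat.eq_zero_or_pos n with rfl | hn
            · rcases Nat.eq_zero_or_pos τ.1.length with h0 | h0
              · rw [h0]; simp
              · rw [zero_pow h0.ne']; exact Nat.zero_le _
            · exact (Nat.pow_le_pow_right hn (le_of_lt τ.2)).trans (Nat.le_succ _)
      omega⟩,
     fun t => ⟨(w g).count t, Nat.lt_succ_of_le (List.count_le_length.trans (hwl g))⟩)
  have hf : Function.Injective f := by
    intro g g' hgg
    have h1 : ∀ τ : List T, τ.length < m → c g τ = c g' τ := fun τ hτ => by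
      have := congrFun (congrArg Prod.fst hgg) ⟨τ, hτ⟩
      exact congrArg Fin.val this
    have h2 : ∀ t, (w g).count t = (w g').count t := fun t =>
      congrArg Fin.val (congrFun (congrArg Prod.snd hgg) t)
    apply Subtype.ext
    apply hρ
    rw [← hwp g, ← hwp g', hprod, hprod]
    congr 1
    · have hperm : List.Perm (w g) (w g') := List.perm_iff_count.2 h2
      simp only [D]
      congr 1
      ext j
      rw [map_list_prod, map_list_prod]
      congr 1
      exact ((hperm.map _).map _).prod_eq
    · rw [he, he, Finsupp.sum_of_support_subset (s := (c g).support ∪ (c g').support) _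
          Finset.subset_union_left _ (by simp),
        Finsupp.sum_of_support_subset (s := (c g).support ∪ (c g').support) _
          Finset.subset_union_right _ (by simp)]
      refine Finset.sum_congr rfl fun τ _ => ?_
      by_cases hτ : τ.length < m
      · rw [h1 τ hτ]
      · rw [list_prod_strictLower_eq_zero (τ.map N), smul_zero, smul_zero]
        · intro M hM
          obtain ⟨y, _, rfl⟩ := List.mem_map.1 hM
          exact hNlow y
        · simpa using hτ
  have hcard := Nat.card_le_card_of_injective f hf
  rw [Nat.card_prod, Nat.card_fun, Nat.card_fun] at hcard
  rw [Nat.card_fin, Nat.card_fin, Nat.card_eq_fintype_card (α := Z),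
    Nat.card_eq_fintype_card (α := T)] at hcard
  have h3 : n ^ m + 2 ≤ 3 * (n + 1) ^ m := by
    have h4 : n ^ m ≤ (n + 1) ^ m := Nat.pow_le_pow_left (Nat.le_succ n) m
    have h5 : 1 ≤ (n + 1) ^ m := Nat.one_le_pow _ _ (Nat.succ_pos n)
    omega
  calc _ ≤ (n ^ m + 2) ^ Fintype.card Z * (n + 1) ^ Fintype.card T := hcard
    _ ≤ (3 * (n + 1) ^ m) ^ Fintype.card Z * (n + 1) ^ Fintype.card T := by gcongr
    _ = 3 ^ Fintype.card Z * (n + 1) ^ (m * Fintype.card Z + Fintype.card T) := by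
      rw [mul_pow, ← pow_mul, mul_assoc, ← pow_add]
    _ ≤ E * (n + 1) ^ E := by
      refine Nat.mul_le_mul (by omega) (Nat.pow_le_pow_right (Nat.succ_pos n) ?_)
      have : 0 < 3 ^ Fintype.card Z := by positivity
      omega

end Nil
end EMO

/-! ### Burnside's theorem -/

namespace EMO
section Burnside

/-- Burnside's theorem: over an algebraically closed field, an algebra of endomorphisms acting
irreducibly is the full endomorphism algebra. -/
theorem burnside {K Q : Type*} [Field K] [IsAlgClosed K] [AddCommGroup Q] [Module K Q]
    [FiniteDimensional K Q] [Nontrivial Q] (A : Subalgebra K (Module.End K Q))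
    (h : ∀ W : Submodule K Q, (∀ a ∈ A, ∀ x ∈ W, a x ∈ W) → W = ⊥ ∨ W = ⊤) : A = ⊤ := by
  classical
  have hsimple : IsSimpleModule A Q := by
    rw [isSimpleModule_iff]
    refine { exists_pair_ne := ⟨⊥, ⊤, bot_ne_top⟩, eq_bot_or_eq_top := fun W => ?_ }
    rcases h (W.restrictScalars K) (fun a ha x hx => W.smul_mem (⟨a, ha⟩ : A) hx) with h | h
    · left; simpa using h
    · right; simpa using h
  have hschur := (IsSimpleModule.algebraMap_end_bijective_of_isAlgClosed (A := A) (V := Q) K).2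
  rw [eq_top_iff]
  rintro f -
  let F : Module.End (Module.End A Q) Q :=
    { toFun := f
      map_add' := map_add f
      map_smul' := fun e x => by
        obtain ⟨c, rfl⟩ := hschur e
        simp }
  let b := Module.finBasis K Q
  obtain ⟨r, hr⟩ := jacobson_density F (Finset.univ.image b)
  have : f = r.1 := b.ext fun i => hr (b i) (Finset.mem_image_of_mem b (Finset.mem_univ i))
  rw [this]
  exact r.2

/-- Burnside's theorem for the restriction of a representation to a subgroup. -/
theorem span_range_eq_top {K Q Γ : Type*} [Field K] [IsAlgClosed K] [AddCommGroup Q] [Module K Q]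
    [FiniteDimensional K Q] [Nontrivial Q] [Group Γ] (ρ : Γ →* Module.End K Q) (H : Subgroup Γ)
    (h : ∀ W : Submodule K Q, (∀ g ∈ H, ∀ x ∈ W, ρ g x ∈ W) → W = ⊥ ∨ W = ⊤) :
    Submodule.span K (ρ '' H) = ⊤ := by
  have h1 : Algebra.adjoin K (ρ '' H) = ⊤ := by
    refine burnside _ fun W hW => h W fun g hg x hx => ?_
    exact hW _ (Algebra.subset_adjoin ⟨g, hg, rfl⟩) x hx
  have h2 : (Submonoid.closure (ρ '' H) : Set (Module.End K Q)) = ρ '' H := by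
    have := (H.toSubmonoid.map ρ).closure_eq
    rw [show ((H.toSubmonoid.map ρ : Submonoid _) : Set (Module.End K Q)) = ρ '' H from rfl] at this
    rw [this]; rfl
  rw [← h2, ← Algebra.adjoin_eq_span, h1]
  rfl

end Burnside
end EMO

/-! ### Cocycles and block-triangular bases -/

namespace EMO
section Structure
universe u v

/-- An embedding of groups with image of finite index. -/
def IsFI {Δ Γ : Type u} [Group Δ] [Group Γ] (ι : Δ →* Γ) : Prop :=
  Function.Injective ι ∧ ι.range.FiniteIndex

theorem IsFI.id (Γ : Type u) [Group Γ] : IsFI (MonoidHom.id Γ) :=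
  ⟨Function.injective_id, by rw [MonoidHom.range_eq_top.2 Function.surjective_id]; infer_instance⟩

theorem IsFI.map {Δ Γ : Type u} [Group Δ] [Group Γ] {ι : Δ →* Γ} (h : IsFI ι) (H : Subgroup Δ)
    [hH : H.FiniteIndex] : (H.map ι).FiniteIndex :=
  ⟨by rw [H.index_map_of_injective h.1]
      exact Nat.mul_ne_zero hH.index_ne_zero h.2.index_ne_zero⟩

theorem IsFI.comp {Δ' Δ Γ : Type u} [Group Δ'] [Group Δ] [Group Γ] {ι : Δ →* Γ} {κ : Δ' →* Δ}
    (h : IsFI ι) (h' : IsFI κ) : IsFI (ι.comp κ) := by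
  refine ⟨h.1.comp h'.1, ?_⟩
  have := h'.2
  rw [MonoidHom.range_comp]
  exact h.map _

theorem IsFI.subtype {Γ : Type u} [Group Γ] (H : Subgroup Γ) [H.FiniteIndex] : IsFI H.subtype :=
  ⟨H.subtype_injective, by rwa [H.range_subtype]⟩

/-- A representation all of whose restrictions to finite-index subgroups are absolutely
irreducible, of dimension at least two. -/
def StronglyIrred (K : Type v) [Field K] (Γ : Type u) [Group Γ] : Prop :=
  ∃ (d : ℕ) (_ : 2 ≤ d) (ρ : Γ →* Matrix (Fin d) (Fin d) K), ∀ H : Subgroup Γ, H.FiniteIndex →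
    Submodule.span K (ρ '' H) = ⊤

/-- A nontrivial class in the first cohomology of a character of infinite order, that is, an
action by affine maps of the line with infinite linear part and no fixed point. -/
def AffineAction (K : Type v) [Field K] (Γ : Type u) [Group Γ] : Prop :=
  ∃ (χ : Γ →* Kˣ) (c : Γ → K), (Set.range χ).Infinite ∧ (∀ g h, c (g * h) = c g + χ g * c h) ∧
    ¬ ∃ t : K, ∀ g, c g = t * (1 - χ g)

/-- The property `P` holds for a subgroup of finite index. -/
def Virtually (P : ∀ (Γ : Type u) [Group Γ], Prop) (Γ : Type u) [Group Γ] : Prop :=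
  ∃ (Δ : Type u) (_ : Group Δ) (ι : Δ →* Γ), IsFI ι ∧ P Δ

theorem Virtually.of_isFI {P : ∀ (Γ : Type u) [Group Γ], Prop} {Δ Γ : Type u} [Group Δ] [Group Γ]
    {ι : Δ →* Γ} (h : IsFI ι) (hP : Virtually P Δ) : Virtually P Γ := by
  obtain ⟨Δ', _, κ, hκ, hp⟩ := hP
  exact ⟨Δ', _, ι.comp κ, h.comp hκ, hp⟩

theorem infinite_range_of_finiteIndex {Δ Γ A : Type*} [Group Δ] [Group Γ] [Group A] (ι : Δ →* Γ)
    (hι : ι.range.FiniteIndex) (η : Γ →* A) (h : (Set.range η).Infinite) :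
    (Set.range (η.comp ι)).Infinite := by
  intro hf
  apply h
  have h1 : Finite (η.comp ι).range := hf.to_subtype
  have h2 : ((η.comp ι).ker).FiniteIndex := Subgroup.finiteIndex_ker _
  have h3 : ((η.comp ι).ker.map ι).FiniteIndex := by
    constructor
    rw [Subgroup.index_map]
    refine Nat.mul_ne_zero ?_ hι.index_ne_zero
    have := Subgroup.finiteIndex_of_le (le_sup_left : (η.comp ι).ker ≤ (η.comp ι).ker ⊔ ι.ker)
    exact this.index_ne_zero
  have h4 : (η.comp ι).ker.map ι ≤ η.ker := by
    rintro _ ⟨x, hx, rfl⟩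
    exact hx
  have h5 : η.ker.FiniteIndex := Subgroup.finiteIndex_of_le h4
  have h6 : Finite η.range := by
    have e := QuotientGroup.quotientKerEquivRange η
    have : Finite (Γ ⧸ η.ker) := Subgroup.finite_quotient_of_finiteIndex
    exact Finite.of_equiv _ e.toEquiv
  exact Set.toFinite (η.range : Set A)

/-- A vector cocycle with values in a block-triangular representation becomes, after adding a
coboundary, supported on the coordinates whose character is `χ`, unless one of the coordinates
gives an affine action without fixed point. -/
theorem kill_cocycle {K : Type v} [Field K] {Δ : Type u} [Group Δ] {k : ℕ}
    (A : Δ →* Matrix (Fin k) (Fin k) K) (χs : Fin k → Δ →* Kˣ) (χ : Δ →* Kˣ)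
    (hdiag : ∀ g j, A g j j = χs j g) (htri : ∀ g i j, i < j → A g i j = 0)
    (hblock : ∀ i j, χs i ≠ χs j → ∀ g, A g i j = 0)
    (hinf : ∀ j, χs j ≠ χ → (Set.range (χs j / χ)).Infinite)
    (hB : ¬ AffineAction K Δ) (c : Δ → Fin k → K)
    (hc : ∀ g h, c (g * h) = (χ h : K) • c g + (A g).mulVec (c h)) :
    ∃ v : Fin k → K, ∀ j, χs j ≠ χ → ∀ g, (c g + (A g).mulVec v - (χ g : K) • v) j = 0 := by
  suffices H : ∀ i : ℕ, ∃ v : Fin k → K, ∀ j : Fin k, (j : ℕ) < i → χs j ≠ χ →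
      ∀ g, (c g + (A g).mulVec v - (χ g : K) • v) j = 0 by
    obtain ⟨v, hv⟩ := H k
    exact ⟨v, fun j hj => hv j j.2 hj⟩
  -- the coordinates are treated in increasing order; since the matrices are lower triangular,
  -- changing coordinate `i` does not affect the earlier ones
  intro i
  induction i with
  | zero => exact ⟨0, fun j hj => by omega⟩
  | succ i ih =>
    obtain ⟨v, hv⟩ := ih
    by_cases hi : i < k
    swap
    · exact ⟨v, fun j hj => hv j (by omega)⟩
    by_cases hχ : χs ⟨i, hi⟩ = χ
    · refine ⟨v, fun j hj hne => ?_⟩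
      rcases Nat.lt_succ_iff_lt_or_eq.1 hj with h | h
      · exact hv j h hne
      · exact absurd (by rw [← hχ]; congr 1; exact Fin.ext h) hne
    let i' : Fin k := ⟨i, hi⟩
    let c' : Δ → Fin k → K := fun g => c g + (A g).mulVec v - (χ g : K) • v
    have hc' : ∀ g h, c' (g * h) = (χ h : K) • c' g + (A g).mulVec (c' h) := by
      intro g h
      simp only [c', hc, map_mul, Matrix.mulVec_add, Matrix.mulVec_sub, Matrix.mulVec_smul,
        ← Matrix.mulVec_mulVec, Units.val_mul, mul_smul, smul_add, smul_sub]
      rw [smul_comm (χ g : K) (χ h : K) v]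
      abel
    -- coordinate `i'` is a scalar cocycle: the earlier coordinates with character `χs i'` already
    -- vanish, and those with another character do not contribute
    have hcomp : ∀ g h, c' (g * h) i' = χ h * c' g i' + χs i' g * c' h i' := by
      intro g h
      rw [hc' g h]
      simp only [Pi.add_apply, Pi.smul_apply, smul_eq_mul, Matrix.mulVec, dotProduct]
      rw [Finset.sum_eq_single i' _ (by simp), hdiag]
      intro j _ hj
      rcases lt_or_gt_of_ne hj with h1 | h1
      · by_cases h2 : χs i' = χs j
        · rw [show c' h j = 0 from hv j h1 (by rw [← h2]; exact hχ) h, mul_zero]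
        · rw [hblock _ _ h2, zero_mul]
      · rw [htri _ _ _ h1, zero_mul]
    -- normalised by `χ`, it is a cocycle for `χs i' / χ`, hence a coboundary in the absence of
    -- affine actions without fixed point
    have ht : ∃ t : K, ∀ g, c' g i' / χ g = t * (1 - (χs i' / χ) g) := by
      by_contra hno
      refine hB ⟨χs i' / χ, fun g => c' g i' / χ g, hinf i' hχ, fun g h => ?_, hno⟩
      have hg : (χ g : K) ≠ 0 := (χ g).ne_zero
      have hh : (χ h : K) ≠ 0 := (χ h).ne_zero
      change c' (g * h) i' / χ (g * h) = c' g i' / χ g + (χs i' / χ) g * (c' h i' / χ h)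
      rw [hcomp, map_mul, MonoidHom.div_apply]
      push_cast
      field_simp
    obtain ⟨t, ht⟩ := ht
    refine ⟨(v + Pi.single i' t : Fin k → K), fun j hj hne g => ?_⟩
    have e1 : (c g + (A g).mulVec (v + Pi.single i' t) -
        (χ g : K) • (v + Pi.single i' t) : Fin k → K) j =
        c' g j + (A g j i' * t - χ g * (Pi.single i' t : Fin k → K) j) := by
      simp only [c', Matrix.mulVec_add, Pi.add_apply, Pi.sub_apply, Pi.smul_apply, smul_eq_mul,
        Matrix.mulVec_single, MulOpposite.smul_eq_mul_unop, MulOpposite.unop_op, Matrix.col_apply]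
      ring
    rw [e1]
    rcases Nat.lt_succ_iff_lt_or_eq.1 hj with h | h
    · have hji : j < i' := h
      rw [show c' g j = 0 from hv j h hne g, htri _ _ _ hji, Pi.single_eq_of_ne hji.ne]
      ring
    · obtain rfl : j = i' := Fin.ext h
      have hg : (χ g : K) ≠ 0 := (χ g).ne_zero
      have := ht g
      rw [div_eq_iff hg, MonoidHom.div_apply] at this
      push_cast at this
      rw [this, hdiag, Pi.single_eq_same]
      field_simp
      ring

/-- A basis in which the group acts by lower triangular matrices, with vanishing entries in the
positions `(i, j)` for which the diagonal characters `χ i` and `χ j` differ. -/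
def BlockBasis {K : Type v} [Field K] {V : Type*} [AddCommGroup V] [Module K V] {Δ : Type u}
    [Group Δ] (ρ : Δ →* Module.End K V) (n : ℕ) : Prop :=
  ∃ (b : Module.Basis (Fin n) K V) (χ : Fin n → Δ →* Kˣ),
    (∀ g j, LinearMap.toMatrix b b (ρ g) j j = χ j g) ∧
    (∀ g i j, i < j → LinearMap.toMatrix b b (ρ g) i j = 0) ∧
    (∀ i j, χ i ≠ χ j → ∀ g, LinearMap.toMatrix b b (ρ g) i j = 0)


/-- A block-triangular basis of an invariant hyperplane `W` extends to the whole space: the cocycle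
measuring how far `y` is from an eigenvector is killed, by `kill_cocycle`, in all coordinates whose
character differs from the character `χ` of the quotient, by adding a vector of `W` to `y`. -/
theorem blockBasis_step {K : Type v} [Field K] {V : Type*} [AddCommGroup V] [Module K V]
    {Γ : Type u} [Group Γ] (ρ : Γ →* Module.End K V) {k : ℕ} (W : Submodule K V)
    (b : Module.Basis (Fin k) K W) (hW : ∀ g, ∀ x ∈ W, ρ g x ∈ W)
    (χs : Fin k → Γ →* Kˣ)
    (hdiag : ∀ g j, LinearMap.toMatrix b b ((ρ g).restrict (hW g)) j j = χs j g)
    (htri : ∀ g i j, i < j → LinearMap.toMatrix b b ((ρ g).restrict (hW g)) i j = 0)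
    (hblock : ∀ i j, χs i ≠ χs j → ∀ g, LinearMap.toMatrix b b ((ρ g).restrict (hW g)) i j = 0)
    (y : V) (hy : y ∉ W) (hsp : ∀ z : V, ∃ c : K, z + c • y ∈ W) (χ : Γ →* Kˣ)
    (hχ : ∀ g, ρ g y - (χ g : K) • y ∈ W)
    (hinf : ∀ j, χs j ≠ χ → (Set.range (χs j / χ)).Infinite)
    (hB : ¬ AffineAction K Γ) : BlockBasis ρ (k + 1) := by
  let A : Γ →* Matrix (Fin k) (Fin k) K :=
    { toFun := fun g => LinearMap.toMatrix b b ((ρ g).restrict (hW g))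
      map_one' := by
        rw [← LinearMap.toMatrix_id b]; congr 1; ext x; simp [LinearMap.restrict_apply]
      map_mul' := fun g h => by
        rw [← LinearMap.toMatrix_mul]; congr 1; ext x; simp [LinearMap.restrict_apply] }
  have hA : ∀ g (x : W), (A g).mulVec (b.repr x) = b.repr ⟨ρ g x, hW g x x.2⟩ := by
    intro g x
    exact LinearMap.toMatrix_mulVec_repr b b _ x
  let c : Γ → Fin k → K := fun g => b.repr ⟨_, hχ g⟩
  have hc : ∀ g h, c (g * h) = (χ h : K) • c g + (A g).mulVec (c h) := by
    intro g h
    simp only [c]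
    rw [hA, ← Finsupp.coe_smul, ← map_smul, ← Finsupp.coe_add, ← map_add]
    congr 2
    ext
    simp [mul_smul, smul_sub, smul_comm (χ g : K)]
  obtain ⟨v, hv⟩ := kill_cocycle A χs χ hdiag htri hblock hinf hB c hc
  let w : W := b.equivFun.symm v
  have hw : (b.repr w : Fin k → K) = v := by
    rw [← Module.Basis.equivFun_apply]; exact b.equivFun.apply_symm_apply v
  let y' : V := y + w
  have hli : ∀ (c : K), ∀ x ∈ W, c • y' + x = 0 → c = 0 := by
    intro c x hx h
    by_contra hc0
    apply hy
    have h1 : c • y ∈ W := by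
      have : c • y = -(c • (w : V) + x) := by
        rw [eq_neg_iff_add_eq_zero, ← h]; simp only [y', smul_add]; abel
      rw [this]
      exact W.neg_mem (W.add_mem (W.smul_mem _ w.2) hx)
    exact (W.smul_mem_iff hc0).1 h1
  have hsp' : ∀ z : V, ∃ c : K, z + c • y' ∈ W := by
    intro z
    obtain ⟨c, hc⟩ := hsp z
    refine ⟨c, ?_⟩
    have : z + c • y' = (z + c • y) + c • (w : V) := by simp only [y', smul_add]; abel
    rw [this]
    exact W.add_mem hc (W.smul_mem _ w.2)
  let B := Module.Basis.mkFinCons y' b hli hsp'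
  have hB0 : B 0 = y' := by simp [B]
  have hBs : ∀ j : Fin k, B j.succ = b j := by intro j; simp [B]
  have hχ' : ∀ g, ρ g y' - (χ g : K) • y' ∈ W := by
    intro g
    have : ρ g y' - (χ g : K) • y' = (ρ g y - (χ g : K) • y) + (ρ g w - (χ g : K) • (w : V)) := by
      simp only [y', smul_add, map_add]; abel
    rw [this]
    exact W.add_mem (hχ g) (W.sub_mem (hW g _ w.2) (W.smul_mem _ w.2))
  have hc' : ∀ g, (b.repr ⟨_, hχ' g⟩ : Fin k → K) = c g + (A g).mulVec v - (χ g : K) • v := by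
    intro g
    rw [← hw, hA]
    simp only [c]
    rw [← Finsupp.coe_smul, ← map_smul, ← Finsupp.coe_add, ← map_add, ← Finsupp.coe_sub, ← map_sub]
    congr 2
    ext
    simp [y', smul_add]
    abel
  have hreprW : ∀ x : W, B.repr x 0 = 0 ∧ ∀ j : Fin k, B.repr x j.succ = b.repr x j := by
    intro x
    have h : (x : V) = ∑ j : Fin k, b.repr x j • B j.succ := by
      calc (x : V) = ((∑ j, b.repr x j • b j : W) : V) := congrArg Subtype.val (b.sum_repr x).symm
        _ = _ := by simp only [hBs]; push_cast; rfl
    have h' : B.repr x = ∑ j : Fin k, b.repr x j • Finsupp.single j.succ (1 : K) := by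
      rw [h]; simp only [map_sum, map_smul, Module.Basis.repr_self]
    rw [h']
    refine ⟨by simp [Finsupp.finset_sum_apply, Finsupp.single_apply], fun j => ?_⟩
    rw [Finsupp.finset_sum_apply, Finset.sum_eq_single j]
    · simp
    · intro i _ hij
      simp [Finsupp.single_apply, hij]
    · simp
  have hcol0 : ∀ g, B.repr (ρ g y') = (χ g : K) • B.repr (B 0) + B.repr (ρ g y' - (χ g : K) • y') := by
    intro g
    rw [hB0, ← map_smul, ← map_add]; congr 1; abel
  have e00 : ∀ g, LinearMap.toMatrix B B (ρ g) 0 0 = χ g := by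
    intro g
    rw [LinearMap.toMatrix_apply, hB0, hcol0, Finsupp.add_apply, (hreprW ⟨_, hχ' g⟩).1]
    simp
  have es0 : ∀ g (i : Fin k), LinearMap.toMatrix B B (ρ g) i.succ 0 =
      (c g + (A g).mulVec v - (χ g : K) • v) i := by
    intro g i
    rw [LinearMap.toMatrix_apply, hB0, hcol0, Finsupp.add_apply, (hreprW ⟨_, hχ' g⟩).2, hc']
    simp [Finsupp.single_apply]
  have e0s : ∀ g (j : Fin k), LinearMap.toMatrix B B (ρ g) 0 j.succ = 0 := by
    intro g j
    rw [LinearMap.toMatrix_apply, hBs]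
    exact (hreprW ⟨_, hW g _ (b j).2⟩).1
  have ess : ∀ g (i j : Fin k), LinearMap.toMatrix B B (ρ g) i.succ j.succ = A g i j := by
    intro g i j
    rw [LinearMap.toMatrix_apply, hBs]
    rw [(hreprW ⟨_, hW g _ (b j).2⟩).2]
    exact (LinearMap.toMatrix_apply b b ((ρ g).restrict (hW g)) i j).symm
  refine ⟨B, Fin.cons χ χs, fun g j => ?_, fun g i j hij => ?_, fun i j hij g => ?_⟩
  · refine Fin.cases ?_ (fun j => ?_) j
    · rw [e00]; rfl
    · rw [ess]; exact hdiag g j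
  · induction j using Fin.cases with
    | zero => exact absurd hij (Fin.not_lt_zero i)
    | succ j =>
      induction i using Fin.cases with
      | zero => exact e0s g j
      | succ i => rw [ess]; exact htri g i j (Fin.succ_lt_succ_iff.1 hij)
  · induction j using Fin.cases with
    | zero =>
      induction i using Fin.cases with
      | zero => exact absurd rfl hij
      | succ i => rw [es0]; exact hv i hij g
    | succ j =>
      induction i using Fin.cases with
      | zero => exact e0s g j
      | succ i => rw [ess]; exact hblock i j hij g

end Structure
end EMO

/-! ### The trichotomy for linear groups -/

namespace EMO
section Structure
universe u v

/-- Irreducibility on every finite-index subgroup is strong irreducibility, by Burnside's theorem. -/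
theorem stronglyIrred_of_rep {K : Type v} [Field K] [IsAlgClosed K] {Q : Type*} [AddCommGroup Q]
    [Module K Q] [FiniteDimensional K Q] {Γ : Type u} [Group Γ] (ρ : Γ →* Module.End K Q)
    (h2 : 2 ≤ Module.finrank K Q)
    (h : ∀ H : Subgroup Γ, H.FiniteIndex → ∀ W : Submodule K Q, (∀ g ∈ H, ∀ x ∈ W, ρ g x ∈ W) →
      W = ⊥ ∨ W = ⊤) : StronglyIrred K Γ := by
  have : Nontrivial Q := Module.nontrivial_of_finrank_pos (R := K) (by omega)
  let b := Module.finBasis K Q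
  let e := LinearMap.toMatrixAlgEquiv b
  refine ⟨_, h2, (e : Module.End K Q →* _).comp ρ, fun H hH => ?_⟩
  have h1 := span_range_eq_top ρ H (h H hH)
  have h3 : ((e : Module.End K Q →* _).comp ρ) '' H = e.toLinearMap '' (ρ '' H) := by
    rw [Set.image_image]; rfl
  rw [h3, Submodule.span_image, h1, Submodule.map_top, LinearMap.range_eq_top]
  exact e.surjective

/-- Every linear group has, up to finite index, a strongly irreducible representation of dimension
at least two, an affine action on the line without fixed point and with infinite linear part, or a
block-triangular basis. -/
theorem structure_theorem (K : Type v) [Field K] [IsAlgClosed K] (n : ℕ) :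
    ∀ (Γ : Type u) [Group Γ] (V : Type v) [AddCommGroup V] [Module K V] [FiniteDimensional K V]
      (ρ : Γ →* Module.End K V), Module.finrank K V = n →
      Virtually (fun Γ _ => StronglyIrred K Γ) Γ ∨ Virtually (fun Γ _ => AffineAction K Γ) Γ ∨
        ∃ (Δ : Type u) (_ : Group Δ) (ι : Δ →* Γ), IsFI ι ∧ BlockBasis (ρ.comp ι) n := by
  classical
  induction n with
  | zero =>
    intro Γ _ V _ _ _ ρ hn
    exact Or.inr (Or.inr ⟨Γ, _, MonoidHom.id Γ, IsFI.id Γ, Module.finBasisOfFinrankEq K V hn,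
      fun i => i.elim0, fun _ i => i.elim0, fun _ i => i.elim0, fun i => i.elim0⟩)
  | succ n ih =>
    intro Γ _ V _ _ _ ρ hn
    -- an invariant proper subspace of maximal dimension, for a finite-index subgroup
    let P : ℕ → Prop := fun m => ∃ H : Subgroup Γ, H.FiniteIndex ∧ ∃ W : Submodule K V, W ≠ ⊤ ∧
      (∀ g ∈ H, ∀ x ∈ W, ρ g x ∈ W) ∧ Module.finrank K W = m
    have hV : Nontrivial V := Module.nontrivial_of_finrank_pos (R := K) (by omega)
    have hP0 : P 0 := ⟨⊤, inferInstance, ⊥, bot_ne_top, fun g _ x hx => by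
      rw [(Submodule.mem_bot K).1 hx, map_zero]; exact zero_mem _, finrank_bot K V⟩
    have hspec := Nat.findGreatest_spec (P := P) (Nat.zero_le (n + 1)) hP0
    have hmax : ∀ m, P m → m ≤ Nat.findGreatest P (n + 1) := by
      intro m hm
      refine Nat.le_findGreatest ?_ hm
      obtain ⟨_, _, W, _, _, hW⟩ := hm
      rw [← hW, ← hn]; exact Submodule.finrank_le W
    obtain ⟨H, hH, W, hWtop, hWinv, hWdim⟩ := hspec
    rw [← hWdim] at hmax
    have hWinv' : ∀ g : H, ∀ x ∈ W, ρ g x ∈ W := fun g => hWinv g g.2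
    have hdim : Module.finrank K (V ⧸ W) + Module.finrank K W = n + 1 := by
      rw [← hn]; exact W.finrank_quotient_add_finrank
    have hpos : 0 < Module.finrank K (V ⧸ W) := by
      have := Submodule.finrank_lt hWtop
      omega
    -- by maximality of `W` the quotient is irreducible for every finite-index subgroup; it is
    -- strongly irreducible if its dimension is at least two, and otherwise `W` is a hyperplane
    by_cases h2 : 2 ≤ Module.finrank K (V ⧸ W)
    · left
      refine ⟨H, _, H.subtype, IsFI.subtype H, ?_⟩
      let ρQ : H →* Module.End K (V ⧸ W) :=
        { toFun := fun g => W.mapQ W (ρ g) (hWinv' g)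
          map_one' := by ext; simp
          map_mul' := fun g h => by ext; simp }
      refine stronglyIrred_of_rep ρQ h2 fun H' hH' W' hW' => ?_
      let U := W'.comap W.mkQ
      have hU : U.map W.mkQ = W' := Submodule.map_comap_eq_of_surjective W.mkQ_surjective W'
      have hWU : W ≤ U := by
        intro x hx
        have : W.mkQ x = 0 := by simpa using hx
        simp [U, this]
      by_cases hUtop : U = ⊤
      · right
        rw [← hU, hUtop, Submodule.map_top, LinearMap.range_eq_top]
        exact W.mkQ_surjective
      · left
        have : P (Module.finrank K U) := by
          refine ⟨H'.map H.subtype, (IsFI.subtype H).map H', U, hUtop, ?_, rfl⟩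
          rintro _ ⟨g, hg, rfl⟩ x hx
          exact hW' g hg _ hx
        have := Submodule.eq_of_le_of_finrank_le hWU (hmax _ this)
        rw [← hU, ← this]
        simp
    · have h1 : Module.finrank K (V ⧸ W) = 1 := by omega
      have hWn : Module.finrank K W = n := by omega
      let ρW : H →* Module.End K W :=
        { toFun := fun g => (ρ g).restrict (hWinv' g)
          map_one' := by ext; simp [LinearMap.restrict_apply]
          map_mul' := fun g h => by ext; simp [LinearMap.restrict_apply] }
      rcases ih H W ρW hWn with h | h | ⟨Δ, _, ι, hι, b, χs, hdiag, htri, hblock⟩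
      · exact Or.inl (h.of_isFI (IsFI.subtype H))
      · exact Or.inr (Or.inl (h.of_isFI (IsFI.subtype H)))
      right
      obtain ⟨y, hy⟩ : ∃ y, y ∉ W := by
        by_contra hcon
        push Not at hcon
        exact hWtop (eq_top_iff.2 fun x _ => hcon x)
      have hy0 : W.mkQ y ≠ 0 := by simpa using hy
      have hsp : ∀ z : V, ∃ a : K, z - a • y ∈ W := by
        intro z
        obtain ⟨a, ha⟩ := (finrank_eq_one_iff_of_nonzero' _ hy0).1 h1 (W.mkQ z)
        refine ⟨a, ?_⟩
        rw [← W.ker_mkQ, LinearMap.mem_ker, map_sub, map_smul, ha, sub_self]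
      have huniq : ∀ a b : K, ∀ z, z - a • y ∈ W → z - b • y ∈ W → a = b := by
        intro a b z ha hb
        by_contra hab
        apply hy
        have : (b - a) • y ∈ W := by
          have := W.sub_mem ha hb
          rwa [show z - a • y - (z - b • y) = (b - a) • y by rw [sub_smul]; abel] at this
        exact (W.smul_mem_iff (sub_ne_zero.2 (Ne.symm hab))).1 this
      choose a ha using fun g : Δ => hsp (ρ (ι g) y)
      let χ : Δ →* Kˣ := MonoidHom.toHomUnits
        { toFun := a
          map_one' := huniq _ _ y (by simpa using ha 1) (by simp)
          map_mul' := fun g h => by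
            refine huniq _ _ _ (ha (g * h)) ?_
            have h3 := hWinv' (ι g) _ (ha h)
            have h4 := W.smul_mem (a h) (ha g)
            have h5 := W.add_mem h3 h4
            have : ρ (ι (g * h)) y - (a g * a h) • y =
                ρ (ι g) (ρ (ι h) y - a h • y) + a h • (ρ (ι g) y - a g • y) := by
              simp only [map_mul, Subgroup.coe_mul, map_sub, map_smul, Module.End.mul_apply, smul_sub,
                smul_smul]
              rw [mul_comm (a g)]; abel
            rw [this]; exact h5 }
      have hχ : ∀ g, ρ (ι g) y - (χ g : K) • y ∈ W := ha
      -- pass to a finite-index subgroup on which every `χs j / χ` is trivial or has infinite range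
      let L : Fin n → Subgroup Δ := fun j =>
        if (Set.range (χs j / χ)).Finite then (χs j / χ).ker else ⊤
      have hL : ∀ j, (L j).FiniteIndex := by
        intro j
        simp only [L]
        split_ifs with h
        · have : Finite (χs j / χ).range := h.to_subtype
          exact Subgroup.finiteIndex_ker _
        · infer_instance
      let L0 : Subgroup Δ := ⨅ j, L j
      have hL0 : L0.FiniteIndex := Subgroup.finiteIndex_iInf hL
      have hfi : IsFI (H.subtype.comp (ι.comp L0.subtype)) :=
        (IsFI.subtype H).comp (hι.comp (IsFI.subtype L0))
      by_cases hB : AffineAction K L0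
      · exact Or.inl ⟨L0, _, _, hfi, hB⟩
      right
      refine ⟨L0, _, _, hfi, ?_⟩
      refine blockBasis_step (ρ.comp (H.subtype.comp (ι.comp L0.subtype))) W b
        (fun g x hx => hWinv' _ x hx) (fun j => (χs j).comp L0.subtype) (fun g j => hdiag g j)
        (fun g i j hij => htri g i j hij) (fun i j hij g => ?_) y hy (fun z => ?_)
        (χ.comp L0.subtype) (fun g => hχ g) (fun j hj => ?_) hB
      · refine hblock i j (fun h => hij ?_) g
        simp only [h]
      · obtain ⟨a, ha⟩ := hsp z
        exact ⟨-a, by rwa [neg_smul, ← sub_eq_add_neg]⟩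
      · have hne : ¬ (Set.range (χs j / χ)).Finite := by
          intro hfin
          apply hj
          ext g
          have h3 : (g : Δ) ∈ L j := (iInf_le L j) g.2
          simp only [L, if_pos hfin, MonoidHom.mem_ker, MonoidHom.div_apply, div_eq_one] at h3
          exact congrArg Units.val h3
        have := infinite_range_of_finiteIndex L0.subtype (by rwa [L0.range_subtype]) _ hne
        exact this

theorem UniformFree.of_mulEquiv {G G' : Type*} [Group G] [Group G'] (e : G ≃* G')
    (h : UniformFree G) : UniformFree G' := by
  classical
  obtain ⟨M, hM⟩ := h
  refine ⟨M, fun S hS => ?_⟩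
  have hgen : Generates (S.image e.symm) := by
    unfold Generates at hS ⊢
    rw [Finset.coe_image, ← MonoidHom.coe_coe, ← MonoidHom.map_closure, hS,
      Subgroup.map_top_of_surjective]
    exact e.symm.surjective
  obtain ⟨a, ha, b, hb, hab⟩ := hM _ hgen
  have key : ∀ x ∈ wordBall (S.image e.symm) M, e x ∈ wordBall S M := by
    refine wordBall_induction (p := fun n x => e x ∈ wordBall S n)
      (fun n => by simpa using one_mem_wordBall S n) ?_ M
    intro n s x hs _ hx
    rw [map_mul, add_comm]
    refine mul_mem_wordBall (mem_wordBall_one ?_) hx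
    rcases hs with hs | hs
    · left
      obtain ⟨t, ht, rfl⟩ := Finset.mem_image.1 hs
      simpa using ht
    · right
      obtain ⟨t, ht, h⟩ := Finset.mem_image.1 hs
      rw [← map_inv, ← h]
      simpa using ht
  exact ⟨e a, key a ha, e b, key b hb, hab.map (e : G →* G') e.injective⟩

theorem UniformFree.of_isFI {Δ Γ : Type u} [Group Δ] [Group Γ] {ι : Δ →* Γ} (h : IsFI ι)
    (hΔ : UniformFree Δ) : UniformFree Γ := by
  have := h.2
  exact (hΔ.of_mulEquiv (ι.ofInjective h.1)).of_finiteIndex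

/-- A faithful representation with a block-triangular basis over a finite-index subgroup excludes
exponential growth. -/
theorem growthRate_le_of_blockBasis {K : Type v} [Field K] {V : Type v} [AddCommGroup V]
    [Module K V] {Δ Γ : Type u} [Group Δ] [Group Γ] {ι : Δ →* Γ} (h : IsFI ι) {n : ℕ}
    (ρ : Γ →* Module.End K V) (hρ : Function.Injective ρ) (hb : BlockBasis (ρ.comp ι) n)
    {S : Finset Γ} (hS : Generates S) : growthRate S ≤ 1 := by
  obtain ⟨b, χ, hdiag, htri, hblock⟩ := hb
  have := h.2
  let e := ι.ofInjective h.1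
  have hp : PolyGrowth ι.range := by
    refine polyGrowth_of_block
      (((LinearMap.toMatrixAlgEquiv b : _ ≃ₐ[K] _) : Module.End K V →* _).comp
        ((ρ.comp ι).comp (e.symm : ι.range →* Δ))) ?_ (fun j => (χ j).comp (e.symm : ι.range →* Δ))
      (fun g j => hdiag _ j) (fun g i j hij => htri _ i j hij) (fun i j hij g => hblock i j ?_ _)
    · intro x y hxy
      exact e.symm.injective (h.1 (hρ ((LinearMap.toMatrixAlgEquiv b).injective hxy)))
    · intro hne
      apply hij
      simp only [hne]
  exact hp.growthRate_le hS

end Structure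
end EMO

/-! ### Integers, places, Liouville and Northcott -/

namespace EMO
section Arithmetic

/-- The subring of elements `x` of `K` such that `m ^ k * x` is an algebraic integer for some `k`,
that is, the integral closure of `ℤ[1/m]` in `K`. -/
def SInt (K : Type*) [Field K] (m : ℕ) : Subring K where
  carrier := {x | ∃ k : ℕ, IsIntegral ℤ ((m : K) ^ k * x)}
  mul_mem' := by
    rintro x y ⟨k, hk⟩ ⟨l, hl⟩
    refine ⟨k + l, ?_⟩
    rw [show (m : K) ^ (k + l) * (x * y) = m ^ k * x * (m ^ l * y) by ring]
    exact hk.mul hl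
  one_mem' := ⟨0, by simpa using isIntegral_one⟩
  add_mem' := by
    rintro x y ⟨k, hk⟩ ⟨l, hl⟩
    have hm : ∀ j : ℕ, IsIntegral ℤ ((m : K) ^ j) := fun j => (isIntegral_natCast m).pow j
    refine ⟨k + l, ?_⟩
    rw [show (m : K) ^ (k + l) * (x + y) = m ^ l * (m ^ k * x) + m ^ k * (m ^ l * y) by ring]
    exact ((hm l).mul hk).add ((hm k).mul hl)
  zero_mem' := ⟨0, by simpa using isIntegral_zero⟩
  neg_mem' := by
    rintro x ⟨k, hk⟩
    exact ⟨k, by simpa using hk.neg⟩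

/-- The absolute value of `K` induced by an embedding into a normed field. -/
def normAbs {K L : Type*} [Field K] [NormedField L] (σ : K →+* L) : AbsoluteValue K ℝ where
  toFun x := ‖σ x‖
  map_mul' := fun a b => by simp
  nonneg' := fun a => norm_nonneg _
  eq_zero' := fun a => by simp
  add_le' := fun a b => by simpa using norm_add_le (σ a) (σ b)

/-- The absolute values of `K` induced by its embeddings into `ℂ` and into the algebraic closures
of `ℚ_[p]` for the prime divisors `p` of `m`. -/
def Places (K : Type*) [Field K] (m : ℕ) : Set (AbsoluteValue K ℝ) :=
  {v | (∃ σ : K →+* ℂ, ∀ x, v x = ‖σ x‖) ∨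
    ∃ (p : ℕ) (_ : Fact p.Prime), p ∣ m ∧ ∃ σ : K →+* PadicAlgCl p, ∀ x, v x = ‖σ x‖}

theorem SInt_mono {K : Type*} [Field K] {m n : ℕ} (h : m ∣ n) : SInt K m ≤ SInt K n := by
  rintro x ⟨k, hk⟩
  obtain ⟨c, rfl⟩ := h
  refine ⟨k, ?_⟩
  have : IsIntegral ℤ ((c : K) ^ k) := (isIntegral_natCast c).pow k
  rw [show ((m * c : ℕ) : K) ^ k * x = c ^ k * (m ^ k * x) by push_cast; ring]
  exact this.mul hk

/-- The product formula for a nonzero `c ∈ ℤ[1/m]`, with the places away from `m` omitted. -/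
theorem one_le_prod_padicNorm {c : ℚ} (hc : c ≠ 0) {m k : ℕ} (hm : m ≠ 0) {z : ℤ}
    (hz : (m : ℚ) ^ k * c = z) : 1 ≤ |c| * ∏ p ∈ m.primeFactors, padicNorm p c := by
  have hmk : m ^ k ≠ 0 := pow_ne_zero _ hm
  have hmk' : (m : ℚ) ^ k ≠ 0 := by exact_mod_cast hmk
  have hz0 : z ≠ 0 := by
    rintro rfl
    simp [hc, hm] at hz
  have hn0 : z.natAbs ≠ 0 := Int.natAbs_ne_zero.2 hz0
  have hnat : ∀ p, p.Prime → ∀ n : ℕ, n ≠ 0 → padicNorm p n = ((p : ℚ) ^ n.factorization p)⁻¹ := by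
    intro p hp n hn
    rw [padicNorm.eq_zpow_of_nonzero (by exact_mod_cast hn), padicValRat.of_nat,
      Nat.factorization_def n hp, zpow_neg, zpow_natCast]
  have hint : ∀ p, p.Prime → padicNorm p z = ((p : ℚ) ^ z.natAbs.factorization p)⁻¹ := by
    intro p hp
    rw [← hnat p hp _ hn0]
    rcases Int.natAbs_eq z with h | h
    · conv_lhs => rw [h]
      simp
    · conv_lhs => rw [h]
      rw [Int.cast_neg, padicNorm.neg]; simp
  have hpc : ∀ p ∈ m.primeFactors, padicNorm p c =
      (p : ℚ) ^ (m ^ k).factorization p * ((p : ℚ) ^ z.natAbs.factorization p)⁻¹ := by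
    intro p hp
    have hp' := Nat.prime_of_mem_primeFactors hp
    have : Fact p.Prime := ⟨hp'⟩
    have h := congrArg (padicNorm p) hz
    rw [padicNorm.mul, ← Nat.cast_pow, hnat p hp' _ hmk, hint p hp'] at h
    have hne : (p : ℚ) ^ (m ^ k).factorization p ≠ 0 :=
      pow_ne_zero _ (by exact_mod_cast hp'.ne_zero)
    field_simp at h ⊢
    linarith
  rw [Finset.prod_congr rfl hpc, Finset.prod_mul_distrib, Finset.prod_inv_distrib]
  have h1 : ∏ p ∈ m.primeFactors, (p : ℚ) ^ (m ^ k).factorization p = (m : ℚ) ^ k := by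
    rcases Nat.eq_zero_or_pos k with rfl | hk
    · simp
    have := Nat.prod_factorization_pow_eq_self hmk
    rw [Finsupp.prod, Nat.support_factorization, Nat.primeFactors_pow m hk.ne'] at this
    exact_mod_cast this
  have h2 : ∏ p ∈ m.primeFactors, (p : ℚ) ^ z.natAbs.factorization p ≤ |(z : ℚ)| := by
    have : ∏ p ∈ m.primeFactors, p ^ z.natAbs.factorization p ∣ z.natAbs := by
      refine Finset.prod_dvd_of_isRelPrime ?_ fun p _ => Nat.ordProj_dvd _ _
      intro p hp q hq hpq
      rw [Function.onFun, ← Nat.coprime_iff_isRelPrime]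
      exact Nat.Coprime.pow _ _ ((Nat.coprime_primes (Nat.prime_of_mem_primeFactors hp)
        (Nat.prime_of_mem_primeFactors hq)).2 hpq)
    have := Nat.le_of_dvd (Nat.pos_of_ne_zero hn0) this
    rw [← Int.cast_abs, Int.abs_eq_natAbs]
    exact_mod_cast this
  have h3 : 0 < ∏ p ∈ m.primeFactors, (p : ℚ) ^ z.natAbs.factorization p :=
    Finset.prod_pos fun p hp => pow_pos
      (by exact_mod_cast (Nat.prime_of_mem_primeFactors hp).pos) _
  rw [h1, ← mul_assoc, ← div_eq_mul_inv, one_le_div h3, mul_comm,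
    ← abs_of_nonneg (show (0 : ℚ) ≤ (m : ℚ) ^ k by positivity), ← abs_mul, hz]
  exact h2

section Embeddings
variable {K : Type*} [Field K] [Algebra ℚ K] [Algebra.IsAlgebraic ℚ K]
  {L : Type*} [NormedField L] [CharZero L] [IsAlgClosed L]

/-- Every conjugate of `x` is the image of `x` under an embedding of `K`. -/
theorem exists_embedding (x : K) {z : L} (hz : z ∈ ((minpoly ℚ x).map (algebraMap ℚ L)).roots) :
    ∃ σ : K →+* L, σ x = z := by
  have h : z ∈ (minpoly ℚ x).rootSet L := by
    rw [Polynomial.mem_rootSet]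
    refine ⟨minpoly.ne_zero (Algebra.IsIntegral.isIntegral x), ?_⟩
    have := (Polynomial.mem_roots'.1 hz).2
    rwa [Polynomial.IsRoot, Polynomial.eval_map_algebraMap] at this
  rw [← Algebra.IsAlgebraic.range_eval_eq_rootSet_minpoly L x] at h
  obtain ⟨σ, hσ⟩ := h
  exact ⟨σ, hσ⟩

omit [IsAlgClosed L] in
theorem embedding_mem_roots (x : K) (σ : K →+* L) :
    σ x ∈ ((minpoly ℚ x).map (algebraMap ℚ L)).roots := by
  rw [Polynomial.mem_roots']
  refine ⟨Polynomial.map_ne_zero (minpoly.ne_zero (Algebra.IsIntegral.isIntegral x)), ?_⟩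
  rw [Polynomial.IsRoot, Polynomial.eval_map_algebraMap]
  have := Polynomial.aeval_algHom_apply σ.toRatAlgHom x (minpoly ℚ x)
  rw [minpoly.aeval, map_zero] at this
  exact this

/-- The coefficients of the minimal polynomial are elementary symmetric functions of the conjugates. -/
theorem norm_coeff_minpoly_le (x : K) {B : ℝ} (hB : ∀ σ : K →+* L, ‖σ x‖ ≤ B) (i : ℕ) :
    ‖(((minpoly ℚ x).coeff i : ℚ) : L)‖ ≤
      B ^ ((minpoly ℚ x).natDegree - i) * (minpoly ℚ x).natDegree.choose i := by
  have := Polynomial.coeff_le_of_roots_le (f := algebraMap ℚ L) (B := B) i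
    (minpoly.monic (Algebra.IsIntegral.isIntegral x)) (IsAlgClosed.splits _) (fun z hz => by
      obtain ⟨σ, rfl⟩ := exists_embedding x hz
      exact hB σ)
  rwa [Polynomial.coeff_map, eq_ratCast] at this

omit [CharZero L] [IsAlgClosed L] in
theorem norm_multiset_prod_le {B : ℝ} (s : Multiset L) (h : ∀ z ∈ s, ‖z‖ ≤ B) :
    ‖s.prod‖ ≤ B ^ s.card := by
  induction s using Multiset.induction_on with
  | empty => simp
  | cons a s ih =>
    rw [Multiset.prod_cons, norm_mul, Multiset.card_cons, pow_succ']
    have h1 := h a (Multiset.mem_cons_self a s)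
    exact mul_le_mul h1 (ih fun z hz => h z (Multiset.mem_cons_of_mem hz)) (norm_nonneg _)
      ((norm_nonneg _).trans h1)

/-- The constant coefficient of the minimal polynomial is, up to sign, the product of the conjugates,
one of which is `σ x`. -/
theorem norm_coeff_zero_minpoly_le (x : K) {B : ℝ} (hB : ∀ σ : K →+* L, ‖σ x‖ ≤ B)
    (σ : K →+* L) : ‖(((minpoly ℚ x).coeff 0 : ℚ) : L)‖ ≤
      ‖σ x‖ * B ^ ((minpoly ℚ x).natDegree - 1) := by
  classical
  set P := (minpoly ℚ x).map (algebraMap ℚ L) with hP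
  have hs : P.Splits := IsAlgClosed.splits _
  have hm : P.Monic := (minpoly.monic (Algebra.IsIntegral.isIntegral x)).map _
  have h := hs.coeff_zero_eq_prod_roots_of_monic hm
  have hr := Multiset.cons_erase (embedding_mem_roots (L := L) x σ)
  rw [← hP] at hr
  have hcard : P.roots.card = (minpoly ℚ x).natDegree := by
    rw [← hs.natDegree_eq_card_roots, hP, Polynomial.natDegree_map]
  rw [← eq_ratCast (algebraMap ℚ L), ← Polynomial.coeff_map, ← hP, h, ← hr, Multiset.prod_cons,
    norm_mul, norm_mul, norm_pow, norm_neg, norm_one, one_pow, one_mul, ← hcard,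
    ← Nat.pred_eq_sub_one, ← Multiset.card_erase_of_mem (embedding_mem_roots (L := L) x σ)]
  refine mul_le_mul_of_nonneg_left (norm_multiset_prod_le _ fun z hz => ?_) (norm_nonneg _)
  obtain ⟨τ, rfl⟩ := exists_embedding x (Multiset.mem_of_mem_erase hz)
  exact hB τ

/-- The minimal polynomial over `ℚ` of an `m`-integer has coefficients in `ℤ[1/m]`. -/
theorem SInt_coeff {m : ℕ} (hm : m ≠ 0) {x : K} (hx : x ∈ SInt K m) (i : ℕ) :
    ∃ (j : ℕ) (z : ℤ), (m : ℚ) ^ j * (minpoly ℚ x).coeff i = z := by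
  have : CharZero K := algebraRat.charZero K
  obtain ⟨k, hk⟩ := hx
  have h0 : (m : ℚ) ^ k ≠ 0 := pow_ne_zero _ (by exact_mod_cast hm)
  have e : (m : K) ^ k * x = ((m : ℚ) ^ k) • x := by
    rw [Algebra.smul_def, map_pow, map_natCast]
  rw [e] at hk
  have h1 := minpoly.isIntegrallyClosed_eq_field_fractions' ℚ hk
  rw [IsIntegrallyClosed.minpoly_smul h0 (Algebra.IsIntegral.isIntegral x)] at h1
  have h2 := congrArg (fun p => p.coeff i) h1
  simp only [Polynomial.coeff_scaleRoots, Polynomial.coeff_map] at h2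
  refine ⟨k * ((minpoly ℚ x).natDegree - i), (minpoly ℤ (((m : ℚ) ^ k) • x)).coeff i, ?_⟩
  rw [pow_mul, mul_comm, h2]
  simp

theorem norm_ratCast_padicAlgCl (p : ℕ) [Fact p.Prime] (c : ℚ) :
    ‖(c : PadicAlgCl p)‖ = (padicNorm p c : ℝ) := by
  rw [← Padic.eq_padicNorm, ← PadicAlgCl.norm_extends, map_ratCast]

theorem exists_ringHom (L : Type*) [Field L] [CharZero L] [IsAlgClosed L] : Nonempty (K →+* L) :=
  ⟨((IsAlgClosed.lift : K →ₐ[ℚ] L) : K →+* L)⟩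

end Embeddings

/-- Liouville's inequality: a nonzero `m`-integer of bounded degree which is bounded above at all
places is bounded below at each of them. -/
theorem liouville {K : Type*} [Field K] [Algebra ℚ K] [Algebra.IsAlgebraic ℚ K] {m : ℕ}
    (hm : m ≠ 0) (D : ℕ) : ∃ k : ℕ, ∀ x ∈ SInt K m, x ≠ 0 → (minpoly ℚ x).natDegree ≤ D →
      ∀ B : ℝ, 1 ≤ B → (∀ v ∈ Places K m, v x ≤ B) → ∀ v ∈ Places K m, 1 ≤ B ^ k * v x := by
  refine ⟨D * (m.primeFactors.card + 1), fun x hx hx0 hD B hB1 hB v hv => ?_⟩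
  have hint : IsIntegral ℚ x := Algebra.IsIntegral.isIntegral x
  set n := (minpoly ℚ x).natDegree with hn
  have hn1 : 1 ≤ n := minpoly.natDegree_pos hint
  set c := (minpoly ℚ x).coeff 0 with hc
  have hc0 : c ≠ 0 := minpoly.coeff_zero_ne_zero hint hx0
  obtain ⟨j, z, hz⟩ := SInt_coeff hm hx 0
  have hprod := one_le_prod_padicNorm hc0 hm hz
  have hprod' : (1 : ℝ) ≤ |(c : ℝ)| * ∏ p ∈ m.primeFactors, (padicNorm p c : ℝ) := by
    exact_mod_cast hprod
  have hC : ∀ σ : K →+* ℂ, ‖σ x‖ ≤ B := fun σ => hB (normAbs σ) (Or.inl ⟨σ, fun _ => rfl⟩)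
  have hP : ∀ p, (_ : Fact p.Prime) → p ∣ m → ∀ σ : K →+* PadicAlgCl p, ‖σ x‖ ≤ B :=
    fun p hp hpm σ =>
    hB (normAbs σ) (Or.inr ⟨p, hp, hpm, σ, fun _ => rfl⟩)
  have hcC : ∀ σ : K →+* ℂ, |(c : ℝ)| ≤ ‖σ x‖ * B ^ (n - 1) := by
    intro σ
    have := norm_coeff_zero_minpoly_le x hC σ
    rwa [← hc, ← Complex.ofReal_ratCast, Complex.norm_real, Real.norm_eq_abs] at this
  have hcP : ∀ p, (_ : Fact p.Prime) → p ∣ m → ∀ σ : K →+* PadicAlgCl p,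
      (padicNorm p c : ℝ) ≤ ‖σ x‖ * B ^ (n - 1) := by
    intro p hp hpm σ
    have := norm_coeff_zero_minpoly_le x (hP p hp hpm) σ
    rwa [← hc, norm_ratCast_padicAlgCl] at this
  have hpow : B * B ^ (n - 1) = B ^ n := by rw [← pow_succ', Nat.sub_add_cancel hn1]
  have hcC' : |(c : ℝ)| ≤ B ^ n := by
    obtain ⟨σ⟩ := exists_ringHom (K := K) ℂ
    rw [← hpow]
    exact (hcC σ).trans (mul_le_mul_of_nonneg_right (hC σ) (by positivity))
  have hcP' : ∀ p ∈ m.primeFactors, (padicNorm p c : ℝ) ≤ B ^ n := by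
    intro p hp
    have hp' : Fact p.Prime := ⟨Nat.prime_of_mem_primeFactors hp⟩
    have hpm := Nat.dvd_of_mem_primeFactors hp
    obtain ⟨σ⟩ := exists_ringHom (K := K) (PadicAlgCl p)
    rw [← hpow]
    exact (hcP p hp' hpm σ).trans (mul_le_mul_of_nonneg_right (hP p hp' hpm σ) (by positivity))
  have hnn : ∀ p, (0 : ℝ) ≤ padicNorm p c := fun p => by exact_mod_cast padicNorm.nonneg c
  have hv0 : 0 ≤ v x := v.nonneg x
  rcases hv with ⟨σ, hσ⟩ | ⟨p, hp, hpm, σ, hσ⟩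
  · have h1 : ∏ p ∈ m.primeFactors, (padicNorm p c : ℝ) ≤ (B ^ n) ^ m.primeFactors.card :=
      (Finset.prod_le_prod (fun p _ => hnn p) hcP').trans_eq (Finset.prod_const _)
    calc (1 : ℝ) ≤ _ := hprod'
      _ ≤ (v x * B ^ (n - 1)) * (B ^ n) ^ m.primeFactors.card := by
        rw [hσ]
        exact mul_le_mul (hcC σ) h1 (Finset.prod_nonneg fun p _ => hnn p) (by positivity)
      _ = B ^ (n - 1 + n * m.primeFactors.card) * v x := by rw [pow_add, pow_mul]; ring
      _ ≤ _ := by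
        refine mul_le_mul_of_nonneg_right (pow_le_pow_right₀ hB1 ?_) hv0
        have := Nat.mul_le_mul_right (m.primeFactors.card + 1) hD
        rw [Nat.mul_succ] at this
        omega
  · have hpm' : p ∈ m.primeFactors := Nat.mem_primeFactors.2 ⟨hp.1, hpm, hm⟩
    have h1 : ∏ p ∈ m.primeFactors.erase p, (padicNorm p c : ℝ) ≤
        (B ^ n) ^ (m.primeFactors.erase p).card :=
      (Finset.prod_le_prod (fun p _ => hnn p)
        fun q hq => hcP' q (Finset.mem_of_mem_erase hq)).trans_eq (Finset.prod_const _)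
    rw [← Finset.mul_prod_erase _ _ hpm'] at hprod'
    have hcard := Finset.card_erase_add_one hpm'
    calc (1 : ℝ) ≤ _ := hprod'
      _ ≤ B ^ n * ((v x * B ^ (n - 1)) * (B ^ n) ^ (m.primeFactors.erase p).card) := by
        rw [hσ]
        refine mul_le_mul hcC' (mul_le_mul (hcP p hp hpm σ) h1
          (Finset.prod_nonneg fun p _ => hnn p) (by positivity))
          (mul_nonneg (hnn _) (Finset.prod_nonneg fun p _ => hnn p)) (by positivity)
      _ = B ^ (n + (n - 1) + n * (m.primeFactors.erase p).card) * v x := by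
        rw [pow_add, pow_add, pow_mul]; ring
      _ ≤ _ := by
        refine mul_le_mul_of_nonneg_right (pow_le_pow_right₀ hB1 ?_) hv0
        rw [← hcard]
        have := Nat.mul_le_mul_right ((m.primeFactors.erase p).card + 1 + 1) hD
        rw [Nat.mul_succ, Nat.mul_succ] at this
        omega

/-- Northcott's theorem for `ℤ[1/m]`: the `p`-adic bounds bound the denominator. -/
theorem finite_rat_bounded {m : ℕ} (hm : m ≠ 0) (M : ℝ) :
    {c : ℚ | (∃ (j : ℕ) (z : ℤ), (m : ℚ) ^ j * c = z) ∧ |(c : ℝ)| ≤ M ∧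
      ∀ p ∈ m.primeFactors, (padicNorm p c : ℝ) ≤ M}.Finite := by
  obtain ⟨k, hk⟩ := pow_unbounded_of_one_lt M (one_lt_two)
  have hmk : (0 : ℚ) < (m : ℚ) ^ k := pow_pos (by exact_mod_cast Nat.pos_of_ne_zero hm) _
  obtain ⟨N, hN⟩ := exists_nat_ge ((m : ℝ) ^ k * M)
  refine ((Set.finite_Icc (-(N : ℤ)) N).image fun z : ℤ => (z : ℚ) / (m : ℚ) ^ k).subset ?_
  rintro c ⟨⟨j, z, hz⟩, hcM, hp⟩
  have hden : ((m : ℚ) ^ k * c).den = 1 := by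
    by_contra hne
    obtain ⟨p, hp1, hp2⟩ := Nat.exists_prime_and_dvd hne
    have : Fact p.Prime := ⟨hp1⟩
    set q := (m : ℚ) ^ k * c with hq
    have h1 : (m : ℚ) ^ j * q = ((m ^ k * z : ℤ) : ℚ) := by
      rw [hq]; push_cast; rw [← hz]; ring
    have h2 : q.den ∣ m ^ j := by
      have h3 : ((m : ℤ) ^ j * q.num : ℤ) = (m ^ k * z) * q.den := by
        have := q.num_div_den
        have hd : (q.den : ℚ) ≠ 0 := by exact_mod_cast q.den_ne_zero
        have h4 : q * q.den = q.num := Rat.mul_den_eq_num q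
        have : ((m : ℚ) ^ j * q.num) = (m ^ k * z) * q.den := by
          rw [← h4, ← mul_assoc, h1]; push_cast; ring
        exact_mod_cast this
      have h5 : (q.den : ℤ) ∣ (m : ℤ) ^ j * q.num := ⟨_, by rw [h3, mul_comm]⟩
      have h6 : IsCoprime (q.den : ℤ) q.num := by
        rw [Int.isCoprime_iff_gcd_eq_one]
        simpa [Int.gcd, Nat.Coprime] using q.reduced.symm
      exact_mod_cast h6.dvd_of_dvd_mul_right h5
    have hpm : p ∣ m := hp1.dvd_of_dvd_pow (hp2.trans h2)
    have hle : padicNorm p q ≤ 1 := by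
      have h3 := hp p (Nat.mem_primeFactors.2 ⟨hp1, hpm, hm⟩)
      have h4 : (padicNorm p (m : ℚ) : ℝ) ≤ 1 / 2 := by
        obtain ⟨r, rfl⟩ := hpm
        push_cast
        rw [padicNorm.mul, padicNorm.padicNorm_p hp1.one_lt]
        have h5 : (padicNorm p (r : ℚ) : ℝ) ≤ 1 := by exact_mod_cast padicNorm.of_nat r
        have h6 : (0 : ℝ) ≤ padicNorm p (r : ℚ) := by exact_mod_cast padicNorm.nonneg _
        have h7 : ((p : ℝ)⁻¹) ≤ 1 / 2 := by
          rw [one_div]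
          exact inv_anti₀ (by norm_num) (by exact_mod_cast hp1.two_le)
        push_cast
        calc (p : ℝ)⁻¹ * padicNorm p (r : ℚ) ≤ 1 / 2 * 1 :=
              mul_le_mul h7 h5 h6 (by norm_num)
          _ = 1 / 2 := by ring
      have h8 : (0 : ℝ) ≤ padicNorm p (m : ℚ) := by exact_mod_cast padicNorm.nonneg _
      have h9 : (padicNorm p q : ℝ) ≤ 1 := by
        have hpow : ∀ n : ℕ, padicNorm p ((m : ℚ) ^ n) = padicNorm p m ^ n := by
          intro n
          induction n with
          | zero => simp
          | succ n ih => rw [pow_succ, padicNorm.mul, ih, pow_succ]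
        rw [hq, padicNorm.mul, hpow]
        push_cast
        calc (padicNorm p (m : ℚ) : ℝ) ^ k * padicNorm p c ≤ (1 / 2) ^ k * 2 ^ k :=
              mul_le_mul (pow_le_pow_left₀ h8 h4 k) (h3.trans hk.le)
                (by exact_mod_cast padicNorm.nonneg _) (by positivity)
          _ = 1 := by rw [← mul_pow]; norm_num
      exact_mod_cast h9
    have hnum : padicNorm p (q.num : ℚ) = 1 := by
      rw [padicNorm.int_eq_one_iff]
      intro h
      have h3 := Nat.dvd_gcd (Int.natCast_dvd.1 h) hp2
      rw [Nat.Coprime.gcd_eq_one q.reduced] at h3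
      exact hp1.one_lt.ne' (Nat.dvd_one.1 h3)
    have hdn : padicNorm p (q.den : ℚ) < 1 := (padicNorm.nat_lt_one_iff _).2 hp2
    have h4 : q * q.den = q.num := Rat.mul_den_eq_num q
    rw [← h4, padicNorm.mul] at hnum
    have h5 : padicNorm p q * padicNorm p (q.den : ℚ) < 1 :=
      mul_lt_one_of_nonneg_of_lt_one_right hle (padicNorm.nonneg _) hdn
    exact absurd hnum h5.ne
  have hqn : (m : ℚ) ^ k * c = (((m : ℚ) ^ k * c).num : ℚ) := (Rat.coe_int_num_of_den_eq_one hden).symm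
  refine ⟨((m : ℚ) ^ k * c).num, ?_, ?_⟩
  · rw [Set.mem_Icc, ← abs_le]
    have h1 : |((((m : ℚ) ^ k * c).num : ℚ) : ℝ)| ≤ N := by
      rw [← hqn]
      push_cast
      rw [abs_mul, abs_of_nonneg (by positivity : (0 : ℝ) ≤ (m : ℝ) ^ k)]
      exact (mul_le_mul_of_nonneg_left hcM (by positivity)).trans hN
    exact_mod_cast h1
  · simp only [← hqn]
    field_simp

/-- Northcott's finiteness theorem for `m`-integers: bounded degree and bounded absolute values at
all places of `Places K m` leave only finitely many elements. -/
theorem northcott {K : Type*} [Field K] [Algebra ℚ K] [Algebra.IsAlgebraic ℚ K] {m : ℕ}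
    (hm : m ≠ 0) (D : ℕ) (C : ℝ) :
    {x : K | x ∈ SInt K m ∧ (minpoly ℚ x).natDegree ≤ D ∧ ∀ v ∈ Places K m, v x ≤ C}.Finite := by
  classical
  have hU := finite_rat_bounded hm (max C 1 ^ D * 2 ^ D)
  refine (Polynomial.bUnion_roots_finite (algebraMap ℚ K) D hU).subset ?_
  rintro x ⟨hx, hD, hC⟩
  have hint : IsIntegral ℚ x := Algebra.IsIntegral.isIntegral x
  have hbd : ∀ i, max C 1 ^ ((minpoly ℚ x).natDegree - i) * (minpoly ℚ x).natDegree.choose i ≤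
      max C 1 ^ D * 2 ^ D := by
    intro i
    refine mul_le_mul (pow_le_pow_right₀ (le_max_right _ _) (by omega)) ?_ (by positivity)
      (by positivity)
    have := (Nat.choose_le_two_pow (minpoly ℚ x).natDegree i).trans
      (Nat.pow_le_pow_right (by norm_num) hD)
    exact_mod_cast this
  simp only [Set.mem_iUnion]
  refine ⟨minpoly ℚ x, ⟨hD, fun i => ⟨SInt_coeff hm hx i, ?_, fun p hp => ?_⟩⟩, ?_⟩
  · have := norm_coeff_minpoly_le (L := ℂ) x (B := max C 1)
      (fun σ => (hC (normAbs σ) (Or.inl ⟨σ, fun _ => rfl⟩)).trans (le_max_left _ _)) i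
    rw [← Complex.ofReal_ratCast, Complex.norm_real, Real.norm_eq_abs] at this
    exact this.trans (hbd i)
  · have hp' : Fact p.Prime := ⟨Nat.prime_of_mem_primeFactors hp⟩
    have := norm_coeff_minpoly_le (L := PadicAlgCl p) x (B := max C 1)
      (fun σ => (hC (normAbs σ) (Or.inr ⟨p, hp', Nat.dvd_of_mem_primeFactors hp, σ,
        fun _ => rfl⟩)).trans (le_max_left _ _)) i
    rw [norm_ratCast_padicAlgCl] at this
    exact this.trans (hbd i)
  · rw [Finset.mem_coe, Multiset.mem_toFinset, Polynomial.mem_roots']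
    refine ⟨Polynomial.map_ne_zero (minpoly.ne_zero hint), ?_⟩
    rw [Polynomial.IsRoot, Polynomial.eval_map_algebraMap, minpoly.aeval]

theorem finite_places_values {K : Type*} [Field K] [Algebra ℚ K] [Algebra.IsAlgebraic ℚ K] {m : ℕ}
    (hm : m ≠ 0) (x : K) : ((fun v : AbsoluteValue K ℝ => v x) '' Places K m).Finite := by
  classical
  let f : ℕ → Set ℝ := fun p => if hp : p.Prime then
    haveI : Fact p.Prime := ⟨hp⟩
    (fun z : PadicAlgCl p => ‖z‖) '' ((minpoly ℚ x).rootSet (PadicAlgCl p)) else ∅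
  have hroot : ∀ (L : Type) [NormedField L] [CharZero L] [IsAlgClosed L] (σ : K →+* L),
      σ x ∈ (minpoly ℚ x).rootSet L := by
    intro L _ _ _ σ
    rw [← Algebra.IsAlgebraic.range_eval_eq_rootSet_minpoly L x]
    exact ⟨σ.toRatAlgHom, rfl⟩
  have hfin : ((fun z : ℂ => ‖z‖) '' ((minpoly ℚ x).rootSet ℂ) ∪ ⋃ p ∈ m.primeFactors, f p).Finite := by
    refine ((Polynomial.rootSet_finite _ _).image _).union
      (Set.Finite.biUnion m.primeFactors.finite_toSet fun p hp => ?_)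
    have hp' := Nat.prime_of_mem_primeFactors hp
    simp only [f, dif_pos hp']
    have : Fact p.Prime := ⟨hp'⟩
    exact (Polynomial.rootSet_finite _ _).image _
  refine hfin.subset ?_
  rintro _ ⟨v, ⟨σ, hσ⟩ | ⟨p, hp, hpm, σ, hσ⟩, rfl⟩
  · left
    exact ⟨σ x, hroot ℂ σ, (hσ x).symm⟩
  · right
    simp only [Set.mem_iUnion]
    refine ⟨p, Nat.mem_primeFactors.2 ⟨hp.1, hpm, hm⟩, ?_⟩
    simp only [f, dif_pos hp.1]
    exact ⟨σ x, hroot _ σ, (hσ x).symm⟩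

theorem places_nonempty (K : Type*) [Field K] [Algebra ℚ K] [Algebra.IsAlgebraic ℚ K] (m : ℕ) :
    (Places K m).Nonempty := by
  obtain ⟨σ⟩ := exists_ringHom (K := K) ℂ
  exact ⟨normAbs σ, Or.inl ⟨σ, fun _ => rfl⟩⟩

/-- The ring of `m`-integers is integrally closed. -/
theorem mem_SInt_of_root {K : Type*} [Field K] {m : ℕ} (hm : (m : K) ≠ 0) {p : Polynomial K}
    (hp : p.Monic) (hc : ∀ i, p.coeff i ∈ SInt K m) {x : K} (hx : p.eval x = 0) : x ∈ SInt K m := by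
  choose k hk using hc
  let N := ∑ i ∈ Finset.range (p.natDegree + 1), k i
  have hpow : ∀ j : ℕ, IsIntegral ℤ ((m : K) ^ j) := fun j => (isIntegral_natCast m).pow j
  have hN : ∀ i ≤ p.natDegree, IsIntegral ℤ ((m : K) ^ N * p.coeff i) := by
    intro i hi
    have : k i ≤ N := Finset.single_le_sum (f := k) (fun _ _ => Nat.zero_le _)
      (Finset.mem_range.2 (by omega))
    obtain ⟨l, hl⟩ := Nat.exists_eq_add_of_le this
    rw [hl, pow_add, mul_comm ((m : K) ^ k i), mul_assoc]
    exact (hpow l).mul (hk i)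
  refine ⟨N, ?_⟩
  let q := p.scaleRoots ((m : K) ^ N)
  have hq : q.Monic := (Polynomial.monic_scaleRoots_iff _).2 hp
  have hq0 : q.eval ((m : K) ^ N * x) = 0 := by
    have := Polynomial.scaleRoots_aeval_eq_zero (r := (m : K) ^ N) (a := x) (p := p)
      (by rwa [Polynomial.coe_aeval_eq_eval])
    rwa [Polynomial.coe_aeval_eq_eval] at this
  have hqc : ∀ i, q.coeff i ∈ integralClosure ℤ K := by
    intro i
    show IsIntegral ℤ _
    rw [Polynomial.coeff_scaleRoots]
    rcases lt_trichotomy i p.natDegree with h | rfl | h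
    · obtain ⟨l, hl⟩ := Nat.exists_eq_add_of_lt h
      have : p.natDegree - i = l + 1 := by omega
      rw [this, pow_succ, mul_comm, mul_assoc]
      exact ((hpow N).pow l).mul (hN i h.le)
    · rw [Polynomial.Monic.coeff_natDegree hp]
      simpa using isIntegral_one
    · rw [Polynomial.coeff_eq_zero_of_natDegree_lt h, zero_mul]; exact isIntegral_zero
  have hsub : (↑q.coeffs : Set K) ⊆ (integralClosure ℤ K).toSubring := by
    intro y hy
    obtain ⟨i, _, rfl⟩ := Polynomial.mem_coeffs_iff.1 hy
    exact hqc i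
  have h1 : IsIntegral (integralClosure ℤ K) ((m : K) ^ N * x) := by
    refine ⟨q.toSubring _ hsub, (Polynomial.monic_toSubring _ _ _).2 hq, ?_⟩
    have : (q.toSubring _ hsub).map (algebraMap (integralClosure ℤ K) K) = q :=
      Polynomial.map_toSubring q (integralClosure ℤ K).toSubring hsub
    rw [← Polynomial.eval_map, this, hq0]
  exact isIntegral_trans _ h1

/-- Finitely many algebraic numbers are `m`-integers for a common `m`. -/
theorem exists_mem_SInt {K : Type*} [Field K] [Algebra ℚ K] [Algebra.IsAlgebraic ℚ K]
    (s : Finset K) : ∃ m : ℕ, m ≠ 0 ∧ ∀ x ∈ s, x ∈ SInt K m := by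
  have : CharZero K := algebraRat.charZero K
  classical
  induction s using Finset.induction_on with
  | empty => exact ⟨1, one_ne_zero, by simp⟩
  | insert a s _ ih =>
    obtain ⟨m, hm, h⟩ := ih
    have ha : IsAlgebraic ℤ a :=
      (IsFractionRing.isAlgebraic_iff ℤ ℚ K).2 (Algebra.IsAlgebraic.isAlgebraic a)
    obtain ⟨y, hy, hy'⟩ := ha.exists_integral_multiple
    refine ⟨m * y.natAbs, mul_ne_zero hm (Int.natAbs_ne_zero.2 hy), fun x hx => ?_⟩
    rcases Finset.mem_insert.1 hx with rfl | hx
    · refine SInt_mono (Dvd.intro_left m rfl) ⟨1, ?_⟩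
      rw [zsmul_eq_mul] at hy'
      rcases Int.natAbs_eq y with h | h
      · rw [h] at hy'; simpa using hy'
      · rw [h] at hy'; simpa using hy'.neg
    · exact SInt_mono (Dvd.intro _ rfl) (h x hx)

end Arithmetic
end EMO

/-! ### Tame families -/

namespace EMO
/-- The degree of an element of an intermediate field is at most the degree of the field. -/
theorem natDegree_minpoly_le_finrank {k L : Type*} [Field k] [Field L] [Algebra k L]
    (E : IntermediateField k L) (hE : FiniteDimensional k E) {b : L} (hb : b ∈ E) :
    (minpoly k b).natDegree ≤ Module.finrank k E := by
  have := minpoly.natDegree_le (A := k) (⟨b, hb⟩ : E)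
  rwa [IntermediateField.minpoly_eq] at this

section TameFamilies
variable {K : Type*} [Field K] [Algebra ℚ K] [Algebra.IsAlgebraic ℚ K] {m : ℕ}
  {I : Type*} {R : I → ℝ}

/-- A quotient of two `m`-integers lying in a common number field of degree at most `C` whose
absolute values at all places of `Places K m` are at most `r ^ C`. -/
def IsTame (m : ℕ) (r : ℝ) (C : ℕ) (x : K) : Prop :=
  ∃ a ∈ SInt K m, ∃ b ∈ SInt K m, b ≠ 0 ∧ x = a / b ∧
    (∀ v ∈ Places K m, v a ≤ r ^ C ∧ v b ≤ r ^ C) ∧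
    ∃ E : IntermediateField ℚ K, FiniteDimensional ℚ E ∧ Module.finrank ℚ E ≤ C ∧ a ∈ E ∧ b ∈ E

omit [Algebra.IsAlgebraic ℚ K] in
theorem IsTame.mono {r : ℝ} (hr : 1 ≤ r) {C C' : ℕ} (h : C ≤ C') {x : K} (hx : IsTame m r C x) :
    IsTame m r C' x := by
  obtain ⟨a, ha, b, hb, hb0, hx, hv, E, hE, hE', haE, hbE⟩ := hx
  exact ⟨a, ha, b, hb, hb0, hx, fun v hvP => ⟨(hv v hvP).1.trans (pow_le_pow_right₀ hr h),
    (hv v hvP).2.trans (pow_le_pow_right₀ hr h)⟩, E, hE, hE'.trans h, haE, hbE⟩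

/-- A family of algebraic numbers which is tame, with a uniform exponent, with respect to a family
`R` of real numbers. -/
def Tame (m : ℕ) (R : I → ℝ) (f : I → K) : Prop := ∃ C : ℕ, ∀ i, IsTame m (R i) C (f i)

omit [Algebra.IsAlgebraic ℚ K] in
/-- A family of `m`-integers of bounded degree, bounded at all places by a power of `R`, is tame. -/
theorem Tame.of_int {f : I → K} {D C : ℕ} (hR : ∀ i, 2 ≤ R i) (hf : ∀ i, f i ∈ SInt K m)
    (hE : ∀ i, ∃ E : IntermediateField ℚ K, FiniteDimensional ℚ E ∧ Module.finrank ℚ E ≤ D ∧ f i ∈ E)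
    (hv : ∀ i, ∀ v ∈ Places K m, v (f i) ≤ R i ^ C) : Tame m R f := by
  refine ⟨max C D, fun i => ⟨f i, hf i, 1, one_mem _, one_ne_zero, by simp, fun v hvP => ?_, ?_⟩⟩
  · have h1 : 1 ≤ R i := by linarith [hR i]
    refine ⟨(hv i v hvP).trans (pow_le_pow_right₀ h1 (le_max_left _ _)), ?_⟩
    rw [map_one]; exact one_le_pow₀ h1
  · obtain ⟨E, h1, h2, h3⟩ := hE i
    exact ⟨E, h1, h2.trans (le_max_right _ _), h3, one_mem _⟩

omit [Algebra.IsAlgebraic ℚ K] in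
theorem Tame.one (hR : ∀ i, 2 ≤ R i) : Tame m R (fun _ => (1 : K)) :=
  Tame.of_int (D := 1) (C := 0) hR (fun _ => one_mem _)
    (fun _ => ⟨⊥, inferInstance, by simp, one_mem _⟩) (fun _ v _ => by simp)

omit [Algebra.IsAlgebraic ℚ K] in
theorem Tame.zero (hR : ∀ i, 2 ≤ R i) : Tame m R (fun _ => (0 : K)) :=
  Tame.of_int (D := 1) (C := 0) hR (fun _ => zero_mem _)
    (fun _ => ⟨⊥, inferInstance, by simp, zero_mem _⟩) (fun _ v _ => by simp)

omit [Algebra.IsAlgebraic ℚ K] in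
theorem Tame.neg {f : I → K} (hf : Tame m R f) : Tame m R (fun i => -f i) := by
  obtain ⟨C, h⟩ := hf
  refine ⟨C, fun i => ?_⟩
  beta_reduce
  obtain ⟨a, ha, b, hb, hb0, hx, hv, E, hE, hE', haE, hbE⟩ := h i
  exact ⟨-a, neg_mem ha, b, hb, hb0, by rw [hx, neg_div], fun v hvP => by
    rw [map_neg_eq_map]; exact hv v hvP, E, hE, hE', neg_mem haE, hbE⟩

omit [Algebra.IsAlgebraic ℚ K] in
theorem Tame.mul (hR : ∀ i, 2 ≤ R i) {f g : I → K} (hf : Tame m R f) (hg : Tame m R g) :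
    Tame m R (fun i => f i * g i) := by
  obtain ⟨C, h⟩ := hf
  obtain ⟨C', h'⟩ := hg
  refine ⟨C + C' + C * C', fun i => ?_⟩
  beta_reduce
  have h1 : 1 ≤ R i := by linarith [hR i]
  obtain ⟨a, ha, b, hb, hb0, hx, hv, E, hE, hE', haE, hbE⟩ := h i
  obtain ⟨a', ha', b', hb', hb0', hx', hv', F, hF, hF', haF, hbF⟩ := h' i
  have hp : R i ^ C * R i ^ C' ≤ R i ^ (C + C' + C * C') := by
    rw [← pow_add]; exact pow_le_pow_right₀ h1 (by omega)
  refine ⟨a * a', mul_mem ha ha', b * b', mul_mem hb hb', mul_ne_zero hb0 hb0', ?_,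
    fun v hvP => ⟨?_, ?_⟩, E ⊔ F, inferInstance, ?_, ?_, ?_⟩
  · rw [hx, hx', div_mul_div_comm]
  · rw [map_mul]
    exact (mul_le_mul (hv v hvP).1 (hv' v hvP).1 (v.nonneg _) (by positivity)).trans hp
  · rw [map_mul]
    exact (mul_le_mul (hv v hvP).2 (hv' v hvP).2 (v.nonneg _) (by positivity)).trans hp
  · exact (IntermediateField.finrank_sup_le E F).trans ((Nat.mul_le_mul hE' hF').trans (by omega))
  · exact mul_mem ((le_sup_left : E ≤ E ⊔ F) haE) ((le_sup_right : F ≤ E ⊔ F) haF)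
  · exact mul_mem ((le_sup_left : E ≤ E ⊔ F) hbE) ((le_sup_right : F ≤ E ⊔ F) hbF)

omit [Algebra.IsAlgebraic ℚ K] in
theorem Tame.add (hR : ∀ i, 2 ≤ R i) {f g : I → K} (hf : Tame m R f) (hg : Tame m R g) :
    Tame m R (fun i => f i + g i) := by
  obtain ⟨C, h⟩ := hf
  obtain ⟨C', h'⟩ := hg
  refine ⟨C + C' + C * C' + 1, fun i => ?_⟩
  beta_reduce
  have h1 : 1 ≤ R i := by linarith [hR i]
  obtain ⟨a, ha, b, hb, hb0, hx, hv, E, hE, hE', haE, hbE⟩ := h i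
  obtain ⟨a', ha', b', hb', hb0', hx', hv', F, hF, hF', haF, hbF⟩ := h' i
  have hp : R i ^ C * R i ^ C' ≤ R i ^ (C + C' + C * C') := by
    rw [← pow_add]; exact pow_le_pow_right₀ h1 (by omega)
  have hp' : R i ^ C * R i ^ C' + R i ^ C * R i ^ C' ≤ R i ^ (C + C' + C * C' + 1) := by
    rw [pow_succ]
    have : 0 ≤ R i ^ (C + C' + C * C') := by positivity
    nlinarith [hR i]
  have hle : ∀ {x y : K} {v : AbsoluteValue K ℝ}, v x ≤ R i ^ C → v y ≤ R i ^ C' →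
      v x * v y ≤ R i ^ C * R i ^ C' := fun h2 h3 =>
    mul_le_mul h2 h3 (AbsoluteValue.nonneg _ _) (by positivity)
  have haE' := (le_sup_left : E ≤ E ⊔ F) haE
  have hbE' := (le_sup_left : E ≤ E ⊔ F) hbE
  have haF' := (le_sup_right : F ≤ E ⊔ F) haF
  have hbF' := (le_sup_right : F ≤ E ⊔ F) hbF
  refine ⟨a * b' + b * a', add_mem (mul_mem ha hb') (mul_mem hb ha'), b * b', mul_mem hb hb',
    mul_ne_zero hb0 hb0', ?_, fun v hvP => ⟨?_, ?_⟩, E ⊔ F, inferInstance, ?_, ?_, ?_⟩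
  · rw [hx, hx', div_add_div _ _ hb0 hb0']
  · refine (v.add_le _ _).trans ?_
    rw [map_mul, map_mul]
    exact (add_le_add (hle (hv v hvP).1 (hv' v hvP).2) (hle (hv v hvP).2 (hv' v hvP).1)).trans hp'
  · rw [map_mul]
    exact ((hle (hv v hvP).2 (hv' v hvP).2).trans hp).trans (pow_le_pow_right₀ h1 (by omega))
  · exact (IntermediateField.finrank_sup_le E F).trans ((Nat.mul_le_mul hE' hF').trans (by omega))
  · exact add_mem (mul_mem haE' hbF') (mul_mem hbE' haF')
  · exact mul_mem hbE' hbF'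

omit [Algebra.IsAlgebraic ℚ K] in
theorem Tame.inv {f : I → K} (hf : Tame m R f) : Tame m R (fun i => (f i)⁻¹) := by
  obtain ⟨C, h⟩ := hf
  refine ⟨C, fun i => ?_⟩
  beta_reduce
  by_cases h0 : f i = 0
  · rw [h0, inv_zero, ← h0]; exact h i
  obtain ⟨a, ha, b, hb, hb0, hx, hv, E, hE, hE', haE, hbE⟩ := h i
  have ha0 : a ≠ 0 := by rintro rfl; simp [hx] at h0
  exact ⟨b, hb, a, ha, ha0, by rw [hx, inv_div], fun v hvP => (hv v hvP).symm, E, hE, hE', hbE, haE⟩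

omit [Algebra.IsAlgebraic ℚ K] in
theorem Tame.ite (hR : ∀ i, 2 ≤ R i) {f g : I → K} (hf : Tame m R f) (hg : Tame m R g)
    (p : I → Prop) [DecidablePred p] : Tame m R (fun i => if p i then f i else g i) := by
  obtain ⟨C, h⟩ := hf
  obtain ⟨C', h'⟩ := hg
  refine ⟨max C C', fun i => ?_⟩
  beta_reduce
  have h1 : 1 ≤ R i := by linarith [hR i]
  split_ifs
  · exact (h i).mono h1 (le_max_left _ _)
  · exact (h' i).mono h1 (le_max_right _ _)

omit [Algebra.IsAlgebraic ℚ K] in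
theorem Tame.sum (hR : ∀ i, 2 ≤ R i) {ι : Type*} (s : Finset ι) {f : ι → I → K}
    (hf : ∀ j, Tame m R (f j)) : Tame m R (fun i => ∑ j ∈ s, f j i) := by
  classical
  induction s using Finset.induction_on with
  | empty => simpa using Tame.zero hR
  | insert a s ha ih => simp only [Finset.sum_insert ha]; exact (hf a).add hR ih

omit [Algebra.IsAlgebraic ℚ K] in
theorem Tame.prod (hR : ∀ i, 2 ≤ R i) {ι : Type*} (s : Finset ι) {f : ι → I → K}
    (hf : ∀ j, Tame m R (f j)) : Tame m R (fun i => ∏ j ∈ s, f j i) := by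
  classical
  induction s using Finset.induction_on with
  | empty => simpa using Tame.one hR
  | insert a s ha ih => simp only [Finset.prod_insert ha]; exact (hf a).mul hR ih

/-- Tame families are bounded by a uniform power of `R` at all places. -/
theorem Tame.bound (hm : m ≠ 0) (hR : ∀ i, 2 ≤ R i) {f : I → K} (hf : Tame m R f) :
    ∃ C : ℕ, ∀ i, ∀ v ∈ Places K m, v (f i) ≤ R i ^ C := by
  obtain ⟨C, h⟩ := hf
  obtain ⟨k, hk⟩ := liouville (K := K) hm C
  refine ⟨C + C * k, fun i v hvP => ?_⟩
  have h1 : 1 ≤ R i := by linarith [hR i]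
  obtain ⟨a, ha, b, hb, hb0, hx, hv, E, hE, hE', haE, hbE⟩ := h i
  have hdeg : (minpoly ℚ b).natDegree ≤ C := (natDegree_minpoly_le_finrank E hE hbE).trans hE'
  have := hk b hb hb0 hdeg (R i ^ C) (one_le_pow₀ h1) (fun w hw => (hv w hw).2) v hvP
  have hb' : 0 < v b := v.pos hb0
  rw [hx, map_div₀, div_le_iff₀ hb', pow_add, pow_mul, mul_assoc]
  exact (hv v hvP).1.trans (le_mul_of_one_le_right (by positivity) this)

/-- The form of Liouville's inequality used for tame families; it is the upper bound for the inverse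
family. -/
theorem Tame.lower_bound (hm : m ≠ 0) (hR : ∀ i, 2 ≤ R i) {f : I → K} (hf : Tame m R f) :
    ∃ C : ℕ, ∀ i, f i ≠ 0 → ∀ v ∈ Places K m, 1 ≤ R i ^ C * v (f i) := by
  obtain ⟨C, h⟩ := hf.inv.bound hm hR
  refine ⟨C, fun i h0 v hv => ?_⟩
  have := h i v hv
  rw [map_inv₀] at this
  exact (inv_le_iff_one_le_mul₀ (v.pos h0)).1 this

/-- A family of matrices with tame entries. -/
def TameM {n n' : Type*} (m : ℕ) (R : I → ℝ) (A : I → Matrix n n' K) : Prop :=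
  ∀ a b, Tame m R (fun i => A i a b)

section Matrices
variable {n : Type*} [Fintype n] [DecidableEq n]

omit [Algebra.IsAlgebraic ℚ K] in
theorem Tame.det (hR : ∀ i, 2 ≤ R i) {A : I → Matrix n n K} (hA : TameM m R A) :
    Tame m R (fun i => (A i).det) := by
  simp only [Matrix.det_apply']
  refine Tame.sum hR _ fun σ => Tame.mul hR ?_ (Tame.prod hR _ fun j => hA _ _)
  rcases Int.units_eq_one_or (Equiv.Perm.sign σ) with h | h
  · rw [h]; simpa using Tame.one hR
  · rw [h]; simpa using (Tame.one hR).neg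

omit [Algebra.IsAlgebraic ℚ K] [Fintype n] in
theorem TameM.one (hR : ∀ i, 2 ≤ R i) : TameM m R (fun _ => (1 : Matrix n n K)) := by
  intro a b
  by_cases h : a = b
  · subst h; simpa using Tame.one hR
  · simpa [Matrix.one_apply_ne h] using Tame.zero hR

omit [Algebra.IsAlgebraic ℚ K] [DecidableEq n] in
theorem TameM.mul (hR : ∀ i, 2 ≤ R i) {A B : I → Matrix n n K} (hA : TameM m R A)
    (hB : TameM m R B) : TameM m R (fun i => A i * B i) := by
  intro a b
  simp only [Matrix.mul_apply]
  exact Tame.sum hR _ fun j => (hA _ _).mul hR (hB _ _)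

omit [Algebra.IsAlgebraic ℚ K] [DecidableEq n] [Fintype n] in
theorem TameM.add (hR : ∀ i, 2 ≤ R i) {A B : I → Matrix n n K} (hA : TameM m R A)
    (hB : TameM m R B) : TameM m R (fun i => A i + B i) := fun a b => (hA a b).add hR (hB a b)

omit [Algebra.IsAlgebraic ℚ K] [DecidableEq n] [Fintype n] in
theorem TameM.sub (hR : ∀ i, 2 ≤ R i) {A B : I → Matrix n n K} (hA : TameM m R A)
    (hB : TameM m R B) : TameM m R (fun i => A i - B i) := by
  intro a b
  simp only [Matrix.sub_apply, sub_eq_add_neg]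
  exact (hA a b).add hR (hB a b).neg

omit [Algebra.IsAlgebraic ℚ K] [DecidableEq n] [Fintype n] in
theorem TameM.smul (hR : ∀ i, 2 ≤ R i) {f : I → K} {A : I → Matrix n n K} (hf : Tame m R f)
    (hA : TameM m R A) : TameM m R (fun i => f i • A i) := fun a b => hf.mul hR (hA a b)

omit [Algebra.IsAlgebraic ℚ K] in
theorem TameM.inv (hR : ∀ i, 2 ≤ R i) {A : I → Matrix n n K} (hA : TameM m R A) :
    TameM m R (fun i => (A i)⁻¹) := by
  simp only [Matrix.inv_def, Ring.inverse_eq_inv']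
  refine TameM.smul hR (Tame.det hR hA).inv fun a b => ?_
  simp only [Matrix.adjugate_apply]
  refine Tame.det hR fun c e => ?_
  by_cases h : c = b
  · subst h
    simp only [Matrix.updateRow_self]
    by_cases h' : e = a
    · subst h'; simpa using Tame.one hR
    · simpa [Pi.single_eq_of_ne h'] using Tame.zero hR
  · simp only [Matrix.updateRow_ne h]; exact hA c e

omit [Algebra.IsAlgebraic ℚ K] in
theorem TameM.listProd (hR : ∀ i, 2 ≤ R i) {κ : Type*} (l : List κ) {A : κ → I → Matrix n n K}
    (hA : ∀ j, TameM m R (A j)) : TameM m R (fun i => (l.map fun j => A j i).prod) := by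
  induction l with
  | nil => simpa using TameM.one hR
  | cons a l ih => simp only [List.map_cons, List.prod_cons]; exact (hA a).mul hR ih

end Matrices
end TameFamilies
end EMO

/-! ### Ping-pong in a normed algebra -/

namespace EMO
section PingPong
variable {𝕜 A : Type*} [NormedField 𝕜] [NormedRing A] [NormedAlgebra 𝕜 A]

open Polynomial in
/-- Growth of `g ^ m * y` when `y` is killed by a product of factors `g - lam k` with `lam k` of
absolute value at most `r`. -/
theorem power_bound {ι : Type*} (s : Finset ι) (lam : ι → 𝕜) {r B : ℝ} (hr : 0 < r)
    (g : A) (hl : ∀ k ∈ s, ‖lam k‖ ≤ r) (hB : ∀ k ∈ s, ‖g - algebraMap 𝕜 A (lam k)‖ ≤ B)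
    (hB0 : 0 ≤ B) (y : A)
    (h0 : aeval g (∏ k ∈ s, (X - C (lam k))) * y = 0) (m : ℕ) :
    ‖g ^ m * y‖ ≤ (2 * r) ^ m * (1 + B / r) ^ s.card * ‖y‖ := by
  classical
  induction s using Finset.induction_on generalizing y m with
  | empty =>
    have : y = 0 := by simpa using h0
    simp [this]
  | insert a s ha ih =>
    have hQ : 1 ≤ 1 + B / r := by
      have : 0 ≤ B / r := by positivity
      linarith
    set y1 := (g - algebraMap 𝕜 A (lam a)) * y with hy1
    have hk := ih (fun k hk => hl k (Finset.mem_insert_of_mem hk))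
      (fun k hk => hB k (Finset.mem_insert_of_mem hk)) y1 (by
        rw [Finset.prod_insert ha, mul_comm, map_mul] at h0
        simpa [hy1, mul_assoc] using h0)
    have hy1n : ‖y1‖ ≤ B * ‖y‖ := (norm_mul_le _ _).trans
      (mul_le_mul_of_nonneg_right (hB a (Finset.mem_insert_self _ _)) (norm_nonneg _))
    rw [Finset.card_insert_of_notMem ha]
    induction m with
    | zero =>
      rw [pow_zero, one_mul, pow_zero, one_mul]
      exact le_mul_of_one_le_left (norm_nonneg _) (one_le_pow₀ hQ)
    | succ m ihm =>
      have he : g ^ (m + 1) * y = lam a • (g ^ m * y) + g ^ m * y1 := by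
        rw [hy1, pow_succ, mul_assoc, ← mul_smul_comm, ← mul_add, sub_mul, Algebra.smul_def,
          add_sub_cancel]
      rw [he]
      have h1 : ‖lam a • (g ^ m * y)‖ ≤ r * ((2 * r) ^ m * (1 + B / r) ^ (s.card + 1) * ‖y‖) := by
        rw [norm_smul]
        exact mul_le_mul (hl a (Finset.mem_insert_self _ _)) ihm (norm_nonneg _) hr.le
      have h2 : ‖g ^ m * y1‖ ≤ (2 * r) ^ m * (1 + B / r) ^ s.card * (B * ‖y‖) :=
        (hk m).trans (by gcongr)
      refine (norm_add_le _ _).trans ((add_le_add h1 h2).trans ?_)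
      have h3 : r * ((2 * r) ^ m * (1 + B / r) ^ (s.card + 1) * ‖y‖) +
          (2 * r) ^ m * (1 + B / r) ^ s.card * (B * ‖y‖) =
          (2 * r) ^ m * (1 + B / r) ^ s.card * ‖y‖ * r * ((1 + B / r) + B / r) := by
        have hb : r * (B / r) = B := by field_simp
        linear_combination (-((2 * r) ^ m * (1 + B / r) ^ s.card * ‖y‖)) * hb
      rw [h3, pow_succ (2 * r) m, pow_succ (1 + B / r)]
      have h4 : 0 ≤ (2 * r) ^ m * (1 + B / r) ^ s.card * ‖y‖ * r := by positivity
      nlinarith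

/-- The ping-pong argument. The element `g` contracts towards the image of the idempotent `π`, and
`b` moves the image of `π` into general position; then `g` and `b * g` play ping-pong on cones
around the image of `π`. -/
theorem ping_pong [FiniteDimensional 𝕜 A] {π g g' b z' : A} (hπ : π * π = π) (hπ0 : π ≠ 0)
    (hc : g * π = π * g) (hgg' : g * g' = 1) (hg'g : g' * g = 1)
    (hz : z' * (π * b * π + 1 - π) = 1) {ρ κ ε : ℝ}
    (hε : ‖g * (1 - π)‖ * ‖g' * π‖ ≤ ε) (hε0 : 0 ≤ ε) (hρ1 : 1 ≤ ρ)
    (hρ : 4 * ‖(1 - π) * b‖ * ‖z'‖ ≤ ρ) (hκ : ε * ρ = κ) (hκ1 : κ ≤ 1)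
    (hκ2 : κ * (‖π * b‖ * ‖z'‖) ≤ 1 / 2)
    (hδ : κ * (‖(1 - π) * b‖ * ‖π‖ + 2 * (‖π * b‖ * ‖π‖)) < ‖(1 - π) * b * π‖) :
    ∀ u ∈ Submonoid.closure {g, b * g}, ∀ u' ∈ Submonoid.closure {g, b * g}, ∀ c : 𝕜,
      g * u ≠ c • (b * g * u') := by
  set o : A := 1 - π with ho
  have hoo : o * o = o := by
    rw [ho, sub_mul, one_mul, mul_sub, mul_one, hπ, sub_self, sub_zero]
  have hoπ : o * π = 0 := by rw [ho, sub_mul, hπ, one_mul, sub_self]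
  have hco : g * o = o * g := by rw [ho, mul_sub, sub_mul, hc, one_mul, mul_one]
  have hcg' : g' * π = π * g' := by
    calc g' * π = g' * π * (g * g') := by rw [hgg', mul_one]
      _ = g' * (g * π) * g' := by rw [hc]; noncomm_ring
      _ = π * g' := by rw [← mul_assoc, hg'g, one_mul]
  have hκ0 : 0 ≤ κ := by rw [← hκ]; positivity
  have hsum : ∀ y : A, y = π * y + o * y := fun y => by rw [ho]; noncomm_ring
  -- `g` maps the wide cone into the narrow one
  have hg : ∀ y : A, ‖o * y‖ ≤ ρ * ‖π * y‖ →
      ‖o * (g * y)‖ ≤ κ * ‖π * (g * y)‖ ∧ (π * y ≠ 0 → π * (g * y) ≠ 0) := by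
    intro y hy
    have e1 : π * y = (g' * π) * (π * (g * y)) := by
      calc π * y = g' * g * (π * π * y) := by rw [hg'g, hπ, one_mul]
        _ = g' * (g * π) * (π * y) := by simp only [mul_assoc]
        _ = (g' * π) * (π * (g * y)) := by
            rw [hc]
            simp only [mul_assoc]
            rw [← mul_assoc g π y, hc, mul_assoc]
    refine ⟨?_, fun h h' => h (by rw [e1, h', mul_zero])⟩
    have e2 : o * (g * y) = (g * o) * (o * y) := by
      rw [mul_assoc, ← mul_assoc o o, hoo, ← mul_assoc, ← hco, mul_assoc]
    have h1 : ‖π * y‖ ≤ ‖g' * π‖ * ‖π * (g * y)‖ := by rw [e1]; exact norm_mul_le _ _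
    calc ‖o * (g * y)‖ ≤ ‖g * o‖ * ‖o * y‖ := by rw [e2]; exact norm_mul_le _ _
      _ ≤ ‖g * o‖ * (ρ * (‖g' * π‖ * ‖π * (g * y)‖)) := by gcongr; exact hy.trans (by gcongr)
      _ = (‖g * o‖ * ‖g' * π‖) * ρ * ‖π * (g * y)‖ := by ring
      _ ≤ κ * ‖π * (g * y)‖ := by rw [← hκ]; gcongr
  -- `b` maps the narrow cone into the wide one
  have hb : ∀ y : A, ‖o * y‖ ≤ κ * ‖π * y‖ →
      ‖o * (b * y)‖ ≤ ρ * ‖π * (b * y)‖ ∧ (π * y ≠ 0 → π * (b * y) ≠ 0) := by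
    intro y hy
    have e1 : π * y = z' * (π * b * (π * y)) := by
      have : (π * b * π + 1 - π) * (π * y) = π * b * (π * y) := by
        rw [add_sub_assoc, ← ho, add_mul, ← mul_assoc o, hoπ, zero_mul, add_zero,
          mul_assoc (π * b), ← mul_assoc π π, hπ]
      rw [← this, ← mul_assoc, hz, one_mul]
    have h1 : ‖π * y‖ ≤ ‖z'‖ * ‖π * b * (π * y)‖ := by
      conv_lhs => rw [e1]
      exact norm_mul_le _ _
    have e2 : π * b * (π * y) = π * (b * y) - π * b * (o * y) := by
      conv_rhs => enter [1]; rw [hsum y]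
      noncomm_ring
    have h2 : ‖π * b * (o * y)‖ ≤ 1 / 2 * ‖π * b * (π * y)‖ := by
      calc ‖π * b * (o * y)‖ ≤ ‖π * b‖ * (κ * (‖z'‖ * ‖π * b * (π * y)‖)) :=
            (norm_mul_le _ _).trans (by gcongr; exact hy.trans (by gcongr))
        _ = κ * (‖π * b‖ * ‖z'‖) * ‖π * b * (π * y)‖ := by ring
        _ ≤ _ := by gcongr
    have h3 : ‖π * b * (π * y)‖ ≤ ‖π * (b * y)‖ + ‖π * b * (o * y)‖ := by
      conv_lhs => rw [e2]
      exact norm_sub_le _ _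
    have h4 : ‖π * y‖ ≤ 2 * ‖z'‖ * ‖π * (b * y)‖ := by
      have : ‖π * b * (π * y)‖ ≤ 2 * ‖π * (b * y)‖ := by linarith
      calc _ ≤ _ := h1
        _ ≤ ‖z'‖ * (2 * ‖π * (b * y)‖) := by gcongr
        _ = _ := by ring
    refine ⟨?_, fun h h' => h ?_⟩
    · have h5 : ‖y‖ ≤ 2 * ‖π * y‖ := by
        calc ‖y‖ ≤ ‖π * y‖ + ‖o * y‖ := by conv_lhs => rw [hsum y]
                                           exact norm_add_le _ _
          _ ≤ ‖π * y‖ + 1 * ‖π * y‖ := by gcongr; exact hy.trans (by gcongr)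
          _ = _ := by ring
      calc ‖o * (b * y)‖ ≤ ‖o * b‖ * ‖y‖ := by rw [← mul_assoc]; exact norm_mul_le _ _
        _ ≤ ‖o * b‖ * (2 * (2 * ‖z'‖ * ‖π * (b * y)‖)) := by
            gcongr; exact h5.trans (by gcongr)
        _ = (4 * ‖o * b‖ * ‖z'‖) * ‖π * (b * y)‖ := by ring
        _ ≤ _ := by gcongr
    · rw [h', norm_zero, mul_zero] at h4
      exact norm_le_zero_iff.1 h4
  have hκρ : ∀ y : A, ‖o * y‖ ≤ κ * ‖π * y‖ → ‖o * y‖ ≤ ρ * ‖π * y‖ := fun y hy =>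
    hy.trans (by gcongr; linarith)
  have hword : ∀ u ∈ Submonoid.closure {g, b * g}, ∀ y : A, ‖o * y‖ ≤ ρ * ‖π * y‖ →
      ‖o * (u * y)‖ ≤ ρ * ‖π * (u * y)‖ ∧ (π * y ≠ 0 → π * (u * y) ≠ 0) := by
    intro u hu
    induction hu using Submonoid.closure_induction with
    | mem x hx =>
      intro y hy
      rcases hx with rfl | rfl
      · exact ⟨hκρ _ (hg y hy).1, (hg y hy).2⟩
      · obtain ⟨h1, h2⟩ := hg y hy
        obtain ⟨h3, h4⟩ := hb _ h1
        rw [mul_assoc]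
        exact ⟨h3, fun h => h4 (h2 h)⟩
    | one => intro y hy; rw [one_mul]; exact ⟨hy, id⟩
    | mul x x' _ _ ih ih' =>
      intro y hy
      obtain ⟨h1, h2⟩ := ih' y hy
      obtain ⟨h3, h4⟩ := ih _ h1
      rw [mul_assoc]
      exact ⟨h3, fun h => h4 (h2 h)⟩
  intro u hu u' hu' c heq
  have hcone : ∀ x : A, π * x = x → ‖o * x‖ ≤ ρ * ‖π * x‖ := by
    intro x hx
    rw [← hx, ← mul_assoc, hoπ, zero_mul, norm_zero]
    positivity
  -- left multiplication by `π * g * u'` is injective, hence surjective, on `π * A`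
  obtain ⟨x, hx, hx'⟩ : ∃ x : A, π * x = x ∧ π * (g * (u' * x)) = π := by
    let P : Submodule 𝕜 A := LinearMap.range (LinearMap.mulLeft 𝕜 π)
    have hP : ∀ x : A, x ∈ P ↔ π * x = x := by
      intro x
      constructor
      · rintro ⟨w, rfl⟩
        simp only [LinearMap.mulLeft_apply]
        rw [← mul_assoc, hπ]
      · intro h; exact ⟨x, h⟩
    let L : P →ₗ[𝕜] P := (LinearMap.mulLeft 𝕜 (π * g * u')).restrict (p := P) (q := P) (by
      intro x _
      exact ⟨g * u' * x, by simp [mul_assoc]⟩)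
    have hinj : Function.Injective L := by
      rw [← LinearMap.ker_eq_bot, LinearMap.ker_eq_bot']
      rintro ⟨x, hx⟩ h
      have hx1 := (hP x).1 hx
      have h' : π * g * u' * x = 0 := congrArg Subtype.val h
      by_contra hne
      have hxne : π * x ≠ 0 := by
        rw [hx1]; intro h0; exact hne (Subtype.ext h0)
      obtain ⟨h1, h2⟩ := hword u' hu' x (hcone x hx1)
      refine (hg _ h1).2 (h2 hxne) ?_
      rw [← h']; noncomm_ring
    obtain ⟨⟨x, hx⟩, h⟩ := LinearMap.surjective_of_injective hinj ⟨π, (hP π).2 hπ⟩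
    refine ⟨x, (hP x).1 hx, ?_⟩
    have : π * g * u' * x = π := congrArg Subtype.val h
    simpa only [mul_assoc] using this
  have hx0 : π * x ≠ 0 := by
    intro h
    rw [hx] at h
    rw [h] at hx'
    simp only [mul_zero] at hx'
    exact hπ0 hx'.symm
  obtain ⟨h1, h2⟩ := hword u hu x (hcone x hx)
  obtain ⟨h3, h4⟩ := hg _ h1
  obtain ⟨h5, h6⟩ := hword u' hu' x (hcone x hx)
  obtain ⟨h7, -⟩ := hg _ h5
  set y := g * (u' * x) with hy
  have hgu : g * (u * x) = c • (b * y) := by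
    rw [← mul_assoc, heq, smul_mul_assoc, hy]; simp only [mul_assoc]
  rw [hgu] at h3 h4
  have hc0 : c ≠ 0 := by
    rintro rfl
    exact h4 (h2 hx0) (by simp)
  rw [mul_smul_comm, mul_smul_comm, norm_smul, norm_smul, mul_left_comm] at h3
  have h8 : ‖o * (b * y)‖ ≤ κ * ‖π * (b * y)‖ := le_of_mul_le_mul_left h3 (norm_pos_iff.2 hc0)
  rw [hx'] at h7
  have e3 : o * b * π = o * (b * y) - o * b * (o * y) := by
    conv_rhs => enter [1]; rw [hsum y, hx']
    noncomm_ring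
  have e4 : π * (b * y) = π * b * π + π * b * (o * y) := by
    conv_lhs => rw [hsum y, hx']
    noncomm_ring
  have h9 : ‖o * b * π‖ ≤ ‖o * (b * y)‖ + ‖o * b‖ * (κ * ‖π‖) := by
    rw [e3]
    exact (norm_sub_le _ _).trans (by gcongr; exact (norm_mul_le _ _).trans (by gcongr))
  have h10 : ‖π * (b * y)‖ ≤ 2 * (‖π * b‖ * ‖π‖) := by
    rw [e4]
    calc _ ≤ ‖π * b‖ * ‖π‖ + ‖π * b‖ * (1 * ‖π‖) := (norm_add_le _ _).trans (by
            gcongr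
            · exact norm_mul_le _ _
            · exact (norm_mul_le _ _).trans (by gcongr; exact h7.trans (by gcongr)))
      _ = _ := by ring
  have h11 : κ * ‖π * (b * y)‖ ≤ κ * (2 * (‖π * b‖ * ‖π‖)) := by gcongr
  nlinarith

end PingPong
end EMO

/-! ### Spectral gaps and contraction -/

namespace EMO

/-- A finite family of positive reals with product one and one very large member has a gap. -/
theorem exists_gap {d : ℕ} (a : Fin d → ℝ) (ha : ∏ k, a k = 1) {q : ℝ}
    (hq : 1 < q) (k₀ : Fin d) (hk₀ : q ^ d ≤ a k₀) :
    ∃ θ, 1 ≤ θ ∧ θ ≤ a k₀ ∧ (∀ k, θ ≤ a k ∨ a k ≤ θ / q) ∧ ∃ k, a k ≤ θ / q := by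
  have hq0 : 0 < q := by linarith
  have hM : 0 < a k₀ := lt_of_lt_of_le (by positivity) hk₀
  obtain ⟨j, hj, hgap⟩ : ∃ j < d, ∀ k, a k₀ / q ^ j ≤ a k ∨ a k ≤ a k₀ / q ^ j / q := by
    by_contra! hcon
    have hcard : ∀ j ≤ d, j + 1 ≤ (Finset.univ.filter fun k => a k₀ / q ^ j ≤ a k).card := by
      intro j
      induction j with
      | zero => intro _; exact Finset.card_pos.2 ⟨k₀, by simp⟩
      | succ j ih =>
        intro hj
        obtain ⟨k, h1, h2⟩ := hcon j (by omega)
        refine (Nat.succ_le_succ (ih (by omega))).trans (Finset.card_lt_card ?_)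
        rw [Finset.ssubset_iff_of_subset]
        · exact ⟨k, by simpa [pow_succ, div_div] using h2.le, by simpa using h1⟩
        · intro l hl
          simp only [Finset.mem_filter, Finset.mem_univ, true_and] at hl ⊢
          refine le_trans ?_ hl
          exact div_le_div_of_nonneg_left hM.le (by positivity)
            (pow_le_pow_right₀ hq.le (Nat.le_succ j))
    have := (hcard d le_rfl).trans (Finset.card_le_univ _)
    simp at this
  have hθ : 1 < a k₀ / q ^ j := by
    rw [lt_div_iff₀ (by positivity), one_mul]
    exact lt_of_lt_of_le (pow_lt_pow_right₀ hq hj) hk₀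
  refine ⟨a k₀ / q ^ j, hθ.le, div_le_self hM.le (one_le_pow₀ hq.le), hgap, ?_⟩
  by_contra! hcon
  have h1 : ∀ k, 1 < a k := fun k =>
    hθ.trans_le ((hgap k).resolve_right (not_le.2 (hcon k)))
  have : (1 : ℝ) < ∏ k, a k := by
    calc (1 : ℝ) = ∏ _k : Fin d, (1 : ℝ) := by simp
      _ < _ := Finset.prod_lt_prod (fun _ _ => one_pos) (fun k _ => (h1 k).le)
        ⟨k₀, Finset.mem_univ _, h1 k₀⟩
  linarith

section Spectral
open Polynomial
variable {K : Type*} [Field K] {n ι : Type*} [Fintype n] [DecidableEq n]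

theorem eval_eq_zero_of_charpoly {γ : Matrix n n K} {x : K} (hx : γ.charpoly.IsRoot x) {p : K[X]}
    (hp : aeval γ p = 0) : p.eval x = 0 := by
  have h1 : x ∈ spectrum K γ := Matrix.mem_spectrum_of_isRoot_charpoly hx
  have h2 := spectrum.subset_polynomial_aeval γ p ⟨x, h1, rfl⟩
  rw [hp] at h2
  cases isEmpty_or_nonempty n
  · have : γ.charpoly = 1 := by simp [Matrix.charpoly]
    rw [this] at hx
    simp at hx
  · simpa [spectrum.zero_eq] using h2

variable [Fintype ι] [DecidableEq ι]

/-- The spectral projection of a matrix associated with a set `A` of eigenvalues, expressed through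
the two complementary factors of the characteristic polynomial. -/
theorem spectral_projection (γ : Matrix n n K) (lam : ι → K)
    (hlam : γ.charpoly = ∏ k, (X - C (lam k))) (A : Finset ι)
    (hA : ∀ k ∈ A, ∀ l ∉ A, lam k ≠ lam l) (hA1 : A.Nonempty) (hA2 : ∃ l, l ∉ A) :
    ∃ π y : Matrix n n K,
      y * (aeval γ (∏ k ∈ A, (X - C (lam k))) + aeval γ (∏ k ∈ Aᶜ, (X - C (lam k)))) = 1 ∧
      π = y * aeval γ (∏ k ∈ Aᶜ, (X - C (lam k))) ∧ π * π = π ∧ γ * π = π * γ ∧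
      aeval γ (∏ k ∈ A, (X - C (lam k))) * π = 0 ∧
      aeval γ (∏ k ∈ Aᶜ, (X - C (lam k))) * (1 - π) = 0 ∧ π ≠ 0 ∧ π ≠ 1 := by
  set P := ∏ k ∈ A, (X - C (lam k)) with hP
  set Q := ∏ k ∈ Aᶜ, (X - C (lam k)) with hQ
  have hPQ : P * Q = γ.charpoly := by rw [hlam, hP, hQ, Finset.prod_mul_prod_compl]
  have hcop : IsCoprime P Q := by
    refine IsCoprime.prod_left fun k hk => IsCoprime.prod_right fun l hl => ?_
    exact isCoprime_X_sub_C_of_isUnit_sub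
      (sub_ne_zero.2 (hA k hk l (Finset.mem_compl.1 hl))).isUnit
  have hcop' : IsCoprime (P + Q) (P * Q) := by
    refine IsCoprime.mul_right ?_ ?_
    · have := hcop.symm.add_mul_left_left 1
      rwa [mul_one, add_comm] at this
    · have := hcop.add_mul_left_left 1
      rwa [mul_one] at this
  obtain ⟨u, w, huw⟩ := hcop'
  have hch : aeval γ (P * Q) = 0 := by rw [hPQ]; exact Matrix.aeval_self_charpoly γ
  -- every relation between polynomials modulo `P * Q` holds after evaluation at `γ`
  have key : ∀ F G H : K[X], F = G + H * (P * Q) → aeval γ F = aeval γ G := by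
    rintro F G H rfl
    rw [map_add, map_mul _ H, hch, mul_zero, add_zero]
  have hroot : ∀ k, γ.charpoly.IsRoot (lam k) := by
    intro k
    rw [hlam, IsRoot.def, eval_prod]
    exact Finset.prod_eq_zero (Finset.mem_univ k) (by simp)
  have hy : aeval γ u * (aeval γ P + aeval γ Q) = 1 := by
    rw [← map_add, ← map_mul, ← map_one (aeval γ : K[X] →ₐ[K] Matrix n n K)]
    exact key _ _ (-w) (by linear_combination huw)
  have hPπ : aeval γ P * (aeval γ u * aeval γ Q) = 0 := by
    rw [← map_mul, ← map_mul, ← map_zero (aeval γ : K[X] →ₐ[K] Matrix n n K)]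
    exact key _ _ u (by ring)
  have hQπ : aeval γ Q * (1 - aeval γ u * aeval γ Q) = 0 := by
    rw [← map_mul, ← map_one (aeval γ : K[X] →ₐ[K] Matrix n n K), ← map_sub, ← map_mul, ← map_zero (aeval γ : K[X] →ₐ[K] Matrix n n K)]
    exact key _ _ (u + w * Q) (by linear_combination (-Q) * huw)
  refine ⟨aeval γ u * aeval γ Q, aeval γ u, hy, rfl, ?_, ?_, hPπ, hQπ, ?_, ?_⟩
  · have : aeval γ u * (aeval γ Q * (1 - aeval γ u * aeval γ Q)) = 0 := by rw [hQπ, mul_zero]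
    rw [mul_sub, mul_one, mul_sub, sub_eq_zero] at this
    rw [mul_assoc, ← this]
  · rw [← map_mul]
    conv_lhs => enter [1]; rw [← aeval_X (R := K) γ]
    conv_rhs => enter [2]; rw [← aeval_X (R := K) γ]
    rw [← map_mul, ← map_mul, mul_comm]
  · intro h
    rw [h, sub_zero, mul_one] at hQπ
    obtain ⟨k, hk⟩ := hA1
    have := eval_eq_zero_of_charpoly (hroot k) hQπ
    rw [hQ, eval_prod, Finset.prod_eq_zero_iff] at this
    obtain ⟨l, hl, h0⟩ := this
    refine hA k hk l (Finset.mem_compl.1 hl) ?_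
    simpa [sub_eq_zero] using h0
  · intro h
    rw [h, mul_one] at hPπ
    obtain ⟨l, hl⟩ := hA2
    have := eval_eq_zero_of_charpoly (hroot l) hPπ
    rw [hP, eval_prod, Finset.prod_eq_zero_iff] at this
    obtain ⟨k, hk, h0⟩ := this
    refine hA k hk l hl ?_
    symm
    simpa [sub_eq_zero] using h0

end Spectral

section Contraction
open Polynomial
variable {𝕜 A : Type*} [NormedField 𝕜] [NormedRing A] [NormedAlgebra 𝕜 A]

/-- If `∏ (g - lam k)` kills `y` from the left, then so does `∏ (g⁻¹ - (lam k)⁻¹)`, which is a left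
multiple of it. -/
theorem aeval_inv_prod {ι : Type*} (s : Finset ι) (lam : ι → 𝕜) (hl : ∀ k ∈ s, lam k ≠ 0)
    {g g' : A} (hg'g : g' * g = 1) (hgg' : g * g' = 1) :
    ∃ x : A, aeval g' (∏ k ∈ s, (X - C (lam k)⁻¹)) = x * aeval g (∏ k ∈ s, (X - C (lam k))) := by
  classical
  induction s using Finset.induction_on with
  | empty => exact ⟨1, by simp⟩
  | insert a s ha ih =>
    obtain ⟨x, hx⟩ := ih fun k hk => hl k (Finset.mem_insert_of_mem hk)
    have ha0 := hl a (Finset.mem_insert_self _ _)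
    refine ⟨x * (-(lam a)⁻¹ • g'), ?_⟩
    rw [Finset.prod_insert ha, mul_comm, map_mul, hx, Finset.prod_insert ha, map_mul]
    have h1 : aeval g' (X - C (lam a)⁻¹) = (-(lam a)⁻¹ • g') * aeval g (X - C (lam a)) := by
      rw [map_sub, map_sub, aeval_X, aeval_X, aeval_C, aeval_C, neg_smul, neg_mul, smul_mul_assoc,
        mul_sub, hg'g, ← Algebra.commutes (lam a), ← Algebra.smul_def, smul_sub, smul_smul,
        inv_mul_cancel₀ ha0, one_smul, neg_sub, Algebra.algebraMap_eq_smul_one]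
    have h2 : aeval g (∏ k ∈ s, (X - C (lam k))) * g' = g' * aeval g (∏ k ∈ s, (X - C (lam k))) := by
      set p := ∏ k ∈ s, (X - C (lam k))
      have h3 : g * aeval g p = aeval g p * g := by
        conv_lhs => enter [1]; rw [← aeval_X (R := 𝕜) g]
        conv_rhs => enter [2]; rw [← aeval_X (R := 𝕜) g]
        rw [← map_mul, ← map_mul, mul_comm]
      calc aeval g p * g' = g' * (g * aeval g p) * g' := by rw [← mul_assoc g', hg'g, one_mul]
        _ = g' * aeval g p * (g * g') := by rw [h3]; simp only [mul_assoc]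
        _ = _ := by rw [hgg', mul_one]
    have h3 : aeval g (∏ k ∈ s, (X - C (lam k))) * aeval g (X - C (lam a)) =
      aeval g (X - C (lam a)) * aeval g (∏ k ∈ s, (X - C (lam k))) := by
      rw [← map_mul, mul_comm, map_mul]
    rw [h1, mul_assoc x, ← mul_assoc (aeval g _), mul_smul_comm, h2, ← smul_mul_assoc,
      mul_assoc, h3, mul_assoc]

/-- Quantitative contraction of the powers of `g` relative to a spectral gap. -/
theorem contraction {ι : Type*} [Fintype ι] [DecidableEq ι] {d : ℕ} (hd : Fintype.card ι = d)
    (lam : ι → 𝕜) (hlam0 : ∀ k, lam k ≠ 0) {q θ : ℝ} (hq : 16 ≤ q) {c : ℕ} (hθ : 1 ≤ θ)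
    (hθ' : θ ≤ q ^ c) (S : Finset ι) (hS : ∀ k ∈ S, θ ≤ ‖lam k‖) (hS' : ∀ k ∉ S, ‖lam k‖ ≤ θ / q)
    {g g' π : A} (hg'g : g' * g = 1) (hgg' : g * g' = 1)
    (h1 : aeval g (∏ k ∈ S, (X - C (lam k))) * π = 0)
    (h2 : aeval g (∏ k ∈ Sᶜ, (X - C (lam k))) * (1 - π) = 0)
    (hB : ∀ k, ‖g - algebraMap 𝕜 A (lam k)‖ ≤ q ^ c)
    (hB' : ∀ k, ‖g' - algebraMap 𝕜 A (lam k)⁻¹‖ ≤ q ^ c)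
    (hπ : ‖π‖ ≤ q ^ c) (hπ' : ‖1 - π‖ ≤ q ^ c) (t : ℕ) :
    ‖g ^ (2 * t) * (1 - π)‖ * ‖g' ^ (2 * t) * π‖ ≤ q ^ ((5 * c + 5) * (d + 1)) / q ^ t := by
  have hq0 : 0 < q := by linarith
  have hq1 : 1 ≤ q := by linarith
  have hθ0 : 0 < θ := by linarith
  have hb1 := power_bound Sᶜ lam (r := θ / q) (B := q ^ c) (by positivity) g
    (fun k hk => hS' k (Finset.mem_compl.1 hk)) (fun k _ => hB k) (by positivity) _ h2 (2 * t)
  have hb2 := power_bound S (fun k => (lam k)⁻¹) (r := θ⁻¹) (B := q ^ c) (by positivity) g'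
    (fun k hk => by rw [norm_inv]; exact inv_anti₀ hθ0 (hS k hk)) (fun k _ => hB' k)
    (by positivity) π (by
      obtain ⟨x, hx⟩ := aeval_inv_prod S lam (fun k _ => hlam0 k) hg'g hgg'
      rw [hx, mul_assoc, h1, mul_zero]) (2 * t)
  have hpc : (1 : ℝ) ≤ q ^ c := one_le_pow₀ hq1
  have hE1 : (1 + q ^ c / (θ / q)) ^ (Sᶜ).card ≤ (q ^ (c + 2)) ^ d := by
    have h3 : 1 + q ^ c / (θ / q) ≤ q ^ (c + 2) := by
      have h4 : q ^ c / (θ / q) ≤ q ^ c * q := by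
        rw [div_div_eq_mul_div]
        exact div_le_self (by positivity) hθ
      have h5 : q ^ (c + 2) = q ^ c * q * q := by ring
      have h6 : 1 ≤ q ^ c * q := one_le_mul_of_one_le_of_one_le hpc hq1
      rw [h5]; nlinarith
    calc _ ≤ (q ^ (c + 2)) ^ (Sᶜ).card := by gcongr
      _ ≤ _ := pow_le_pow_right₀ (one_le_pow₀ hq1) (by rw [← hd]; exact Finset.card_le_univ _)
  have hE2 : (1 + q ^ c / θ⁻¹) ^ S.card ≤ (q ^ (2 * c + 1)) ^ d := by
    have h3 : 1 + q ^ c / θ⁻¹ ≤ q ^ (2 * c + 1) := by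
      have h4 : q ^ c / θ⁻¹ ≤ q ^ c * q ^ c := by
        rw [div_inv_eq_mul]
        gcongr
      have h5 : q ^ (2 * c + 1) = q ^ c * q ^ c * q := by ring
      have h6 : 1 ≤ q ^ c * q ^ c := one_le_mul_of_one_le_of_one_le hpc hpc
      rw [h5]; nlinarith
    calc _ ≤ (q ^ (2 * c + 1)) ^ S.card := by gcongr
      _ ≤ _ := pow_le_pow_right₀ (one_le_pow₀ hq1) (by rw [← hd]; exact Finset.card_le_univ _)
  have hmain : (2 * (θ / q)) ^ (2 * t) * (2 * θ⁻¹) ^ (2 * t) ≤ 1 / q ^ t := by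
    rw [← mul_pow, pow_mul, ← one_div_pow]
    refine pow_le_pow_left₀ (by positivity) ?_ _
    have : (2 * (θ / q) * (2 * θ⁻¹)) ^ 2 = 16 / q ^ 2 := by
      field_simp
      norm_num
    rw [this, div_le_div_iff₀ (by positivity) hq0]
    nlinarith
  calc _ ≤ ((2 * (θ / q)) ^ (2 * t) * (q ^ (c + 2)) ^ d * q ^ c) *
        ((2 * θ⁻¹) ^ (2 * t) * (q ^ (2 * c + 1)) ^ d * q ^ c) := by
        refine mul_le_mul (hb1.trans ?_) (hb2.trans ?_) (norm_nonneg _) (by positivity)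
        · gcongr
        · gcongr
    _ = ((2 * (θ / q)) ^ (2 * t) * (2 * θ⁻¹) ^ (2 * t)) * q ^ ((c + 2) * d + c + (2 * c + 1) * d + c) := by
        rw [← pow_mul, ← pow_mul, pow_add, pow_add, pow_add]; ring
    _ ≤ 1 / q ^ t * q ^ ((5 * c + 5) * (d + 1)) := by
        refine mul_le_mul hmain (pow_le_pow_right₀ hq1 ?_) (by positivity) (by positivity)
        nlinarith
    _ = _ := by ring

end Contraction
end EMO

/-! ### Words in general position -/

namespace EMO
section General
variable {K : Type*} [Field K] {d : ℕ}

/-- Affine functions of the entries of a matrix. -/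
def affineFuns (K : Type*) [Field K] (d : ℕ) : Submodule K (Matrix (Fin d) (Fin d) K → K) :=
  Submodule.span K (Set.range fun o : Option (Fin d × Fin d) =>
    o.elim 1 fun p x => x p.1 p.2)

/-- Polynomials of degree at most `d` in the matrix entries form a finite-dimensional space, here
the `d`-th power of the space of affine functions. -/
theorem affineFuns_pow_fg (K : Type*) [Field K] (d : ℕ) : (affineFuns K d ^ d).FG :=
  Submodule.FG.pow (Submodule.fg_span (Set.finite_range _)) d

theorem const_mem_affineFuns (c : K) : (fun _ => c) ∈ affineFuns K d := by
  have : (1 : Matrix (Fin d) (Fin d) K → K) ∈ affineFuns K d :=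
    Submodule.subset_span ⟨none, rfl⟩
  convert (affineFuns K d).smul_mem c this using 1
  ext; simp

theorem entry_mem_affineFuns (A B E : Matrix (Fin d) (Fin d) K) (i j : Fin d) :
    (fun x => (A * x * B + E) i j) ∈ affineFuns K d := by
  have h1 : (fun x : Matrix (Fin d) (Fin d) K => (A * x * B + E) i j) =
      (∑ l, ∑ k, (A i k * B l j) • fun x : Matrix (Fin d) (Fin d) K => x k l) +
        fun _ => E i j := by
    ext x
    simp only [Matrix.add_apply, Matrix.mul_apply, Pi.add_apply, Finset.sum_apply, Pi.smul_apply,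
      smul_eq_mul, Finset.sum_mul]
    congr 1
    exact Finset.sum_congr rfl fun l _ => Finset.sum_congr rfl fun k _ => by ring
  rw [h1]
  refine add_mem (sum_mem fun l _ => sum_mem fun k _ => Submodule.smul_mem _ _ ?_)
    (const_mem_affineFuns _)
  exact Submodule.subset_span ⟨some (k, l), rfl⟩

/-- A determinant of a matrix with affine entries has degree at most `d`. -/
theorem det_mem_affineFuns (A B E : Matrix (Fin d) (Fin d) K) :
    (fun x => (A * x * B + E).det) ∈ affineFuns K d ^ d := by
  have hprod : ∀ (s : Finset (Fin d)) (f : Fin d → Matrix (Fin d) (Fin d) K → K),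
      (∀ i, f i ∈ affineFuns K d) → ∏ i ∈ s, f i ∈ affineFuns K d ^ s.card := by
    classical
    intro s f hf
    induction s using Finset.induction_on with
    | empty => simp
    | insert a s ha ih =>
      rw [Finset.prod_insert ha, Finset.card_insert_of_notMem ha, pow_succ']
      exact Submodule.mul_mem_mul (hf a) ih
  have h1 : (fun x : Matrix (Fin d) (Fin d) K => (A * x * B + E).det) =
      ∑ σ : Equiv.Perm (Fin d), ((Equiv.Perm.sign σ : ℤ) : K) •
        ∏ i, fun x : Matrix (Fin d) (Fin d) K => (A * x * B + E) (σ i) i := by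
    ext x
    simp [Matrix.det_apply', Finset.sum_apply, Finset.prod_apply]
  rw [h1]
  refine sum_mem fun σ _ => Submodule.smul_mem _ _ ?_
  have := hprod Finset.univ (fun i x => (A * x * B + E) (σ i) i)
    fun i => entry_mem_affineFuns _ _ _ _ _
  rwa [Finset.card_univ, Fintype.card_fin] at this

/-- The elements of `G` preserving the image of an idempotent. -/
def imageStabilizer {G : Type*} [Group G] (ρ : G →* Matrix (Fin d) (Fin d) K)
    (π : Matrix (Fin d) (Fin d) K) (hπ : π * π = π) : Subgroup G where
  carrier := {g | (1 - π) * ρ g * π = 0 ∧ (1 - π) * ρ g⁻¹ * π = 0}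
  one_mem' := by simp [sub_mul, hπ]
  inv_mem' := by rintro g ⟨h1, h2⟩; exact ⟨h2, by rwa [inv_inv]⟩
  mul_mem' := by
    have key : ∀ x y : Matrix (Fin d) (Fin d) K, (1 - π) * x * π = 0 → (1 - π) * y * π = 0 →
        (1 - π) * (x * y) * π = 0 := by
      intro x y hx hy
      have h : (1 - π) * (x * y) * π =
          ((1 - π) * x * π) * (y * π) + (1 - π) * x * ((1 - π) * y * π) := by
        noncomm_ring
      rw [h, hx, hy, zero_mul, mul_zero, add_zero]
    rintro g h ⟨h1, h2⟩ ⟨h3, h4⟩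
    refine ⟨?_, ?_⟩
    · rw [map_mul]; exact key _ _ h1 h3
    · rw [mul_inv_rev, map_mul]; exact key _ _ h4 h2

/-- If `ρ g` maps the image of `π` into itself, then the determinant condition makes it map the
image onto itself, so that `ρ g⁻¹` preserves it as well. -/
theorem mem_imageStabilizer {G : Type*} [Group G] (ρ : G →* Matrix (Fin d) (Fin d) K)
    (π : Matrix (Fin d) (Fin d) K) (hπ : π * π = π) {g : G}
    (hdet : (π * ρ g * π + (1 - π)).det ≠ 0) (h : (1 - π) * ρ g * π = 0) :
    g ∈ imageStabilizer ρ π hπ := by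
  refine ⟨h, ?_⟩
  set z := π * ρ g * π + (1 - π) with hz
  have hu : IsUnit z.det := hdet.isUnit
  have hπ0 : (1 - π) * π = 0 := by rw [sub_mul, hπ, one_mul, sub_self]
  have hπ0' : π * (1 - π) = 0 := by rw [mul_sub, hπ, mul_one, sub_self]
  have h1 : ρ g * π = π * ρ g * π := by
    rw [sub_mul, sub_mul, one_mul, sub_eq_zero] at h; exact h
  have h2 : π * z = ρ g * π := by
    rw [hz, mul_add, hπ0', add_zero, ← mul_assoc, ← mul_assoc, hπ, ← h1]
  have h3 : ρ g * (π * z⁻¹) = π := by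
    rw [← mul_assoc, ← h2, mul_assoc, Matrix.mul_nonsing_inv _ hu, mul_one]
  have h4 : ρ g⁻¹ * π = π * z⁻¹ := by
    conv_lhs => rw [← h3]
    rw [← mul_assoc, ← map_mul, inv_mul_cancel, map_one, one_mul]
  rw [mul_assoc, h4, ← mul_assoc, hπ0, zero_mul]

/-- The existence of elements, in a ball of uniform radius, which move the image of any nontrivial
idempotent into general position, provided subgroups of small index span the matrix algebra. -/
theorem exists_general_position (K : Type*) [Field K] (d : ℕ) : ∃ D : ℕ, ∀ (G : Type*) [Group G]
    (ρ : G →* Matrix (Fin d) (Fin d) K),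
    (∀ H : Subgroup G, H.index ≠ 0 → H.index ≤ D → Submodule.span K (ρ '' H) = ⊤) →
    ∀ S : Finset G, Generates S → ∀ π : Matrix (Fin d) (Fin d) K, π * π = π → π ≠ 0 → π ≠ 1 →
    ∃ b ∈ wordBall S (D + D), (π * ρ b * π + 1 - π).det ≠ 0 ∧ (1 - π) * ρ b * π ≠ 0 := by
  classical
  refine ⟨Module.finrank K (affineFuns K d ^ d : Submodule K (Matrix (Fin d) (Fin d) K → K)),
    fun G _ ρ hspan S hS π hπ hπ0 hπ1 => ?_⟩
  set W := (affineFuns K d ^ d : Submodule K (Matrix (Fin d) (Fin d) K → K)) with hW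
  have : Module.Finite K W := Module.Finite.iff_fg.2 (affineFuns_pow_fg K d)
  set D := Module.finrank K W with hD
  by_contra! hcon
  set H := imageStabilizer ρ π hπ
  -- two points of the orbit are either equal or separated by the function attached to the first
  have hbad : ∀ g ∈ wordBall S (D + D), (π * ρ g * π + (1 - π)).det ≠ 0 → g ∈ H := by
    intro g hg hdet
    exact mem_imageStabilizer ρ π hπ hdet (hcon g hg (by rwa [add_sub_assoc]))
  set x₀ : G ⧸ H := QuotientGroup.mk 1 with hx₀
  set T : Set (G ⧸ H) := (fun g : G => g • x₀) '' wordBall S D with hT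
  have hTfin : T.Finite := (wordBall_finite S D).image _
  have hTcard : T.ncard ≤ D := by
    have hw : ∀ p : T, ∃ w ∈ wordBall S D, (QuotientGroup.mk w : G ⧸ H) = p := by
      rintro ⟨_, w, hw, rfl⟩
      exact ⟨w, hw, by simp [hx₀, MulAction.Quotient.smul_mk]⟩
    choose w hwB hwp using hw
    let φ : T → W := fun p => ⟨fun x => (π * ρ (w p)⁻¹ * x * π + (1 - π)).det,
      det_mem_affineFuns _ _ _⟩
    have hφ1 : ∀ p, (φ p : _ → K) (ρ (w p)) = 1 := by
      intro p
      have h1 : π * ρ (w p)⁻¹ * ρ (w p) * π + (1 - π) = 1 := by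
        rw [mul_assoc π, ← map_mul, inv_mul_cancel, map_one, mul_one, hπ, add_sub_cancel]
      simp only [φ, h1, Matrix.det_one]
    have hφ0 : ∀ p p', p ≠ p' → (φ p : _ → K) (ρ (w p')) = 0 := by
      intro p p' hne
      by_contra h0
      have h1 : (w p)⁻¹ * w p' ∈ H := by
        refine hbad _ (mul_mem_wordBall (inv_mem_wordBall (hwB p)) (hwB p')) ?_
        rw [map_mul, ← mul_assoc π]
        exact h0
      exact hne (Subtype.ext (by rw [← hwp p, ← hwp p']; exact QuotientGroup.eq.2 h1))
    have hli : LinearIndependent K φ := by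
      have := hTfin.to_subtype
      have := Fintype.ofFinite T
      rw [Fintype.linearIndependent_iff]
      intro c hc p
      have h1 := congrFun (congrArg Subtype.val hc) (ρ (w p))
      simp only [Submodule.coe_sum, Submodule.coe_smul, Finset.sum_apply, Pi.smul_apply,
        smul_eq_mul, ZeroMemClass.coe_zero, Pi.zero_apply] at h1
      rw [Finset.sum_eq_single p (fun p' _ hne => by rw [hφ0 _ _ hne, mul_zero]) (by simp),
        hφ1, mul_one] at h1
      exact h1
    have := hTfin.to_subtype
    have := Fintype.ofFinite T
    have h2 := hli.fintype_card_le_finrank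
    rwa [← Nat.card_eq_fintype_card, Nat.card_coe_set_eq] at h2
  rcases orbit_chain hS x₀ D with h | h
  · have huniv : T = Set.univ := by
      rw [Set.eq_univ_iff_forall]
      intro p
      induction p using QuotientGroup.induction_on with
      | H g =>
        obtain ⟨w, hw, hwg⟩ := h g
        refine ⟨w, hw, hwg.trans ?_⟩
        simp [hx₀, MulAction.Quotient.smul_mk]
    have hfin : Finite (G ⧸ H) := by
      rw [← Set.finite_univ_iff, ← huniv]; exact hTfin
    have hidx : H.index ≤ D := by
      rw [Subgroup.index, ← Set.ncard_univ, ← huniv]; exact hTcard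
    have hidx0 : H.index ≠ 0 := Subgroup.finiteIndex_iff_finite_quotient.2 hfin |>.index_ne_zero
    have htop := hspan H hidx0 hidx
    have hall : ∀ x : Matrix (Fin d) (Fin d) K, (1 - π) * x * π = 0 := by
      intro x
      have hx : x ∈ Submodule.span K (ρ '' H) := by rw [htop]; trivial
      induction hx using Submodule.span_induction with
      | mem x hx => obtain ⟨g, hg, rfl⟩ := hx; exact hg.1
      | zero => simp
      | add x y _ _ h1 h2 => rw [mul_add, add_mul, h1, h2, add_zero]
      | smul c x _ h1 => rw [mul_smul_comm, smul_mul_assoc, h1, smul_zero]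
    obtain ⟨k, l, hkl⟩ : ∃ k l, π k l ≠ 0 := by
      by_contra! h0; exact hπ0 (by ext; simp [h0])
    obtain ⟨i, j, hij⟩ : ∃ i j, (1 - π) i j ≠ 0 := by
      by_contra! h0
      exact hπ1 (sub_eq_zero.1 (show 1 - π = 0 by ext i j; exact h0 i j)).symm
    have h1 := congrFun (congrFun (hall (Matrix.single j k 1)) i) l
    rw [Matrix.mul_apply, Finset.sum_eq_single k] at h1
    · simp at h1
      rcases h1 with h1 | h1
      · exact hij h1
      · exact hkl h1
    · intro b _ hb
      rw [Matrix.mul_single_apply_of_ne _ _ _ _ _ hb, zero_mul]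
    · simp
  · exact absurd (h.trans hTcard) (Nat.not_succ_le_self D)
end General
end EMO

/-! ### Ping-pong at one absolute value -/

namespace EMO
section Local
variable {K : Type*} [Field K] {κ : Type*} [Fintype κ] [DecidableEq κ]

/-- The operator norm, for the sup norm on vectors, of a matrix over a field with an absolute
value. -/
noncomputable def opNorm (v : AbsoluteValue K ℝ) (M : Matrix κ κ K) : ℝ :=
  letI := v.toNormedField
  letI := Matrix.linftyOpNormedRing (n := κ) (α := K)
  ‖M‖

theorem le_opNorm (v : AbsoluteValue K ℝ) (M : Matrix κ κ K) (a b : κ) : v (M a b) ≤ opNorm v M := by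
  let _ := v.toNormedField
  let _ := Matrix.linftyOpNormedRing (n := κ) (α := K)
  have h : ‖M a b‖₊ ≤ ‖M‖₊ := by
    rw [Matrix.linfty_opNNNorm_def]
    refine le_trans ?_ (Finset.le_sup (Finset.mem_univ a))
    exact Finset.single_le_sum (f := fun j => ‖M a j‖₊) (fun _ _ => zero_le) (Finset.mem_univ b)
  exact h

theorem opNorm_le (v : AbsoluteValue K ℝ) (M : Matrix κ κ K) {B : ℝ} (hB : 0 ≤ B)
    (h : ∀ a b, v (M a b) ≤ B) : opNorm v M ≤ Fintype.card κ * B := by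
  let _ := v.toNormedField
  let _ := Matrix.linftyOpNormedRing (n := κ) (α := K)
  lift B to NNReal using hB
  have h' : ‖M‖₊ ≤ Fintype.card κ * B := by
    rw [Matrix.linfty_opNNNorm_def]
    refine Finset.sup_le fun a _ => ?_
    refine (Finset.sum_le_card_nsmul _ _ B fun b _ => ?_).trans ?_
    · exact h a b
    · rw [Finset.card_univ, nsmul_eq_mul]
  exact_mod_cast h'

open Polynomial in
/-- The ping-pong argument at one absolute value, for a matrix `g` with a large gap between the
absolute values of its eigenvalues; all the data are controlled by powers of `q`. -/
theorem local_ping_pong (v : AbsoluteValue K ℝ) {d : ℕ} (lam : Fin d → K) (hlam0 : ∀ k, lam k ≠ 0)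
    {q θ : ℝ} (hq : 16 ≤ q) {c : ℕ} (hθ : 1 ≤ θ)
    (hθ' : θ ≤ q ^ c) (S : Finset (Fin d)) (hS : ∀ k ∈ S, θ ≤ v (lam k))
    (hS' : ∀ k ∉ S, v (lam k) ≤ θ / q)
    {g g' π b z' : Matrix κ κ K} (hg'g : g' * g = 1) (hgg' : g * g' = 1)
    (hπ : π * π = π) (hπ0 : π ≠ 0) (hc : g * π = π * g)
    (h1 : aeval g (∏ k ∈ S, (X - C (lam k))) * π = 0)
    (h2 : aeval g (∏ k ∈ Sᶜ, (X - C (lam k))) * (1 - π) = 0)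
    (hz : z' * (π * b * π + 1 - π) = 1)
    (hB : ∀ k, opNorm v (g - algebraMap K _ (lam k)) ≤ q ^ c)
    (hB' : ∀ k, opNorm v (g' - algebraMap K _ (lam k)⁻¹) ≤ q ^ c)
    (hπn : opNorm v π ≤ q ^ c) (hπn' : opNorm v (1 - π) ≤ q ^ c) (hbn : opNorm v b ≤ q ^ c)
    (hzn : opNorm v z' ≤ q ^ c) (hδ : 1 ≤ q ^ c * opNorm v ((1 - π) * b * π))
    {t : ℕ} (ht : t = 2 * ((5 * c + 5) * (d + 1) + 7 * c + 4)) :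
    ∀ u ∈ Submonoid.closure {g ^ t, b * g ^ t}, ∀ u' ∈ Submonoid.closure {g ^ t, b * g ^ t},
      ∀ x : K, g ^ t * u ≠ x • (b * g ^ t * u') := by
  let _ := v.toNormedField
  let _ := Matrix.linftyOpNormedRing (n := κ) (α := K)
  let _ := Matrix.linftyOpNormedAlgebra (R := K) (n := κ) (α := K)
  have hq0 : 0 < q := by linarith
  have hq1 : 1 ≤ q := by linarith
  change ‖π‖ ≤ _ at hπn
  change ‖1 - π‖ ≤ _ at hπn'
  change ‖b‖ ≤ _ at hbn
  change ‖z'‖ ≤ _ at hzn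
  change 1 ≤ q ^ c * ‖(1 - π) * b * π‖ at hδ
  set s := (5 * c + 5) * (d + 1) + 7 * c + 4 with hs
  have hcon := contraction (𝕜 := K) (Fintype.card_fin d) lam hlam0 hq hθ hθ' S hS hS' hg'g hgg'
    h1 h2 hB hB' hπn hπn' s
  set Q := q ^ c with hQ
  have hQ1 : 1 ≤ Q := one_le_pow₀ hq1
  have hQ0 : 0 < Q := by positivity
  have hob : ‖(1 - π) * b‖ ≤ Q * Q :=
    (norm_mul_le _ _).trans (mul_le_mul hπn' hbn (norm_nonneg _) hQ0.le)
  have hpb : ‖π * b‖ ≤ Q * Q :=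
    (norm_mul_le _ _).trans (mul_le_mul hπn hbn (norm_nonneg _) hQ0.le)
  set ε := q ^ ((5 * c + 5) * (d + 1)) / q ^ s with hε
  have hε0 : 0 ≤ ε := by positivity
  -- the exponent `s` is chosen so that `ε` beats all the other quantities
  have hεQ : ε * (Q ^ 7 * q ^ 4) = 1 := by
    rw [hε, hs, hQ, pow_add, pow_add, ← pow_mul, mul_comm 7 c]
    field_simp
  have hcomm : g ^ t * π = π * g ^ t := (show Commute g π from hc).pow_left t
  have hρ : 4 * ‖(1 - π) * b‖ * ‖z'‖ ≤ Q ^ 3 * q := by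
    calc _ ≤ 4 * (Q * Q) * Q := by gcongr
      _ = Q ^ 3 * 4 := by ring
      _ ≤ _ := by gcongr; linarith
  have hρ1 : 1 ≤ Q ^ 3 * q := one_le_mul_of_one_le_of_one_le (one_le_pow₀ hQ1) hq1
  have hκ0 : 0 ≤ ε * (Q ^ 3 * q) := by positivity
  have hκ : ε * (Q ^ 3 * q) * (Q ^ 4 * q ^ 3) = 1 := by rw [← hεQ]; ring
  have hQ4 : 1 ≤ Q ^ 4 := one_le_pow₀ hQ1
  have hκ1 : ε * (Q ^ 3 * q) ≤ 1 := by
    rw [← hκ]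
    exact le_mul_of_one_le_right hκ0 (one_le_mul_of_one_le_of_one_le hQ4 (one_le_pow₀ hq1))
  have hgt : g ^ t * g' ^ t = 1 := by
    rw [← (show Commute g g' from hgg'.trans hg'g.symm).mul_pow, hgg', one_pow]
  have hgt' : g' ^ t * g ^ t = 1 := by
    rw [← (show Commute g' g from hg'g.trans hgg'.symm).mul_pow, hg'g, one_pow]
  have hzb : ‖π * b‖ * ‖z'‖ ≤ Q ^ 3 := by
    calc _ ≤ (Q * Q) * Q := by gcongr
      _ = _ := by ring
  have hQ34 : Q ^ 3 ≤ Q ^ 4 := pow_le_pow_right₀ hQ1 (by norm_num)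
  have hq3 : 4 ≤ q ^ 3 := by nlinarith [pow_le_pow_left₀ (by norm_num) hq 3]
  have hκQ : ε * (Q ^ 3 * q) * (Q ^ 4 * 4) ≤ 1 := by
    rw [← hκ]; gcongr
  refine ping_pong (𝕜 := K) hπ hπ0 hcomm hgt hgt' hz (ε := ε) (ρ := Q ^ 3 * q) (κ := ε * (Q ^ 3 * q))
    ?_ hε0 hρ1 hρ rfl hκ1 ?_ ?_
  · rw [ht]; exact hcon
  · have : ε * (Q ^ 3 * q) * (‖π * b‖ * ‖z'‖) ≤ ε * (Q ^ 3 * q) * Q ^ 4 := by gcongr; linarith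
    linarith
  · have h3 : ‖(1 - π) * b‖ * ‖π‖ + 2 * (‖π * b‖ * ‖π‖) ≤ 3 * Q ^ 3 := by
      calc _ ≤ Q * Q * Q + 2 * (Q * Q * Q) := by gcongr
        _ = _ := by ring
    have h4 : ε * (Q ^ 3 * q) * (‖(1 - π) * b‖ * ‖π‖ + 2 * (‖π * b‖ * ‖π‖)) * Q < 1 := by
      calc _ ≤ ε * (Q ^ 3 * q) * (3 * Q ^ 3) * Q := by gcongr
        _ = ε * (Q ^ 3 * q) * (Q ^ 4 * 3) := by ring
        _ < ε * (Q ^ 3 * q) * (Q ^ 4 * q ^ 3) := by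
          have : 0 < ε * (Q ^ 3 * q) := by positivity
          gcongr; linarith
        _ = 1 := hκ
    rw [mul_comm Q] at hδ
    exact lt_of_mul_lt_mul_right (h4.trans_le hδ) hQ0.le

end Local

section TameNorm
variable {K : Type*} [Field K] [Algebra ℚ K] [Algebra.IsAlgebraic ℚ K] {m : ℕ}
  {I : Type*} {R : I → ℝ} {κ : Type*} [Fintype κ] [DecidableEq κ]

theorem TameM.bound (hm : m ≠ 0) (hR : ∀ i, 2 ≤ R i) {A : I → Matrix κ κ K} (hA : TameM m R A) :
    ∃ C : ℕ, ∀ C' ≥ C, ∀ i, ∀ v ∈ Places K m, opNorm v (A i) ≤ R i ^ C' := by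
  choose C hC using fun a b => (hA a b).bound hm hR
  refine ⟨Fintype.card κ + ∑ a, ∑ b, C a b, fun C' hC' i v hv => ?_⟩
  have h1 : 1 ≤ R i := by linarith [hR i]
  have hle : ∀ a b, C a b ≤ ∑ a, ∑ b, C a b := fun a b =>
    (Finset.single_le_sum (f := fun b => C a b) (fun _ _ => Nat.zero_le _) (Finset.mem_univ b)).trans
      (Finset.single_le_sum (f := fun a => ∑ b, C a b) (fun _ _ => Nat.zero_le _) (Finset.mem_univ a))
  refine (opNorm_le v _ (B := R i ^ (∑ a, ∑ b, C a b)) (by positivity) fun a b =>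
    (hC a b i v hv).trans (pow_le_pow_right₀ h1 (hle a b))).trans ?_
  refine le_trans ?_ (pow_le_pow_right₀ h1 hC')
  rw [pow_add]
  gcongr
  calc (Fintype.card κ : ℝ) ≤ 2 ^ Fintype.card κ := by exact_mod_cast Nat.lt_two_pow_self.le
    _ ≤ _ := by gcongr; exact hR i

theorem TameM.lower_bound (hm : m ≠ 0) (hR : ∀ i, 2 ≤ R i) {A : I → Matrix κ κ K}
    (hA : TameM m R A) :
    ∃ C : ℕ, ∀ C' ≥ C, ∀ i, A i ≠ 0 → ∀ v ∈ Places K m, 1 ≤ R i ^ C' * opNorm v (A i) := by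
  choose C hC using fun a b => (hA a b).lower_bound hm hR
  refine ⟨∑ a, ∑ b, C a b, fun C' hC' i h0 v hv => ?_⟩
  have h1 : 1 ≤ R i := by linarith [hR i]
  have hle : ∀ a b, C a b ≤ ∑ a, ∑ b, C a b := fun a b =>
    (Finset.single_le_sum (f := fun b => C a b) (fun _ _ => Nat.zero_le _) (Finset.mem_univ b)).trans
      (Finset.single_le_sum (f := fun a => ∑ b, C a b) (fun _ _ => Nat.zero_le _) (Finset.mem_univ a))
  obtain ⟨a, b, hab⟩ : ∃ a b, A i a b ≠ 0 := by
    by_contra! h; exact h0 (by ext; simp [h])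
  refine (hC a b i hab v hv).trans (mul_le_mul (pow_le_pow_right₀ h1 ((hle a b).trans hC'))
    (le_opNorm v _ a b) (v.nonneg _) (by positivity))

end TameNorm
end EMO

/-! ### Eigenvalues, traces and word bases -/

namespace EMO
open Polynomial in
/-- Eigenvalues listed with multiplicity. -/
theorem exists_eigenvalues {K : Type*} [Field K] [IsAlgClosed K] {d : ℕ}
    (M : Matrix (Fin d) (Fin d) K) : ∃ lam : Fin d → K, M.charpoly = ∏ k, (X - C (lam k)) ∧
      M.trace = ∑ k, lam k ∧ M.det = ∏ k, lam k := by
  have hs := IsAlgClosed.splits M.charpoly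
  have h1 := hs.eq_prod_roots
  rw [M.charpoly_monic.leadingCoeff, C_1, one_mul] at h1
  have h2 : M.charpoly.roots.card = d := by
    rw [← hs.natDegree_eq_card_roots, Matrix.charpoly_natDegree_eq_dim, Fintype.card_fin]
  obtain ⟨l, hl⟩ := Quot.exists_rep M.charpoly.roots
  change (l : Multiset K) = _ at hl
  have hlen : l.length = d := by rw [← h2, ← hl, Multiset.coe_card]
  subst hlen
  have hroots : M.charpoly.roots = Finset.univ.val.map l.get := by
    rw [← hl, Fin.univ_val_map, List.ofFn_get]
  refine ⟨l.get, ?_, ?_, ?_⟩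
  · conv_lhs => rw [h1, hroots]
    simp only [Multiset.map_map]
    rfl
  · rw [Matrix.trace_eq_sum_roots_charpoly, hroots]; rfl
  · rw [Matrix.det_eq_prod_roots_charpoly, hroots]; rfl

/-- An eigenvalue of `M` is an eigenvalue of left multiplication by `M` on matrices. -/
theorem exists_eigenmatrix {K : Type*} [Field K] {d : ℕ} (M : Matrix (Fin d) (Fin d) K) {x : K}
    (hx : M.charpoly.IsRoot x) : ∃ w : Matrix (Fin d) (Fin d) K, w ≠ 0 ∧ M * w = x • w := by
  rw [Polynomial.IsRoot.def, Matrix.eval_charpoly] at hx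
  obtain ⟨u, hu, h⟩ := Matrix.exists_mulVec_eq_zero_iff.2 hx
  obtain ⟨j, hj⟩ := Function.ne_iff.1 hu
  refine ⟨Matrix.of fun i _ => u i, fun h0 => hj (congrFun (congrFun h0 j) j), ?_⟩
  ext i k
  have h1 := congrFun h i
  rw [Matrix.sub_mulVec, Pi.sub_apply, Pi.zero_apply, sub_eq_zero] at h1
  rw [Matrix.smul_apply, Matrix.of_apply, Matrix.mul_apply]
  rw [Matrix.scalar_apply, Matrix.mulVec_diagonal] at h1
  rw [smul_eq_mul, h1]
  rfl

theorem le_opNorm_of_eigen {K : Type*} [Field K] {κ : Type*} [Fintype κ] [DecidableEq κ]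
    (v : AbsoluteValue K ℝ) {M w : Matrix κ κ K} {x : K} (hw : w ≠ 0) (h : M * w = x • w) :
    v x ≤ opNorm v M := by
  let _ := v.toNormedField
  let _ := Matrix.linftyOpNormedRing (n := κ) (α := K)
  let _ := Matrix.linftyOpNormedAlgebra (R := K) (n := κ) (α := K)
  have h1 : ‖x‖ * ‖w‖ ≤ ‖M‖ * ‖w‖ := by
    rw [← norm_smul, ← h]; exact norm_mul_le _ _
  exact le_of_mul_le_mul_right h1 (norm_pos_iff.2 hw)

/-- Nondegeneracy of the trace form. -/
theorem eq_of_trace_mul {K : Type*} [Field K] {d : ℕ} {s : Set (Matrix (Fin d) (Fin d) K)}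
    (hs : Submodule.span K s = ⊤) {x y : Matrix (Fin d) (Fin d) K}
    (h : ∀ e ∈ s, (e * x).trace = (e * y).trace) : x = y := by
  refine Matrix.ext_iff_trace_mul_left.2 fun e => ?_
  have he : e ∈ Submodule.span K s := by rw [hs]; trivial
  induction he using Submodule.span_induction with
  | mem e he => exact h e he
  | zero => simp
  | add a b _ _ ha hb => rw [add_mul, add_mul, Matrix.trace_add, Matrix.trace_add, ha, hb]
  | smul c a _ ha => rw [smul_mul_assoc, smul_mul_assoc, Matrix.trace_smul, Matrix.trace_smul, ha]

section Words
variable {K : Type*} [Field K] {d : ℕ} {G : Type*} [Group G]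
  (ρ : G →* Matrix (Fin d) (Fin d) K)

/-- The ball of radius `d ^ 2` contains a basis of the matrix algebra. -/
theorem exists_word_basis (hd : 0 < d) (hspan : Submodule.span K (Set.range ρ) = ⊤) {S : Finset G}
    (hS : Generates S) : ∃ (w : Fin d × Fin d → G)
      (e : Module.Basis (Fin d × Fin d) K (Matrix (Fin d) (Fin d) K)),
      (∀ k, w k ∈ wordBall S (d ^ 2)) ∧ ∀ k, e k = ρ (w k) := by
  have : Nonempty (Fin d) := ⟨⟨0, hd⟩⟩
  have htop : Submodule.span K (ρ '' wordBall S (d ^ 2)) = ⊤ := by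
    rcases span_chain (K := K) ρ hS (d ^ 2) with h | h
    · rw [eq_top_iff, ← hspan, Submodule.span_le]
      rintro _ ⟨g, rfl⟩
      exact h g
    · have h1 := Submodule.finrank_le (Submodule.span K (ρ '' wordBall S (d ^ 2)))
      rw [Module.finrank_matrix] at h1
      simp at h1
      nlinarith
  obtain ⟨b, hb, hbs, hli⟩ := exists_linearIndependent K (ρ '' wordBall S (d ^ 2))
  let e₀ : Module.Basis b K (Matrix (Fin d) (Fin d) K) := Module.Basis.mk hli (by
    rw [Subtype.range_coe, hbs, htop])
  let φ := e₀.indexEquiv (Matrix.stdBasis K (Fin d) (Fin d))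
  choose w hw hw' using fun k : Fin d × Fin d => hb (φ.symm k).2
  refine ⟨w, e₀.reindex φ, hw, fun k => ?_⟩
  rw [Module.Basis.reindex_apply, hw', Module.Basis.mk_apply]

/-- If the representation spans and has infinite image, then traces of short words leave any given
finite set. -/
theorem exists_trace_notMem (hd : 0 < d) (hspan : Submodule.span K (Set.range ρ) = ⊤)
    (hinf : (Set.range ρ).Infinite) {T : Set K} (hT : T.Finite) {S : Finset G}
    (hS : Generates S) : ∃ w ∈ wordBall S (d ^ 2 + T.ncard ^ (d * d)), (ρ w).trace ∉ T := by
  by_contra! hcon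
  obtain ⟨w, e, hw, he⟩ := exists_word_basis ρ hd hspan hS
  set k := T.ncard ^ (d * d) with hk
  let _ : MulAction G (Matrix (Fin d) (Fin d) K) := MulAction.compHom _ ρ
  have hsm : ∀ g : G, g • (1 : Matrix (Fin d) (Fin d) K) = ρ g := fun g => mul_one (ρ g)
  rcases orbit_chain hS (1 : Matrix (Fin d) (Fin d) K) k with h | h
  · refine hinf (((wordBall_finite S k).image ρ).subset ?_)
    rintro _ ⟨g, rfl⟩
    obtain ⟨w, hw, hwg⟩ := h g
    rw [hsm, hsm] at hwg
    exact ⟨w, hw, hwg⟩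
  · simp only [hsm] at h
    have hle : (ρ '' wordBall S k).ncard ≤ k := by
      have := hT.to_subtype
      let τ : (ρ '' wordBall S k) → (Fin d × Fin d → T) := fun x j => ⟨(ρ (w j) * x).trace, by
        obtain ⟨_, g, hg, rfl⟩ := x
        change (ρ (w j) * ρ g).trace ∈ T
        rw [← map_mul]
        exact hcon _ (mul_mem_wordBall (hw j) hg)⟩
      have hτ : Function.Injective τ := by
        intro x y hxy
        apply Subtype.ext
        refine eq_of_trace_mul e.span_eq ?_
        rintro _ ⟨j, rfl⟩
        have := congrArg Subtype.val (congrFun hxy j)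
        rw [he]
        exact this
      have h1 := Nat.card_le_card_of_injective τ hτ
      rw [Nat.card_coe_set_eq, Nat.card_fun, Nat.card_coe_set_eq] at h1
      simpa [hk] using h1
    exact absurd (h.trans hle) (Nat.not_succ_le_self k)

/-- The Gram determinant of the trace form in a basis of words. -/
theorem gram_det_ne_zero {w : Fin d × Fin d → G}
    {e : Module.Basis (Fin d × Fin d) K (Matrix (Fin d) (Fin d) K)} (he : ∀ k, e k = ρ (w k)) :
    (Matrix.of fun r l => (ρ (w r * w l)).trace).det ≠ 0 := by
  intro h0
  obtain ⟨u, hu, h⟩ := Matrix.exists_mulVec_eq_zero_iff.2 h0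
  refine hu ?_
  have hx : ∑ l, u l • e l = 0 := by
    refine eq_of_trace_mul e.span_eq ?_
    rintro _ ⟨r, rfl⟩
    have h1 := congrFun h r
    rw [mul_zero, Matrix.trace_zero, Finset.mul_sum, Matrix.trace_sum]
    rw [Pi.zero_apply] at h1
    rw [← h1]
    simp only [Matrix.mulVec, dotProduct, Matrix.of_apply, mul_smul_comm, Matrix.trace_smul,
      smul_eq_mul, he, map_mul]
    exact Finset.sum_congr rfl fun l _ => mul_comm _ _
  exact funext fun l => Fintype.linearIndependent_iff.1 e.linearIndependent u hx l

/-- The left regular representation in a basis of words `w` is expressed through traces of words, by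
the Gram matrix of the trace form. -/
theorem leftMulMatrix_eq {w : Fin d × Fin d → G}
    {e : Module.Basis (Fin d × Fin d) K (Matrix (Fin d) (Fin d) K)} (he : ∀ k, e k = ρ (w k))
    (g : G) : Algebra.leftMulMatrix e (ρ g) =
      (Matrix.of fun r l => (ρ (w r * w l)).trace)⁻¹ *
        Matrix.of fun r l => (ρ (w r * g * w l)).trace := by
  have h : (Matrix.of fun r l => (ρ (w r * g * w l)).trace) =
      (Matrix.of fun r l => (ρ (w r * w l)).trace) * Algebra.leftMulMatrix e (ρ g) := by
    ext r l
    have h1 : ρ g * e l = ∑ k, Algebra.leftMulMatrix e (ρ g) k l • e k := by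
      conv_lhs => rw [← e.sum_repr (ρ g * e l)]
      refine Finset.sum_congr rfl fun k _ => ?_
      rw [Algebra.leftMulMatrix_eq_repr_mul]
    have h2 : (ρ (w r * g * w l)).trace = (ρ (w r) * (ρ g * e l)).trace := by
      rw [he, map_mul, map_mul, mul_assoc]
    rw [Matrix.of_apply, h2, h1, Finset.mul_sum, Matrix.trace_sum, Matrix.mul_apply]
    refine Finset.sum_congr rfl fun k _ => ?_
    rw [mul_smul_comm, Matrix.trace_smul, smul_eq_mul, Matrix.of_apply, map_mul, he, mul_comm]
  rw [h, ← mul_assoc, Matrix.nonsing_inv_mul _ (gram_det_ne_zero ρ he).isUnit, one_mul]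

theorem wordBall_succ {S : Finset G} {n : ℕ} {g : G} (hg : g ∈ wordBall S (n + 1)) :
    ∃ s ∈ wordBall S 1, ∃ x ∈ wordBall S n, g = s * x := by
  obtain ⟨l, hl, hm, rfl⟩ := hg
  cases l with
  | nil => exact ⟨1, one_mem_wordBall S 1, 1, one_mem_wordBall S n, by simp⟩
  | cons a l =>
    refine ⟨a, mem_wordBall_one (hm a (by simp)), l.prod,
      ⟨l, by simpa using hl, fun y hy => hm y (by simp [hy]), rfl⟩, by simp⟩

end Words

/-- An element of `L` which is a root of a monic polynomial of degree `d` over an intermediate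
field `E` lies in an intermediate field of degree at most `d` times that of `E`. -/
theorem exists_field_of_root {L : Type*} [Field L] [Algebra ℚ L] (E : IntermediateField ℚ L)
    [FiniteDimensional ℚ E] {d : ℕ} {p : Polynomial E} (hp : p.Monic) (hd : p.natDegree = d) {x : L}
    (hx : Polynomial.aeval x p = 0) : ∃ F : IntermediateField ℚ L, FiniteDimensional ℚ F ∧
      Module.finrank ℚ F ≤ d * Module.finrank ℚ E ∧ x ∈ F := by
  have hint : IsIntegral E x := ⟨p, hp, hx⟩
  let F' := IntermediateField.adjoin E {x}
  have h1 : FiniteDimensional E F' := IntermediateField.adjoin.finiteDimensional hint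
  have h2 : Module.finrank E F' ≤ d := by
    rw [IntermediateField.adjoin.finrank hint, ← hd]
    exact Polynomial.natDegree_le_of_dvd (minpoly.dvd E x hx) hp.ne_zero
  refine ⟨F'.restrictScalars ℚ, ?_, ?_, IntermediateField.mem_adjoin_simple_self E x⟩
  · exact (FiniteDimensional.trans ℚ E F' : FiniteDimensional ℚ F')
  · have h3 : Module.finrank ℚ F' = Module.finrank ℚ E * Module.finrank E F' :=
      (Module.finrank_mul_finrank ℚ E F').symm
    change Module.finrank ℚ F' ≤ _
    rw [h3, mul_comm]
    exact Nat.mul_le_mul_right _ h2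

end EMO

/-! ### Large traces and tameness of short words -/

namespace EMO
section TameWords
variable {K : Type*} [Field K] [Algebra ℚ K] [Algebra.IsAlgebraic ℚ K] {d m : ℕ}
  {G : Type*} [Group G] (ρ : G →* Matrix (Fin d) (Fin d) K)
  {I : Type*} {S : I → Finset G} {q : I → ℝ}
  {w : I → Fin d × Fin d → G}
  {e : I → Module.Basis (Fin d × Fin d) K (Matrix (Fin d) (Fin d) K)}

/-- In the left regular representation, written in a basis made of short words, words of bounded
length have tame matrices as soon as their traces are bounded. -/
theorem tame_leftMulMatrix (hint : ∀ g i j, ρ g i j ∈ SInt K m) (E : IntermediateField ℚ K)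
    [FiniteDimensional ℚ E] (hE : ∀ g i j, ρ g i j ∈ E) (hq : ∀ i, 2 ≤ q i)
    (hw : ∀ i k, w i k ∈ wordBall (S i) (d ^ 2)) (he : ∀ i k, e i k = ρ (w i k)) {C : ℕ}
    (htr : ∀ i, ∀ v ∈ Places K m, ∀ x ∈ wordBall (S i) (d ^ 2 + 1 + d ^ 2),
      v (ρ x).trace ≤ q i ^ C) (n : ℕ) :
    ∀ g : I → G, (∀ i, g i ∈ wordBall (S i) n) →
      TameM m q (fun i => Algebra.leftMulMatrix (e i) (ρ (g i))) := by
  have h0 : ∀ x : I → G, (∀ i, x i ∈ wordBall (S i) (d ^ 2 + 1 + d ^ 2)) →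
      Tame m q (fun i => (ρ (x i)).trace) := fun x hx =>
    Tame.of_int (D := Module.finrank ℚ E) (C := C) hq (fun i => sum_mem fun j _ => hint _ _ _)
      (fun i => ⟨E, inferInstance, le_rfl, sum_mem fun j _ => hE _ _ _⟩)
      (fun i v hv => htr i v hv _ (hx i))
  induction n with
  | zero =>
    intro g hg
    have : (fun i => Algebra.leftMulMatrix (e i) (ρ (g i))) = fun _ => 1 := by
      funext i
      obtain ⟨l, hl, -, hlg⟩ := hg i
      rw [Nat.le_zero, List.length_eq_zero_iff] at hl
      rw [← hlg, hl, List.prod_nil, map_one, map_one]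
    rw [this]
    exact TameM.one hq
  | succ n ih =>
    intro g hg
    choose s hs x hx hsx using fun i => wordBall_succ (hg i)
    have h1 : TameM m q (fun i => Algebra.leftMulMatrix (e i) (ρ (s i))) := by
      simp only [fun i => leftMulMatrix_eq ρ (he i) (s i)]
      refine TameM.mul hq (TameM.inv hq ?_) ?_
      · intro a b
        exact h0 _ fun i => wordBall_mono _ (by omega) (mul_mem_wordBall (hw i a) (hw i b))
      · intro a b
        exact h0 _ fun i => mul_mem_wordBall (mul_mem_wordBall (hw i a) (hs i)) (hw i b)
    simp only [hsx, map_mul]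
    exact TameM.mul hq h1 (ih x hx)

theorem exists_matrix_lift {R : Type*} [CommRing R] {L : Type*} [CommRing L] (f : R →+* L)
    {M : Matrix (Fin d) (Fin d) L} (h : ∀ i j, ∃ r, f r = M i j) :
    ∃ M' : Matrix (Fin d) (Fin d) R, M = M'.map f := by
  choose r hr using h
  exact ⟨Matrix.of r, by ext; simp [hr]⟩

open Polynomial in
/-- Eigenvalues of a tame family are tame: they are `m`-integers of bounded degree, bounded by the
operator norm in the left regular representation. -/
theorem tame_eigenvalue (hm : m ≠ 0) (hint : ∀ g i j, ρ g i j ∈ SInt K m)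
    (E : IntermediateField ℚ K)
    [FiniteDimensional ℚ E] (hE : ∀ g i j, ρ g i j ∈ E) (hq : ∀ i, 2 ≤ q i) (g : I → G)
    (hg : TameM m q (fun i => Algebra.leftMulMatrix (e i) (ρ (g i)))) (lam : I → K)
    (hlam : ∀ i, (ρ (g i)).charpoly.IsRoot (lam i)) : Tame m q lam := by
  have := algebraRat.charZero K
  obtain ⟨C, hC⟩ := hg.bound hm hq
  refine Tame.of_int (D := d * Module.finrank ℚ E) (C := C) hq (fun i => ?_) (fun i => ?_)
    fun i v hv => ?_
  · obtain ⟨M', hM'⟩ := exists_matrix_lift (SInt K m).subtype (M := ρ (g i)) fun a b =>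
      ⟨⟨_, hint (g i) a b⟩, rfl⟩
    refine mem_SInt_of_root (Nat.cast_ne_zero.2 hm) (ρ (g i)).charpoly_monic (fun j => ?_) (hlam i)
    rw [hM', Matrix.charpoly_map, coeff_map]
    exact (M'.charpoly.coeff j).2
  · obtain ⟨M', hM'⟩ := exists_matrix_lift (algebraMap E K) (M := ρ (g i)) fun a b =>
      ⟨⟨_, hE (g i) a b⟩, rfl⟩
    refine exists_field_of_root E M'.charpoly_monic ?_ ?_
    · rw [Matrix.charpoly_natDegree_eq_dim, Fintype.card_fin]
    · rw [aeval_def, ← eval_map, ← Matrix.charpoly_map, ← hM']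
      exact hlam i
  · obtain ⟨u, hu, h⟩ := exists_eigenmatrix _ (hlam i)
    refine (le_opNorm_of_eigen v (M := Algebra.leftMulMatrix (e i) (ρ (g i)))
      (w := Algebra.leftMulMatrix (e i) u) (x := lam i) ?_ ?_).trans (hC C le_rfl i v hv)
    · rwa [Ne, map_eq_zero_iff _ (Algebra.leftMulMatrix_injective (e i))]
    · rw [← map_mul, h, map_smul]

end TameWords

/-- A word of bounded length and a place at which the trace of this word is both large and maximal
among all traces of words of that length at all places. -/
theorem exists_large_trace {K : Type*} [Field K] [Algebra ℚ K] [Algebra.IsAlgebraic ℚ K]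
    {d m : ℕ} (hm : m ≠ 0) {G : Type*} [Group G] (ρ : G →* Matrix (Fin d) (Fin d) K) (hd : 0 < d)
    (hspan : Submodule.span K (Set.range ρ) = ⊤) (hinf : (Set.range ρ).Infinite)
    (hint : ∀ g i j, ρ g i j ∈ SInt K m) (E : IntermediateField ℚ K)
    [FiniteDimensional ℚ E] (hE : ∀ g i j, ρ g i j ∈ E) (B : ℝ) (N₀ : ℕ) :
    ∃ N ≥ N₀, ∀ S : Finset G, Generates S → ∃ v ∈ Places K m, ∃ γ ∈ wordBall S N,
      B < v (ρ γ).trace ∧ ∀ v' ∈ Places K m, ∀ x ∈ wordBall S N,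
        v' (ρ x).trace ≤ v (ρ γ).trace := by
  set T := {x : K | x ∈ SInt K m ∧ (minpoly ℚ x).natDegree ≤ Module.finrank ℚ E ∧
    ∀ v ∈ Places K m, v x ≤ B} with hT
  have hTf : T.Finite := northcott hm _ _
  refine ⟨N₀ + (d ^ 2 + T.ncard ^ (d * d)), by omega, fun S hS => ?_⟩
  set N := N₀ + (d ^ 2 + T.ncard ^ (d * d)) with hN
  have hfin : (⋃ x ∈ wordBall S N, (fun v : AbsoluteValue K ℝ => v (ρ x).trace) ''
      Places K m).Finite :=
    (wordBall_finite S N).biUnion fun x _ => finite_places_values hm _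
  obtain ⟨v₀, hv₀⟩ := places_nonempty K m
  obtain ⟨r, hr, hmax⟩ := Set.exists_max_image _ id hfin ⟨v₀ (ρ 1).trace, by
    simp only [Set.mem_iUnion]
    exact ⟨1, one_mem_wordBall S N, v₀, hv₀, rfl⟩⟩
  simp only [Set.mem_iUnion] at hr
  obtain ⟨γ, hγ, v, hv, rfl⟩ := hr
  have hmax' : ∀ v' ∈ Places K m, ∀ x ∈ wordBall S N, v' (ρ x).trace ≤ v (ρ γ).trace :=
    fun v' hv' x hx => hmax (v' (ρ x).trace) (by
      simp only [Set.mem_iUnion]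
      exact ⟨x, hx, v', hv', rfl⟩)
  refine ⟨v, hv, γ, hγ, ?_, hmax'⟩
  obtain ⟨x, hx, hxT⟩ := exists_trace_notMem ρ hd hspan hinf hTf hS
  by_contra! hle
  refine hxT ⟨sum_mem fun j _ => hint _ _ _, natDegree_minpoly_le_finrank E inferInstance
    (sum_mem fun j _ => hE _ _ _), fun v' hv' => ?_⟩
  exact (hmax' v' hv' x (wordBall_mono _ (by omega) hx)).trans hle

end EMO

/-! ### Free pairs over a number field -/

namespace EMO
section Poly
variable {K : Type*} [Field K] [Algebra ℚ K] {d m : ℕ}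
  {I : Type*} {q : I → ℝ} {κ : Type*} [Fintype κ] [DecidableEq κ]

theorem TameM.ite (hq : ∀ i, 2 ≤ q i) {M N : I → Matrix κ κ K} (hM : TameM m q M)
    (hN : TameM m q N) (p : I → Prop) [DecidablePred p] :
    TameM m q (fun i => if p i then M i else N i) := by
  intro a b
  have : (fun i => (if p i then M i else N i) a b) = fun i => if p i then M i a b else N i a b := by
    funext i; split_ifs <;> rfl
  rw [this]
  exact (hM a b).ite hq (hN a b) p

open Polynomial in
theorem TameM.aeval_prod (hq : ∀ i, 2 ≤ q i) {g : I → Matrix κ κ K} (hg : TameM m q g)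
    {lam : I → Fin d → K} (hlam : ∀ k, Tame m q (fun i => lam i k)) (A : I → Finset (Fin d)) :
    TameM m q (fun i => aeval (g i) (∏ k ∈ A i, (X - C (lam i k)))) := by
  have h : (fun i => aeval (g i) (∏ k ∈ A i, (X - C (lam i k)))) = fun i =>
      ((Finset.univ : Finset (Fin d)).toList.map fun k =>
        if k ∈ A i then g i - lam i k • 1 else 1).prod := by
    funext i
    rw [show ∏ k ∈ A i, (X - C (lam i k)) = ∏ k, if k ∈ A i then X - C (lam i k) else 1 by
      rw [Finset.prod_ite_mem, Finset.univ_inter], ← Finset.prod_map_toList, map_list_prod,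
      List.map_map]
    congr 2
    funext k
    simp only [Function.comp]
    split_ifs
    · rw [map_sub, aeval_X, aeval_C, Algebra.algebraMap_eq_smul_one]
    · exact map_one (aeval (g i) : K[X] →ₐ[K] Matrix κ κ K)
  rw [h]
  exact TameM.listProd hq _ fun k =>
    TameM.ite hq (hg.sub hq (TameM.smul hq (hlam k) (TameM.one hq))) (TameM.one hq) _

end Poly

open Polynomial in
/-- Over a ring of `S`-integers: for a linear group which is infinite and strongly irreducible,
every generating set has two short words generating a free semigroup, even modulo scalars. -/
theorem separated_pairs {K : Type*} [Field K] [Algebra ℚ K] [Algebra.IsAlgebraic ℚ K]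
    [IsAlgClosed K] {d m D : ℕ} (hm : m ≠ 0) (hd : 0 < d)
    {G : Type*} [Group G] (ρ : G →* Matrix (Fin d) (Fin d) K)
    (hspan : Submodule.span K (Set.range ρ) = ⊤)
    (hpos : ∀ S : Finset G, Generates S →
      ∀ π : Matrix (Fin d) (Fin d) K, π * π = π → π ≠ 0 → π ≠ 1 →
      ∃ b ∈ wordBall S D, (π * ρ b * π + 1 - π).det ≠ 0 ∧ (1 - π) * ρ b * π ≠ 0)
    (hinf : (Set.range ρ).Infinite) (hdet : ∀ g, (ρ g).det = 1)
    (hint : ∀ g i j, ρ g i j ∈ SInt K m) (E : IntermediateField ℚ K)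
    [FiniteDimensional ℚ E] (hE : ∀ g i j, ρ g i j ∈ E) :
    ∃ M, ∀ S : Finset G, Generates S → ∃ a ∈ wordBall S M, ∃ b ∈ wordBall S M,
      ∀ u ∈ Submonoid.closure {a, b}, ∀ u' ∈ Submonoid.closure {a, b}, ∀ x : K,
        ρ (a * u) ≠ x • ρ (b * u') := by
  classical
  obtain ⟨N, hN, hlarge⟩ := exists_large_trace hm ρ hd hspan hinf hint E hE (16 ^ (2 * d))
    (d ^ 2 + 1 + d ^ 2)
  -- tameness is relative to families indexed by the generating sets, so that every exponent below
  -- is independent of `S`; the root is such that `q ^ (2 * d)` is the maximal trace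
  let I := {S : Finset G // Generates S}
  choose v hv γ hγ hbig hmax using fun i : I => hlarge i.1 i.2
  let q : I → ℝ := fun i => (v i (ρ (γ i)).trace) ^ (((2 * d : ℕ) : ℝ)⁻¹)
  have hqP : ∀ i, q i ^ (2 * d) = v i (ρ (γ i)).trace := fun i =>
    Real.rpow_inv_natCast_pow ((v i).nonneg _) (by omega)
  have hq0 : ∀ i, 0 ≤ q i := fun i => Real.rpow_nonneg ((v i).nonneg _) _
  have hq16 : ∀ i, 16 ≤ q i := fun i => by
    refine (lt_of_pow_lt_pow_left₀ (2 * d) (hq0 i) ?_).le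
    rw [hqP]; exact hbig i
  have hq2 : ∀ i, 2 ≤ q i := fun i => by linarith [hq16 i]
  have hq1 : ∀ i, 1 ≤ q i := fun i => by linarith [hq16 i]
  choose w e hw he using fun i : I => exists_word_basis ρ hd hspan i.2
  have htame := tame_leftMulMatrix (S := fun i : I => i.1) (q := q) (m := m) (w := w) (e := e) ρ
    hint E hE hq2 hw he (C := 2 * d) fun i v' hv' x hx => by
      rw [hqP]; exact hmax i v' hv' x (wordBall_mono _ hN hx)
  have hγt := htame N γ hγ
  choose lam hch htr hdt using fun i : I => exists_eigenvalues (ρ (γ i))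
  have hprod : ∀ i, ∏ k, lam i k = 1 := fun i => by rw [← hdt, hdet]
  have hlam0 : ∀ i k, lam i k ≠ 0 := fun i k => by
    have : ∏ k, lam i k ≠ 0 := by rw [hprod]; exact one_ne_zero
    exact Finset.prod_ne_zero_iff.1 this k (Finset.mem_univ k)
  have hlamt : ∀ k, Tame m q (fun i => lam i k) := fun k =>
    tame_eigenvalue ρ hm hint E hE hq2 γ hγt _ fun i => by
      rw [IsRoot.def, hch, eval_prod]
      exact Finset.prod_eq_zero (Finset.mem_univ k) (by simp)
  -- the largest eigenvalue is at least the trace divided by the dimension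
  have hk₀ : ∀ i, ∃ k, q i ^ d ≤ v i (lam i k) := fun i => by
    by_contra! hcon
    have : Nonempty (Fin d) := ⟨⟨0, hd⟩⟩
    have h1 : v i (∑ k, lam i k) ≤ ∑ k, v i (lam i k) :=
      IsAbsoluteValue.abv_sum _ _ _
    have h2 : ∑ k, v i (lam i k) < ∑ _k : Fin d, q i ^ d :=
      Finset.sum_lt_sum_of_nonempty Finset.univ_nonempty fun k _ => hcon k
    rw [Finset.sum_const, Finset.card_univ, Fintype.card_fin, nsmul_eq_mul] at h2
    have h3 : (d : ℝ) ≤ q i ^ d := by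
      calc (d : ℝ) ≤ 2 ^ d := by exact_mod_cast Nat.lt_two_pow_self.le
        _ ≤ _ := by gcongr; exact hq2 i
    have h4 : q i ^ (2 * d) ≤ v i (∑ k, lam i k) := by rw [hqP, htr]
    have h5 : q i ^ (2 * d) = q i ^ d * q i ^ d := by rw [two_mul, pow_add]
    have h6 : (d : ℝ) * q i ^ d ≤ q i ^ d * q i ^ d := by gcongr
    linarith
  choose k₀ hk₀ using hk₀
  -- no eigenvalue has absolute value strictly between `θ / q` and `θ`; `A` is the set of the
  -- large ones
  choose θ hθ1 hθk hθgap hθex using fun i => exists_gap (fun k => v i (lam i k))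
    (by rw [← map_prod, hprod, map_one]) (by linarith [hq16 i] : 1 < q i) (k₀ i) (hk₀ i)
  let A : I → Finset (Fin d) := fun i => Finset.univ.filter fun k => θ i ≤ v i (lam i k)
  have hA : ∀ i k, k ∈ A i ↔ θ i ≤ v i (lam i k) := fun i k => by simp [A]
  have hA' : ∀ i, ∀ k ∉ A i, v i (lam i k) ≤ θ i / q i := fun i k hk =>
    (hθgap i k).resolve_left fun h => hk ((hA i k).2 h)
  have hθq : ∀ i, θ i / q i < θ i := fun i =>
    div_lt_self (by linarith [hθ1 i]) (by linarith [hq16 i])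
  choose π y hy hπy hππ hγπ hf hh hπ0 hπ1 using fun i => spectral_projection (ρ (γ i)) (lam i)
    (hch i) (A i)
    (fun k hk l hl heq => by
      have h1 := (hA i k).1 hk
      rw [heq] at h1
      linarith [hA' i l hl, hθq i])
    ⟨k₀ i, (hA i _).2 (hθk i)⟩
    (by
      obtain ⟨k, hk⟩ := hθex i
      refine ⟨k, fun h => ?_⟩
      linarith [(hA i k).1 h, hθq i])
  -- `b` moves the image of `π` into general position
  choose b hb hbz hbδ using fun i : I => hpos i.1 i.2 (π i) (hππ i) (hπ0 i) (hπ1 i)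
  let L : ∀ i : I, Matrix (Fin d) (Fin d) K →ₐ[K] Matrix (Fin d × Fin d) (Fin d × Fin d) K :=
    fun i => Algebra.leftMulMatrix (e i)
  have hLinj : ∀ i, Function.Injective (L i) := fun i => Algebra.leftMulMatrix_injective (e i)
  have hLγ : TameM m q (fun i => L i (ρ (γ i))) := hγt
  have hLγ' : TameM m q (fun i => L i (ρ (γ i)⁻¹)) := htame N _ fun i => inv_mem_wordBall (hγ i)
  have hLb : TameM m q (fun i => L i (ρ (b i))) := htame _ b hb
  have hLA : ∀ B : I → Finset (Fin d),
      TameM m q (fun i => L i (aeval (ρ (γ i)) (∏ k ∈ B i, (X - C (lam i k))))) := fun B => by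
    simp only [← aeval_algHom_apply]
    exact TameM.aeval_prod hq2 hLγ hlamt B
  -- the projection is a polynomial in `γ` times the inverse of `P(γ) + Q(γ)`, where `P` and `Q` are
  -- the products over `A` and its complement
  have hLπ : TameM m q (fun i => L i (π i)) := by
    have : (fun i => L i (π i)) = fun i =>
        (L i (aeval (ρ (γ i)) (∏ k ∈ A i, (X - C (lam i k)))) +
          L i (aeval (ρ (γ i)) (∏ k ∈ (A i)ᶜ, (X - C (lam i k)))))⁻¹ *
        L i (aeval (ρ (γ i)) (∏ k ∈ (A i)ᶜ, (X - C (lam i k)))) := by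
      funext i
      have h1 : (L i (aeval (ρ (γ i)) (∏ k ∈ A i, (X - C (lam i k)))) +
          L i (aeval (ρ (γ i)) (∏ k ∈ (A i)ᶜ, (X - C (lam i k)))))⁻¹ = L i (y i) :=
        Matrix.inv_eq_left_inv (by rw [← map_add, ← map_mul, hy, map_one])
      rw [h1, ← map_mul, ← hπy]
    rw [this]
    exact ((hLA A).add hq2 (hLA fun i => (A i)ᶜ)).inv hq2 |>.mul hq2 (hLA fun i => (A i)ᶜ)
  have hLπ' : TameM m q (fun i => 1 - L i (π i)) := (TameM.one hq2).sub hq2 hLπ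
  have hLz : TameM m q (fun i => (L i (π i) * L i (ρ (b i)) * L i (π i) + 1 - L i (π i))⁻¹) :=
    ((((hLπ.mul hq2 hLb).mul hq2 hLπ).add hq2 (TameM.one hq2)).sub hq2 hLπ).inv hq2
  have hLδ : TameM m q (fun i => (1 - L i (π i)) * L i (ρ (b i)) * L i (π i)) :=
    (hLπ'.mul hq2 hLb).mul hq2 hLπ
  have hLlam : ∀ k, TameM m q (fun i => L i (ρ (γ i)) - algebraMap K _ (lam i k)) := fun k => by
    simp only [Algebra.algebraMap_eq_smul_one]
    exact hLγ.sub hq2 (TameM.smul hq2 (hlamt k) (TameM.one hq2))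
  have hLlam' : ∀ k, TameM m q (fun i => L i (ρ (γ i)⁻¹) - algebraMap K _ (lam i k)⁻¹) :=
    fun k => by
      simp only [Algebra.algebraMap_eq_smul_one]
      exact hLγ'.sub hq2 (TameM.smul hq2 (hlamt k).inv (TameM.one hq2))
  choose c₁ hc₁ using fun k => (hLlam k).bound hm hq2
  choose c₂ hc₂ using fun k => (hLlam' k).bound hm hq2
  choose c₃ hc₃ using fun k => (hlamt k).bound hm hq2
  obtain ⟨c₄, hc₄⟩ := hLπ.bound hm hq2
  obtain ⟨c₅, hc₅⟩ := hLπ'.bound hm hq2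
  obtain ⟨c₆, hc₆⟩ := hLb.bound hm hq2
  obtain ⟨c₇, hc₇⟩ := hLz.bound hm hq2
  obtain ⟨c₈, hc₈⟩ := hLδ.lower_bound hm hq2
  set c := (∑ k, c₁ k) + (∑ k, c₂ k) + (∑ k, c₃ k) + c₄ + c₅ + c₆ + c₇ + c₈ with hc
  have hs₁ : ∀ k, c₁ k ≤ ∑ k, c₁ k := fun k =>
    Finset.single_le_sum (fun _ _ => Nat.zero_le _) (Finset.mem_univ k)
  have hs₂ : ∀ k, c₂ k ≤ ∑ k, c₂ k := fun k =>
    Finset.single_le_sum (fun _ _ => Nat.zero_le _) (Finset.mem_univ k)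
  have hs₃ : ∀ k, c₃ k ≤ ∑ k, c₃ k := fun k =>
    Finset.single_le_sum (fun _ _ => Nat.zero_le _) (Finset.mem_univ k)
  obtain ⟨t, ht⟩ : ∃ t, t = 2 * ((5 * c + 5) * (d + 1) + 7 * c + 4) := ⟨_, rfl⟩
  refine ⟨D + t * N, fun S hS => ?_⟩
  let i : I := ⟨S, hS⟩
  have hγT : γ i ^ t ∈ wordBall S (t * N) := pow_mem_wordBall (hγ i) t
  refine ⟨γ i ^ t, wordBall_mono _ (by omega) hγT, b i * γ i ^ t, mul_mem_wordBall (hb i) hγT, ?_⟩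
  have hpp := local_ping_pong (v i) (lam i) (hlam0 i) (hq16 i) (c := c) (hθ1 i)
    ((hθk i).trans ((hc₃ (k₀ i) i _ (hv i)).trans
      (pow_le_pow_right₀ (hq1 i) (by have := hs₃ (k₀ i); omega)))) (A i)
    (fun k hk => (hA i k).1 hk) (hA' i) (g := L i (ρ (γ i))) (g' := L i (ρ (γ i)⁻¹))
    (π := L i (π i)) (b := L i (ρ (b i)))
    (z' := (L i (π i) * L i (ρ (b i)) * L i (π i) + 1 - L i (π i))⁻¹)
    (by rw [← map_mul, ← map_mul, inv_mul_cancel, map_one, map_one])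
    (by rw [← map_mul, ← map_mul, mul_inv_cancel, map_one, map_one])
    (by rw [← map_mul, hππ])
    (by rw [Ne, map_eq_zero_iff _ (hLinj i)]; exact hπ0 i)
    (by rw [← map_mul, hγπ, map_mul])
    (by rw [aeval_algHom_apply, ← map_mul, hf, map_zero])
    (by rw [aeval_algHom_apply, ← map_one (L i), ← map_sub, ← map_mul, hh, map_zero])
    (by
      refine Matrix.nonsing_inv_mul _ ?_
      rw [← Matrix.isUnit_iff_isUnit_det, ← map_mul, ← map_mul, ← map_one (L i), ← map_add,
        ← map_sub]
      exact ((Matrix.isUnit_iff_isUnit_det _).2 (hbz i).isUnit).map (L i))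
    (fun k => hc₁ k c (by have := hs₁ k; omega) i _ (hv i))
    (fun k => hc₂ k c (by have := hs₂ k; omega) i _ (hv i))
    (hc₄ c (by omega) i _ (hv i)) (hc₅ c (by omega) i _ (hv i)) (hc₆ c (by omega) i _ (hv i))
    (hc₇ c (by omega) i _ (hv i))
    (hc₈ c (by omega) i (by
      rw [← map_one (L i), ← map_sub, ← map_mul, ← map_mul, Ne, map_eq_zero_iff _ (hLinj i)]
      exact hbδ i) _ (hv i)) ht
  let f : G →* Matrix (Fin d × Fin d) (Fin d × Fin d) K := (L i : _ →* _).comp ρ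
  have hf' : ∀ g, f g = L i (ρ g) := fun g => rfl
  have hcl : ∀ u ∈ Submonoid.closure {γ i ^ t, b i * γ i ^ t},
      f u ∈ Submonoid.closure {L i (ρ (γ i)) ^ t, L i (ρ (b i)) * L i (ρ (γ i)) ^ t} := by
    intro u hu
    have h1 := Submonoid.mem_map_of_mem f hu
    rw [MonoidHom.map_mclosure, Set.image_pair, map_mul, map_pow] at h1
    exact h1
  intro u hu u' hu' x heq
  refine hpp (f u) (hcl u hu) (f u') (hcl u' hu') x ?_
  have h2 := congrArg (L i) heq
  rw [map_smul] at h2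
  simpa only [hf', map_mul, map_pow] using h2

end EMO

/-! ### Specialisation -/

namespace EMO
/-- Specialisation: a finitely generated domain over `ℚ` has `ℚ`-points with values in number
fields of bounded degree, avoiding any given nonzero element. -/
theorem exists_specialization (A : Type*) [CommRing A] [IsDomain A] [Algebra ℚ A]
    [hA : Algebra.FiniteType ℚ A] : ∃ D : ℕ, ∀ f : A, f ≠ 0 →
      ∃ (θ : A →ₐ[ℚ] AlgebraicClosure ℚ) (E : IntermediateField ℚ (AlgebraicClosure ℚ)),
        θ f ≠ 0 ∧ FiniteDimensional ℚ E ∧ Module.finrank ℚ E ≤ D ∧ ∀ a, θ a ∈ E := by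
  obtain ⟨n, g, hg, hfin⟩ := exists_finite_inj_algHom_of_fg ℚ A
  let _ : Algebra (MvPolynomial (Fin n) ℚ) A := g.toRingHom.toAlgebra
  have hgm : ∀ p, algebraMap (MvPolynomial (Fin n) ℚ) A p = g p := fun p => rfl
  have hmod : Module.Finite (MvPolynomial (Fin n) ℚ) A := hfin
  obtain ⟨s, hs⟩ := hmod.1
  have hinj : Function.Injective (algebraMap (MvPolynomial (Fin n) ℚ) A) := hg
  refine ⟨s.card, fun f hf => ?_⟩
  -- a nonzero multiple of `f` in the polynomial ring, and a rational point where it is nonzero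
  obtain ⟨p, hp0, hfp⟩ : ∃ p : MvPolynomial (Fin n) ℚ, p ≠ 0 ∧ f ∣ g p := by
    have h1 := Ideal.comap_ne_bot_of_integral_mem (R := MvPolynomial (Fin n) ℚ)
      (I := Ideal.span {f}) hf (Ideal.mem_span_singleton_self f) (Algebra.IsIntegral.isIntegral f)
    obtain ⟨p, hp, hp0⟩ := Submodule.exists_mem_ne_zero_of_ne_bot h1
    exact ⟨p, hp0, Ideal.mem_span_singleton.1 hp⟩
  obtain ⟨x, hx⟩ : ∃ x : Fin n → ℚ, MvPolynomial.eval x p ≠ 0 := by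
    by_contra! h
    exact hp0 (MvPolynomial.funext fun x => by rw [h, map_zero])
  have hsurj : Function.Surjective (MvPolynomial.eval x : MvPolynomial (Fin n) ℚ →+* ℚ) :=
    fun r => ⟨MvPolynomial.C r, MvPolynomial.eval_C r⟩
  let P : Ideal (MvPolynomial (Fin n) ℚ) := RingHom.ker (MvPolynomial.eval x)
  have hP : P.IsMaximal := RingHom.ker_isMaximal_of_surjective _ hsurj
  obtain ⟨Q, hQ, hQP⟩ := Ideal.exists_ideal_over_maximal_of_isIntegral (S := A) P (by
    rw [(RingHom.injective_iff_ker_eq_bot _).1 hinj]; exact bot_le)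
  let _ : Field (A ⧸ Q) := Ideal.Quotient.field Q
  have hval : ∀ r : MvPolynomial (Fin n) ℚ,
      Ideal.Quotient.mkₐ ℚ Q (g r) = algebraMap ℚ (A ⧸ Q) (MvPolynomial.eval x r) := by
    intro r
    have h1 : r - MvPolynomial.C (MvPolynomial.eval x r) ∈ Q.comap (algebraMap _ A) := by
      rw [hQP, RingHom.mem_ker, map_sub, MvPolynomial.eval_C, sub_self]
    rw [Ideal.mem_comap, hgm, map_sub] at h1
    have h2 := (Ideal.Quotient.mk_eq_mk_iff_sub_mem _ _).2 h1
    refine h2.trans ?_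
    rw [← MvPolynomial.algebraMap_eq, AlgHom.commutes]
    rfl
  have hspan : Submodule.span ℚ (Ideal.Quotient.mkₐ ℚ Q '' s) = ⊤ := by
    rw [eq_top_iff]
    rintro b -
    obtain ⟨a, rfl⟩ := Ideal.Quotient.mkₐ_surjective ℚ Q b
    have ha : a ∈ Submodule.span (MvPolynomial (Fin n) ℚ) (s : Set A) := by rw [hs]; trivial
    induction ha using Submodule.span_induction with
    | mem a ha => exact Submodule.subset_span ⟨a, ha, rfl⟩
    | zero => rw [map_zero]; exact zero_mem _
    | add a b _ _ ha hb => rw [map_add]; exact add_mem ha hb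
    | smul r a _ ha =>
      rw [Algebra.smul_def, hgm, map_mul, hval, ← Algebra.smul_def]
      exact Submodule.smul_mem _ _ ha
  classical
  have hspan' : Submodule.span ℚ ((s.image (Ideal.Quotient.mkₐ ℚ Q) : Finset (A ⧸ Q)) :
      Set (A ⧸ Q)) = ⊤ := by rw [Finset.coe_image]; exact hspan
  have hfd : Module.Finite ℚ (A ⧸ Q) := ⟨⟨_, hspan'⟩⟩
  have hrank : Module.finrank ℚ (A ⧸ Q) ≤ s.card := by
    have h1 := finrank_span_finset_le_card (R := ℚ) (s.image (Ideal.Quotient.mkₐ ℚ Q))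
    rw [Set.finrank, hspan', finrank_top] at h1
    exact h1.trans Finset.card_image_le
  let σ : (A ⧸ Q) →ₐ[ℚ] AlgebraicClosure ℚ := IsAlgClosed.lift
  refine ⟨σ.comp (Ideal.Quotient.mkₐ ℚ Q), σ.fieldRange, ?_, ?_, ?_, fun a => ⟨_, rfl⟩⟩
  · rw [AlgHom.comp_apply, Ne, map_eq_zero σ]
    intro h0
    have h1 : Ideal.Quotient.mkₐ ℚ Q (g p) = 0 := by
      obtain ⟨c, hc⟩ := hfp
      rw [hc, map_mul, h0, zero_mul]
    rw [hval, map_eq_zero] at h1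
    exact hx h1
  · exact Module.Finite.equiv σ.equivFieldRange.toLinearEquiv
  · rw [← σ.equivFieldRange.toLinearEquiv.finrank_eq]; exact hrank

end EMO

/-! ### Strongly irreducible groups of determinant one -/

namespace EMO
section Model
variable {K : Type*} [Field K] [Algebra ℚ K] {d : ℕ} {G : Type*} [Group G]

/-- A subring containing the entries of a representation on generators and their inverses contains
all its entries. -/
theorem entries_mem (ρ : G →* Matrix (Fin d) (Fin d) K) {S : Finset G} (hS : Generates S)
    (R : Subring K) (h : ∀ s, (s ∈ S ∨ s⁻¹ ∈ S) → ∀ i j, ρ s i j ∈ R) (g : G) :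
    ∀ i j, ρ g i j ∈ R := by
  refine generates_induction hS (p := fun g => ∀ i j, ρ g i j ∈ R) ?_ ?_ g
  · intro i j
    rw [map_one, Matrix.one_apply]
    split_ifs
    · exact one_mem _
    · exact zero_mem _
  · intro s x hs hx i j
    rw [map_mul, Matrix.mul_apply]
    exact sum_mem fun k _ => mul_mem (h s hs _ _) (hx _ _)

/-- The entries of a representation of a finitely generated group lie in a finitely generated
`ℚ`-algebra. -/
theorem exists_model (hfg : Group.FG G) (ρ : G →* Matrix (Fin d) (Fin d) K) :
    ∃ A : Subalgebra ℚ K, Algebra.FiniteType ℚ A ∧ ∃ ρA : G →* Matrix (Fin d) (Fin d) A,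
      ∀ g, ρ g = (ρA g).map A.val := by
  classical
  obtain ⟨S, hS⟩ := hfg.out
  let s : Finset K := (S ×ˢ Finset.univ ×ˢ Finset.univ).image (fun p => ρ p.1 p.2.1 p.2.2) ∪
    (S ×ˢ Finset.univ ×ˢ Finset.univ).image (fun p => ρ p.1⁻¹ p.2.1 p.2.2)
  let A := Algebra.adjoin ℚ (s : Set K)
  have hA : Algebra.FiniteType ℚ A :=
    (Subalgebra.fg_iff_finiteType A).1 ⟨s, rfl⟩
  have hmem : ∀ g i j, ρ g i j ∈ A := fun g => entries_mem ρ hS A.toSubring (by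
    intro x hx i j
    refine Algebra.subset_adjoin (Finset.mem_coe.2 (Finset.mem_union.2 ?_))
    rcases hx with hx | hx
    · exact Or.inl (Finset.mem_image.2 ⟨(x, i, j), by simpa using hx, rfl⟩)
    · exact Or.inr (Finset.mem_image.2 ⟨(x⁻¹, i, j), by simpa using hx, by simp⟩)) g
  refine ⟨A, hA, ⟨⟨fun g => Matrix.of fun i j => ⟨ρ g i j, hmem g i j⟩, ?_⟩, ?_⟩, fun g => ?_⟩
  · ext i j
    have h1 : ((1 : Matrix (Fin d) (Fin d) A) i j : K) = (1 : Matrix (Fin d) (Fin d) K) i j := by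
      rw [Matrix.one_apply, Matrix.one_apply]
      split_ifs <;> rfl
    change ρ 1 i j = _
    rw [map_one, h1]
  · intro g h
    ext i j
    rw [Matrix.mul_apply]
    simp [Matrix.mul_apply]
  · ext i j; rfl

/-- The entries of a representation of a finitely generated group by algebraic numbers are
`m`-integers for some `m`. -/
theorem exists_SInt_model [Algebra.IsAlgebraic ℚ K] (hfg : Group.FG G)
    (ρ : G →* Matrix (Fin d) (Fin d) K) : ∃ m : ℕ, m ≠ 0 ∧ ∀ g i j, ρ g i j ∈ SInt K m := by
  classical
  obtain ⟨S, hS⟩ := hfg.out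
  obtain ⟨m, hm, h⟩ := exists_mem_SInt
    ((S ×ˢ Finset.univ ×ˢ Finset.univ).image (fun p => ρ p.1 p.2.1 p.2.2) ∪
      (S ×ˢ Finset.univ ×ˢ Finset.univ).image (fun p => ρ p.1⁻¹ p.2.1 p.2.2))
  refine ⟨m, hm, entries_mem ρ hS _ ?_⟩
  intro x hx i j
  refine h _ (Finset.mem_union.2 ?_)
  rcases hx with hx | hx
  · exact Or.inl (Finset.mem_image.2 ⟨(x, i, j), by simpa using hx, rfl⟩)
  · exact Or.inr (Finset.mem_image.2 ⟨(x⁻¹, i, j), by simpa using hx, by simp⟩)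

end Model

/-- A nonzero Gram determinant certifies that words span; unlike spanning itself, this survives
specialisation. -/
theorem span_eq_top_of_gram {K : Type*} [Field K] {d : ℕ} {G : Type*} [Group G]
    (ρ : G →* Matrix (Fin d) (Fin d) K) (w : Fin d × Fin d → G)
    (h : (Matrix.of fun r l => (ρ (w r * w l)).trace).det ≠ 0) :
    Submodule.span K (Set.range fun k => ρ (w k)) = ⊤ := by
  have hli : LinearIndependent K fun k => ρ (w k) := by
    refine Fintype.linearIndependent_iff.2 fun u hu => ?_
    by_contra! hcon
    refine h (Matrix.exists_mulVec_eq_zero_iff.1 ⟨u, Function.ne_iff.2 hcon, ?_⟩)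
    funext r
    have h1 := congrArg (fun M => (ρ (w r) * M).trace) hu
    simp only [mul_zero, Matrix.trace_zero, Finset.mul_sum, Matrix.trace_sum, mul_smul_comm,
      Matrix.trace_smul, smul_eq_mul] at h1
    simp only [Matrix.mulVec, dotProduct, Matrix.of_apply, Pi.zero_apply, map_mul]
    rw [← h1]
    exact Finset.sum_congr rfl fun l _ => mul_comm _ _
  exact hli.span_eq_top_of_card_eq_finrank' (by rw [Module.finrank_matrix]; simp)

/-- The trace of a matrix of finite order is a sum of `d` roots of unity. -/
theorem trace_of_finite_order {K : Type*} [Field K] [Algebra ℚ K] [Algebra.IsAlgebraic ℚ K]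
    [IsAlgClosed K] {d : ℕ} (M : Matrix (Fin d) (Fin d) K) {k : ℕ} (hk : k ≠ 0) (h : M ^ k = 1) :
    M.trace ∈ SInt K 1 ∧ ∀ v : AbsoluteValue K ℝ, v M.trace ≤ d := by
  obtain ⟨lam, hch, htr, -⟩ := exists_eigenvalues M
  have hroot : ∀ j, lam j ^ k = 1 := by
    intro j
    obtain ⟨w, hw, hMw⟩ := exists_eigenmatrix M (x := lam j) (by
      rw [Polynomial.IsRoot.def, hch, Polynomial.eval_prod]
      exact Finset.prod_eq_zero (Finset.mem_univ j) (by simp))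
    have h1 : ∀ n : ℕ, M ^ n * w = lam j ^ n • w := by
      intro n
      induction n with
      | zero => simp
      | succ n ih => rw [pow_succ, mul_assoc, hMw, mul_smul_comm, ih, smul_smul, pow_succ']
    have h2 := h1 k
    rw [h, one_mul] at h2
    have h3 : (lam j ^ k - 1) • w = 0 := by rw [sub_smul, ← h2, one_smul, sub_self]
    exact sub_eq_zero.1 ((smul_eq_zero.1 h3).resolve_right hw)
  rw [htr]
  refine ⟨sum_mem fun j _ => ⟨0, ?_⟩, fun v => ?_⟩
  · rw [pow_zero, one_mul]
    refine IsIntegral.of_pow (Nat.pos_of_ne_zero hk) ?_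
    rw [hroot]; exact isIntegral_one
  · have hv : ∀ j, v (lam j) = 1 := fun j => by
      have := congrArg v (hroot j)
      rw [map_pow, map_one] at this
      exact (pow_eq_one_iff_of_nonneg (v.nonneg _) hk).1 this
    calc v (∑ j, lam j) ≤ ∑ j, v (lam j) := IsAbsoluteValue.abv_sum _ _ _
      _ = d := by simp [hv]

/-- Restated for the `ℚ`-algebra structure of a division ring of characteristic zero, which is not
syntactically the one carried by `AlgebraicClosure ℚ`. -/
theorem isAlgebraic_algebraicClosure_rat : Algebra.IsAlgebraic ℚ (AlgebraicClosure ℚ) := by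
  have h := AlgebraicClosure.isAlgebraic ℚ
  convert h
  · rfl
  · exact Subsingleton.elim _ _

/-- For a strongly irreducible representation of determinant one, every generating set has two
short words generating a free semigroup, even modulo scalars. -/
theorem separated_pairs' {K : Type*} [Field K] [Algebra ℚ K] {d : ℕ} (hd : 2 ≤ d)
    {G : Type*} [Group G] (hfg : Group.FG G) (ρ : G →* Matrix (Fin d) (Fin d) K)
    (hirr : ∀ H : Subgroup G, H.FiniteIndex → Submodule.span K (ρ '' H) = ⊤)
    (hdet : ∀ g, (ρ g).det = 1) :
    ∃ M, ∀ S : Finset G, Generates S → ∃ a ∈ wordBall S M, ∃ b ∈ wordBall S M,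
      ∀ u ∈ Submonoid.closure {a, b}, ∀ u' ∈ Submonoid.closure {a, b}, ∀ x : K,
        ρ (a * u) ≠ x • ρ (b * u') := by
  classical
  set L := AlgebraicClosure ℚ
  have hLalg : Algebra.IsAlgebraic ℚ L := isAlgebraic_algebraicClosure_rat
  have hd0 : 0 < d := by omega
  obtain ⟨D, hD⟩ := exists_general_position L d
  obtain ⟨G₁, hG₁, hcore⟩ := exists_core hfg (max D 1)
  obtain ⟨A, hA, ρA, hρA⟩ := exists_model hfg ρ
  obtain ⟨D₂, hspec⟩ := exists_specialization A
  have hAinj : Function.Injective (A.val : A →+* K) := Subtype.val_injective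
  have hρA' : ∀ g, ρ g = (A.val : A →+* K).mapMatrix (ρA g) := hρA
  have htrA : ∀ g, (ρ g).trace = A.val (ρA g).trace := fun g => by
    rw [hρA]; exact (AddMonoidHom.map_trace A.val.toRingHom.toAddMonoidHom (ρA g)).symm
  -- a Gram determinant of words in `G₁`
  obtain ⟨S₁, hS₁⟩ := (Subgroup.fg_of_index_ne_zero G₁).out
  have hspan₁ : Submodule.span K (Set.range (ρ.comp G₁.subtype)) = ⊤ := by
    rw [← hirr G₁ hG₁]
    congr 1
    ext y; simp
  obtain ⟨w, e, -, he⟩ := exists_word_basis (ρ.comp G₁.subtype) hd0 hspan₁ hS₁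
  have hgram := gram_det_ne_zero (ρ.comp G₁.subtype) he
  set f₁ : A := (Matrix.of fun r l => (ρA (w r * w l : G₁)).trace).det with hf₁
  have hf₁0 : f₁ ≠ 0 := by
    intro h0
    refine hgram ?_
    have h1 := congrArg (A.val : A →+* K) h0
    rw [hf₁, RingHom.map_det, map_zero] at h1
    rw [← h1]
    congr 1
    ext r l
    exact htrA _
  -- traces which stay distinct and cannot all come from finite-order matrices
  set T : Set L := {x : L | x ∈ SInt L 1 ∧ (minpoly ℚ x).natDegree ≤ D₂ ∧
    ∀ v ∈ Places L 1, v x ≤ d} with hT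
  have hTf : T.Finite := northcott one_ne_zero _ _
  have hspanT : Submodule.span K (Set.range ρ) = ⊤ := by
    have := hirr ⊤ inferInstance
    rwa [Subgroup.coe_top, Set.image_univ] at this
  have hinfK : (Set.range ρ).Infinite := by
    intro hfin
    have hker : ρ.toHomUnits.ker.FiniteIndex := by
      have hsub : (ρ.toHomUnits.range : Set (Matrix (Fin d) (Fin d) K)ˣ).Finite := by
        refine (hfin.preimage Units.val_injective.injOn).subset ?_
        rintro _ ⟨g, rfl⟩
        exact ⟨g, rfl⟩
      have : Finite ρ.toHomUnits.range := hsub.to_subtype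
      exact ⟨by rw [Subgroup.index_ker]; exact Nat.card_pos.ne'⟩
    have h1 := hirr _ hker
    have h2 : Submodule.span K (ρ '' ρ.toHomUnits.ker) ≤ Submodule.span K {1} := by
      refine Submodule.span_mono ?_
      rintro _ ⟨g, hg, rfl⟩
      exact congrArg Units.val hg
    rw [h1] at h2
    have h3 := Submodule.finrank_mono h2
    rw [finrank_top, Module.finrank_matrix] at h3
    have h4 := finrank_span_singleton (K := K)
      (v := (1 : Matrix (Fin d) (Fin d) K)) (by
        intro h0
        have := congrFun (congrFun h0 ⟨0, hd0⟩) ⟨0, hd0⟩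
        simp at this)
    rw [h4] at h3
    simp at h3
    nlinarith
  obtain ⟨S₀, hS₀⟩ := hfg.out
  have htinf : (Set.range fun g => (ρA g).trace).Infinite := by
    intro hfin
    obtain ⟨x, -, hx⟩ := exists_trace_notMem ρ hd0 hspanT hinfK (hfin.image A.val) hS₀
    exact hx ⟨_, ⟨x, rfl⟩, (htrA x).symm⟩
  obtain ⟨t, ht, htc⟩ := htinf.exists_subset_card_eq (hTf.toFinset.card + 1)
  set f₂ : A := ∏ p ∈ t.offDiag, (p.1 - p.2) with hf₂
  have hf₂0 : f₂ ≠ 0 := Finset.prod_ne_zero_iff.2 fun p hp =>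
    sub_ne_zero.2 (Finset.mem_offDiag.1 hp).2.2
  obtain ⟨θ, E, hθ, hE, hED, hθE⟩ := hspec (f₁ * f₂) (mul_ne_zero hf₁0 hf₂0)
  rw [map_mul] at hθ
  have hθ₁ := left_ne_zero_of_mul hθ
  have hθ₂ := right_ne_zero_of_mul hθ
  let ρθ : G →* Matrix (Fin d) (Fin d) L := (θ : A →+* L).mapMatrix.toMonoidHom.comp ρA
  have hρθ : ∀ g, ρθ g = (θ : A →+* L).mapMatrix (ρA g) := fun g => rfl
  have hentry : ∀ g i j, ρθ g i j = θ (ρA g i j) := fun g i j => rfl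
  have htr : ∀ g, (ρθ g).trace = θ (ρA g).trace := fun g =>
    (AddMonoidHom.map_trace (θ : A →+* L).toAddMonoidHom (ρA g)).symm
  have hdetA : ∀ g, (ρA g).det = 1 := fun g => hAinj (by
    rw [RingHom.map_det, ← hρA', hdet, map_one])
  have hdetθ : ∀ g, (ρθ g).det = 1 := fun g => by
    rw [hρθ, ← RingHom.map_det, hdetA, map_one]
  have hspanθ : Submodule.span L (ρθ '' G₁) = ⊤ := by
    rw [eq_top_iff, ← span_eq_top_of_gram ρθ (fun k => (w k : G)) ?_]
    · refine Submodule.span_mono ?_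
      rintro _ ⟨k, rfl⟩
      exact ⟨w k, (w k).2, rfl⟩
    · change θ f₁ ≠ 0 at hθ₁
      rw [hf₁] at hθ₁
      have h1 := RingHom.map_det (θ : A →+* L)
        (Matrix.of fun r l => (ρA (w r * w l : G₁)).trace)
      change θ _ = _ at h1
      rw [h1] at hθ₁
      have h2 : (Matrix.of fun r l => (ρθ ((w r : G) * w l)).trace) = (θ : A →+* L).mapMatrix
          (Matrix.of fun r l => (ρA (w r * w l : G₁)).trace) := by
        ext r l
        exact htr _
      rw [h2]
      exact hθ₁
  have hspanH : ∀ H : Subgroup G, H.index ≠ 0 → H.index ≤ max D 1 →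
      Submodule.span L (ρθ '' H) = ⊤ := fun H h0 h1 => by
    rw [eq_top_iff, ← hspanθ]
    exact Submodule.span_mono (Set.image_mono (hcore H h0 h1))
  have hspanθ' : Submodule.span L (Set.range ρθ) = ⊤ := by
    have := hspanH ⊤ (by simp) (by simp)
    rwa [Subgroup.coe_top, Set.image_univ] at this
  have hinfθ : (Set.range ρθ).Infinite := by
    intro hfin
    have hsub : t.image θ ⊆ hTf.toFinset := by
      intro y hy
      obtain ⟨x, hx, rfl⟩ := Finset.mem_image.1 hy
      obtain ⟨g, rfl⟩ := ht hx
      rw [Set.Finite.mem_toFinset]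
      beta_reduce
      obtain ⟨k, hk, hgk⟩ : ∃ k : ℕ, k ≠ 0 ∧ ρθ g ^ k = 1 := by
        have hfo : ¬ Function.Injective fun n : ℕ => ρθ (g ^ n) := fun hinj =>
          Set.infinite_range_of_injective hinj (hfin.subset (by rintro _ ⟨n, rfl⟩; exact ⟨_, rfl⟩))
        simp only [Function.Injective, not_forall] at hfo
        obtain ⟨n, n', heq, hne⟩ := hfo
        wlog hlt : n < n' generalizing n n'
        · exact this n' n heq.symm (Ne.symm hne) (by omega)
        refine ⟨n' - n, by omega, ?_⟩
        have h1 : ρθ (g ^ n' * (g ^ n)⁻¹) = 1 := by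
          rw [map_mul, ← heq, ← map_mul, mul_inv_cancel, map_one]
        rw [← pow_sub _ hlt.le, map_pow] at h1
        exact h1
      obtain ⟨h1, h2⟩ := trace_of_finite_order _ hk hgk
      rw [htr] at h1 h2
      exact ⟨h1, (natDegree_minpoly_le_finrank E hE (hθE _)).trans hED, fun v _ => h2 v⟩
    have hcard : (t.image θ).card = t.card := by
      refine Finset.card_image_of_injOn fun x hx y hy hxy => ?_
      by_contra hne
      refine hθ₂ ?_
      rw [hf₂, map_prod]
      refine Finset.prod_eq_zero (i := (x, y)) (Finset.mem_offDiag.2 ⟨hx, hy, hne⟩) ?_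
      rw [map_sub, hxy, sub_self]
    have := Finset.card_le_card hsub
    omega
  obtain ⟨m, hm, hint⟩ := exists_SInt_model hfg ρθ
  obtain ⟨M, hM⟩ := separated_pairs hm hd0 ρθ hspanθ'
    (hD G ρθ fun H h0 h1 => hspanH H h0 (h1.trans (le_max_left _ _))) hinfθ hdetθ hint E
    fun g i j => hθE _
  refine ⟨M, fun S hS => ?_⟩
  obtain ⟨a, ha, b, hb, hab⟩ := hM S hS
  refine ⟨a, ha, b, hb, fun u hu u' hu' x heq => ?_⟩
  -- proportionality of two matrices is preserved by specialisation
  have hcross : ∀ i j k l, ρθ (a * u) i j * ρθ (b * u') k l = ρθ (a * u) k l * ρθ (b * u') i j := by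
    intro i j k l
    rw [hentry, hentry, hentry, hentry, ← map_mul, ← map_mul]
    congr 1
    refine hAinj ?_
    have h1 : ∀ g i j, (A.val : A →+* K) (ρA g i j) = ρ g i j := fun g i j => by rw [hρA]; rfl
    rw [map_mul (A.val : A →+* K), map_mul (A.val : A →+* K), h1, h1, h1, h1, heq, Matrix.smul_apply, Matrix.smul_apply, smul_eq_mul,
      smul_eq_mul]
    ring
  obtain ⟨k, l, hkl⟩ : ∃ k l, ρθ (b * u') k l ≠ 0 := by
    by_contra! h0
    have h1 : ρθ (b * u') = 0 := by ext; simp [h0]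
    have h2 := hdetθ (b * u')
    have : Nonempty (Fin d) := ⟨⟨0, hd0⟩⟩
    rw [h1, Matrix.det_zero] at h2
    · exact zero_ne_one h2
  refine hab u hu u' hu' (ρθ (a * u) k l / ρθ (b * u') k l) ?_
  ext i j
  rw [Matrix.smul_apply, smul_eq_mul, div_mul_eq_mul_div, eq_div_iff hkl, hcross i j k l]

end EMO

/-! ### Strongly irreducible groups -/

namespace EMO

/-- A strongly irreducible representation of dimension at least two yields uniformly short free
pairs: after a finite central extension the representation has determinant one. -/
theorem StronglyIrred.uniformFree {K : Type*} [Field K] [Algebra ℚ K] [IsAlgClosed K]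
    {Γ : Type*} [Group Γ] (hfg : Group.FG Γ) (h : StronglyIrred K Γ) : UniformFree Γ := by
  classical
  obtain ⟨d, hd, ρ, hirr⟩ := h
  have hd0 : d ≠ 0 := by omega
  let δ : Γ →* Kˣ := (Matrix.detMonoidHom.comp ρ).toHomUnits
  have hδ : ∀ g, ((δ g : Kˣ) : K) = (ρ g).det := fun g => rfl
  let ε : Γ × Kˣ →* Kˣ :=
    ((powMonoidHom d).comp (MonoidHom.snd Γ Kˣ)) * (δ.comp (MonoidHom.fst Γ Kˣ))
  have hε : ∀ x, ε x = x.2 ^ d * δ x.1 := fun x => rfl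
  -- the pairs `(g, x)` with `det (x • ρ g) = 1`, an extension of `Γ` by the `d`-th roots of unity
  let G : Subgroup (Γ × Kˣ) := ε.ker
  let ρ₁ : Γ × Kˣ →* Matrix (Fin d) (Fin d) K :=
    { toFun := fun x => (x.2 : K) • ρ x.1
      map_one' := by simp
      map_mul' := fun x y => by simp [smul_smul, mul_comm] }
  have hρ₁ : ∀ x, ρ₁ x = (x.2 : K) • ρ x.1 := fun x => rfl
  let ρ' : G →* Matrix (Fin d) (Fin d) K := ρ₁.comp G.subtype
  have hρ' : ∀ x : G, ρ' x = ((x : Γ × Kˣ).2 : K) • ρ (x : Γ × Kˣ).1 := fun x => rfl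
  have hdet : ∀ x : G, (ρ' x).det = 1 := by
    rintro ⟨x, hx⟩
    have h1 : x.2 ^ d * δ x.1 = 1 := hx
    rw [hρ', Matrix.det_smul, Fintype.card_fin, ← hδ, ← Units.val_pow_eq_pow_val,
      ← Units.val_mul, h1, Units.val_one]
  let p : G →* Γ := (MonoidHom.fst Γ Kˣ).comp G.subtype
  have hp : ∀ x : G, p x = (x : Γ × Kˣ).1 := fun x => rfl
  have hpsurj : Function.Surjective p := by
    intro g
    obtain ⟨c, hc⟩ := IsAlgClosed.exists_pow_nat_eq (((δ g)⁻¹ : Kˣ) : K) (Nat.pos_of_ne_zero hd0)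
    have hc0 : c ≠ 0 := by
      rintro rfl
      rw [zero_pow hd0] at hc
      exact (Units.ne_zero _) hc.symm
    refine ⟨⟨(g, Units.mk0 c hc0), ?_⟩, rfl⟩
    change ε _ = 1
    rw [hε]
    have h1 : (Units.mk0 c hc0) ^ d = (δ g)⁻¹ := Units.ext (by simpa using hc)
    change (Units.mk0 c hc0) ^ d * δ g = 1
    rw [h1, inv_mul_cancel]
  have hfib : ∀ g, (p ⁻¹' {g}).Finite := by
    intro g
    refine Set.Finite.of_finite_image (f := fun x : G => ((x : Γ × Kˣ).2 : K))
      ((Polynomial.nthRoots d (((δ g)⁻¹ : Kˣ) : K)).toFinset.finite_toSet.subset ?_) ?_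
    · rintro _ ⟨⟨x, hx⟩, hxg, rfl⟩
      have h1 : x.2 ^ d * δ x.1 = 1 := hx
      have h2 : x.1 = g := hxg
      rw [h2] at h1
      simp only [Finset.mem_coe, Multiset.mem_toFinset]
      rw [Polynomial.mem_nthRoots (Nat.pos_of_ne_zero hd0), ← Units.val_pow_eq_pow_val,
        eq_inv_of_mul_eq_one_left h1]
    · rintro x hx y hy hxy
      refine Subtype.ext (Prod.ext ?_ (Units.ext hxy))
      exact (show p x = p y from Eq.trans hx (Eq.symm hy))
  have hlift : ∀ S : Finset Γ, ∃ S' : Finset G, ∀ x, x ∈ S' ↔ p x ∈ S ∨ p x = 1 := by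
    intro S
    have hf : (p ⁻¹' ((insert 1 S : Finset Γ) : Set Γ)).Finite :=
      Set.Finite.preimage' (Finset.finite_toSet _) fun b _ => hfib b
    exact ⟨hf.toFinset, fun x => by simp [or_comm]⟩
  have hgen : ∀ S : Finset Γ, Generates S → ∀ S' : Finset G,
      (∀ x, x ∈ S' ↔ p x ∈ S ∨ p x = 1) → Generates S' := by
    intro S hS S' hS'
    have key : ∀ g, ∀ x : G, p x = g → x ∈ Subgroup.closure (S' : Set G) := by
      refine generates_induction hS ?_ ?_
      · intro x hx
        exact Subgroup.subset_closure ((hS' x).2 (Or.inr hx))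
      · intro s g hs ih x hx
        obtain ⟨y, hy⟩ := hpsurj s
        have h1 : y ∈ Subgroup.closure (S' : Set G) := by
          rcases hs with hs | hs
          · exact Subgroup.subset_closure ((hS' y).2 (Or.inl (hy ▸ hs)))
          · refine (Subgroup.inv_mem_iff _).1 (Subgroup.subset_closure ((hS' _).2 (Or.inl ?_)))
            rw [map_inv, hy]; exact hs
        have h2 := ih (y⁻¹ * x) (by rw [map_mul, map_inv, hy, hx]; group)
        have h3 := mul_mem h1 h2
        rwa [mul_inv_cancel_left] at h3
    exact eq_top_iff.2 fun x _ => key _ x rfl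
  have hfgG : Group.FG G := by
    obtain ⟨S, hS⟩ := hfg.out
    obtain ⟨S', hS'⟩ := hlift S
    exact ⟨⟨S', hgen S hS S' hS'⟩⟩
  have hirr' : ∀ H : Subgroup G, H.FiniteIndex → Submodule.span K (ρ' '' H) = ⊤ := by
    intro H hH
    have hH' : (H.map p).FiniteIndex :=
      ⟨fun h0 => hH.index_ne_zero (by
        have := Subgroup.index_map_dvd H hpsurj
        rw [h0] at this
        exact Nat.eq_zero_of_zero_dvd this)⟩
    rw [eq_top_iff, ← hirr _ hH', Submodule.span_le]
    rintro _ ⟨_, ⟨x, hx, rfl⟩, rfl⟩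
    have h1 : ρ (p x) = (((x : Γ × Kˣ).2⁻¹ : Kˣ) : K) • ρ' x := by
      rw [hρ', smul_smul, ← Units.val_mul, inv_mul_cancel, Units.val_one, one_smul]; rfl
    rw [h1]
    exact Submodule.smul_mem _ _ (Submodule.subset_span ⟨x, hx, rfl⟩)
  obtain ⟨M, hM⟩ := separated_pairs' hd hfgG ρ' hirr' hdet
  refine ⟨M, fun S hS => ?_⟩
  obtain ⟨S', hS'⟩ := hlift S
  obtain ⟨a, ha, b, hb, hab⟩ := hM S' (hgen S hS S' hS')
  have hball : ∀ n, ∀ x ∈ wordBall S' n, p x ∈ wordBall S n := by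
    refine wordBall_induction (p := fun n x => p x ∈ wordBall S n) ?_ ?_
    · intro n
      rw [map_one]
      exact one_mem_wordBall S n
    · intro n s x hs _ ih
      rw [map_mul, add_comm n 1]
      refine mul_mem_wordBall ?_ ih
      rcases hs with hs | hs
      · rcases (hS' _).1 hs with h1 | h1
        · exact mem_wordBall_one (Or.inl h1)
        · rw [h1]; exact one_mem_wordBall S 1
      · rcases (hS' _).1 hs with h1 | h1
        · rw [map_inv] at h1
          exact mem_wordBall_one (Or.inr h1)
        · rw [map_inv, inv_eq_one] at h1
          rw [h1]; exact one_mem_wordBall S 1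
  refine ⟨p a, hball M a ha, p b, hball M b hb, ?_⟩
  have hcl : Submonoid.closure {p a, p b} = (Submonoid.closure {a, b}).map p := by
    rw [MonoidHom.map_mclosure, Set.image_pair]
  rw [FreePair, hcl]
  rintro _ ⟨u, hu, rfl⟩ _ ⟨u', hu', rfl⟩ heq
  rw [← map_mul, ← map_mul] at heq
  refine hab u hu u' hu' ((((a * u : G) : Γ × Kˣ).2 * (((b * u' : G) : Γ × Kˣ).2)⁻¹ : Kˣ) : K) ?_
  have heq' : ((a * u : G) : Γ × Kˣ).1 = ((b * u' : G) : Γ × Kˣ).1 := heq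
  rw [hρ', hρ', smul_smul, ← Units.val_mul, inv_mul_cancel_right, heq']

end EMO

/-! ### Affine actions -/

namespace EMO

/-- Affine actions on the line defined over a number field and of bounded complexity: a uniform
power of some generator expands at some place, and ping-pong between it and a conjugate by another
generator takes place in a ball around the fixed points. -/
theorem affine_uniformFree {K : Type*} [Field K] [Algebra ℚ K] [Algebra.IsAlgebraic ℚ K]
    {Γ : Type*} [Group Γ] {m : ℕ} (hm : m ≠ 0) (χ : Γ →* K) (c : Γ → K)
    (hc : ∀ g h, c (g * h) = c g + χ g * c h) (hint : ∀ g, χ g ∈ SInt K m)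
    (E : IntermediateField ℚ K) (hE : FiniteDimensional ℚ E) (hχE : ∀ g, χ g ∈ E)
    (hinf : ∃ g, ¬ IsOfFinOrder (χ g)) (hne : ¬ ∃ t, ∀ g, c g = t * (1 - χ g)) :
    UniformFree Γ := by
  classical
  set T : Set K := {x : K | x ∈ SInt K m ∧ (minpoly ℚ x).natDegree ≤ Module.finrank ℚ E ∧
    ∀ v ∈ Places K m, v x ≤ 5} with hT
  have hTf : T.Finite := northcott hm _ _
  have hinv : ∀ g, χ g * χ g⁻¹ = 1 := fun g => by rw [← map_mul, mul_inv_cancel, map_one]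
  have hχ0 : ∀ g, χ g ≠ 0 := fun g => left_ne_zero_of_mul_eq_one (hinv g)
  refine ⟨T.ncard + 2, fun S hS => ?_⟩
  -- a generator whose linear part is not a root of unity
  obtain ⟨s, hs, hsχ⟩ : ∃ s ∈ S, ¬ IsOfFinOrder (χ s) := by
    by_contra! hcon
    obtain ⟨g, hg⟩ := hinf
    refine hg (generates_induction hS (p := fun g => IsOfFinOrder (χ g)) ?_ ?_ g)
    · rw [map_one]; exact IsOfFinOrder.one
    · intro s x hs hx
      rw [map_mul]
      refine IsOfFinOrder.mul ?_ hx
      rcases hs with hs | hs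
      · exact hcon s hs
      · obtain ⟨n, hn, h1⟩ := isOfFinOrder_iff_pow_eq_one.1 (hcon _ hs)
        refine isOfFinOrder_iff_pow_eq_one.2 ⟨n, hn, ?_⟩
        have h2 : (χ s * χ s⁻¹) ^ n = 1 := by rw [hinv, one_pow]
        rwa [mul_pow, h1, mul_one] at h2
  have hinj : Function.Injective fun n : ℕ => χ s ^ n := fun i j hij => by
    by_contra hne
    refine hsχ (isOfFinOrder_iff_pow_eq_one.2 ?_)
    wlog hlt : i < j generalizing i j
    · exact this j i hij.symm (Ne.symm hne) (by omega)
    refine ⟨j - i, by omega, ?_⟩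
    have h1 : χ s ^ i * χ s ^ (j - i) = χ s ^ i * 1 := by
      rw [← pow_add, Nat.add_sub_cancel' hlt.le, mul_one]; exact hij.symm
    exact mul_left_cancel₀ (pow_ne_zero _ (hχ0 s)) h1
  obtain ⟨k, hk, hkT⟩ : ∃ k ≤ T.ncard, χ s ^ k ∉ T := by
    by_contra! hcon
    have h1 : ((Finset.range (T.ncard + 1)).image fun n : ℕ => χ s ^ n) ⊆ hTf.toFinset := by
      intro y hy
      obtain ⟨n, hn, rfl⟩ := Finset.mem_image.1 hy
      exact hTf.mem_toFinset.2 (hcon n (Nat.lt_succ_iff.1 (Finset.mem_range.1 hn)))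
    have h2 := Finset.card_le_card h1
    rw [Finset.card_image_of_injective _ hinj, Finset.card_range,
      ← Set.ncard_eq_toFinset_card T hTf] at h2
    omega
  obtain ⟨v, -, hv⟩ : ∃ v ∈ Places K m, 5 < v (χ s ^ k) := by
    by_contra! hcon
    exact hkT ⟨pow_mem (hint s) k,
      natDegree_minpoly_le_finrank E hE (pow_mem (hχE s) k), hcon⟩
  have hs1 : (1 : K) - χ s ≠ 0 := fun h0 => hsχ (by
    rw [← sub_eq_zero.1 h0]; exact IsOfFinOrder.one)
  -- move the fixed point of `s` to the origin
  set t := c s / (1 - χ s) with ht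
  let c' : Γ → K := fun g => c g - t * (1 - χ g)
  have hc's : c' s = 0 := by
    change c s - t * (1 - χ s) = 0
    rw [ht, div_mul_cancel₀ _ hs1, sub_self]
  have hc' : ∀ g h, c' (g * h) = c' g + χ g * c' h := fun g h => by
    change c (g * h) - t * (1 - χ (g * h)) = c g - t * (1 - χ g) + χ g * (c h - t * (1 - χ h))
    rw [hc, map_mul]; ring
  have hc'1 : c' 1 = 0 := by
    have := hc' 1 1
    rw [mul_one, map_one, one_mul] at this
    exact left_eq_add.1 this
  have hc'inv : ∀ g, c' g⁻¹ = 0 → c' g = 0 := fun g hg => by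
    have := hc' g g⁻¹
    rwa [mul_inv_cancel, hc'1, hg, mul_zero, add_zero, eq_comm] at this
  obtain ⟨b, hb, hcb⟩ : ∃ b ∈ S, c' b ≠ 0 := by
    by_contra! hcon
    refine hne ⟨t, fun g => sub_eq_zero.1 ?_⟩
    refine generates_induction hS (p := fun g => c' g = 0) hc'1 ?_ g
    intro x y hx hy
    have hx0 : c' x = 0 := hx.elim (hcon x) fun h => hc'inv x (hcon _ h)
    rw [hc', hx0, hy, mul_zero, add_zero]
  have hc'pow : ∀ n : ℕ, c' (s ^ n) = 0 := fun n => by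
    induction n with
    | zero => rw [pow_zero]; exact hc'1
    | succ n ih => rw [pow_succ, hc', ih, hc's, mul_zero, add_zero]
  set α : Γ := (s ^ k)⁻¹ with hα
  set β : Γ := b * α * b⁻¹ with hβ
  have hcα : c' α = 0 := hc'inv α (by rw [hα, inv_inv]; exact hc'pow k)
  have hαball : α ∈ wordBall S k := by
    have h1 := inv_mem_wordBall (pow_mem_wordBall (mem_wordBall_one (S := S) (Or.inl hs)) k)
    rwa [mul_one] at h1
  have hbball : b ∈ wordBall S 1 := mem_wordBall_one (Or.inl hb)
  have hβball : β ∈ wordBall S (1 + k + 1) :=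
    mul_mem_wordBall (mul_mem_wordBall hbball hαball) (inv_mem_wordBall hbball)
  have hχα : v (χ α) * 5 < 1 := by
    have h1 : χ (s ^ k) * χ α = 1 := hinv _
    have h2 := congrArg v h1
    rw [map_mul, map_one, map_pow] at h2
    have h3 : 0 < v (χ α) := v.pos (hχ0 α)
    nlinarith
  have hχβ : χ β = χ α := by
    rw [hβ, map_mul, map_mul]
    linear_combination χ α * hinv b
  have hcβ : c' β = c' b * (1 - χ α) := by
    have h1 := hc' b b⁻¹
    rw [mul_inv_cancel, hc'1] at h1
    rw [hβ, hc', hc', hcα, map_mul]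
    linear_combination (-χ α) * h1
  let act : Γ → K → K := fun g x => c' g + χ g * x
  have hact : ∀ g h x, act (g * h) x = act g (act h x) := fun g h x => by
    change c' (g * h) + χ (g * h) * x = c' g + χ g * (c' h + χ h * x)
    rw [hc', map_mul]; ring
  set r := v (c' b) with hr
  have hr0 : 0 < r := v.pos hcb
  have hα_act : ∀ x, v x ≤ 3 / 2 * r → v (act α x) < r / 2 := by
    intro x hx
    change v (c' α + χ α * x) < _
    rw [hcα, zero_add, map_mul]
    have := v.nonneg (χ α)
    nlinarith [mul_le_mul_of_nonneg_left hx this]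
  have hβ_act : ∀ x, v x ≤ 3 / 2 * r → v (act β x - c' b) < r / 2 := by
    intro x hx
    have h1 : act β x - c' b = χ α * (x - c' b) := by
      change c' β + χ β * x - c' b = _
      rw [hcβ, hχβ]; ring
    rw [h1, map_mul]
    have h2 : v (x - c' b) ≤ 5 / 2 * r := (v.sub_le_add _ _).trans (by rw [← hr]; linarith)
    have := v.nonneg (χ α)
    nlinarith [mul_le_mul_of_nonneg_left h2 this]
  have hβ_act' : ∀ x, v x ≤ 3 / 2 * r → v (act β x) ≤ 3 / 2 * r ∧ r / 2 < v (act β x) := by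
    intro x hx
    have h1 := hβ_act x hx
    have h2 : v (act β x) ≤ v (act β x - c' b) + v (c' b) := by
      have := v.add_le (act β x - c' b) (c' b)
      rwa [sub_add_cancel] at this
    have h3 : v (c' b) ≤ v (act β x) + v (act β x - c' b) := by
      have := v.sub_le_add (act β x) (act β x - c' b)
      rwa [sub_sub_cancel] at this
    constructor <;> linarith
  have hu : ∀ u ∈ Submonoid.closure {α, β}, v (act u 0) ≤ 3 / 2 * r := by
    intro u hu
    induction hu using Submonoid.closure_induction_left with
    | one =>
      change v (c' 1 + χ 1 * 0) ≤ _
      rw [hc'1, mul_zero, add_zero, map_zero]; positivity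
    | mul_left x hx y _ ih =>
      rw [hact]
      rcases hx with rfl | hx
      · exact (hα_act _ ih).le.trans (by linarith)
      · rw [Set.mem_singleton_iff.1 hx]
        exact (hβ_act' _ ih).1
  refine ⟨α, wordBall_mono S (by omega) hαball, β, wordBall_mono S (by omega) hβball, ?_⟩
  intro u hu1 u' hu2 heq
  have h1 := hα_act _ (hu u hu1)
  have h2 := (hβ_act' _ (hu u' hu2)).2
  rw [← hact] at h1 h2
  rw [heq] at h1
  linarith

/-- Specialisation to a number field preserves the absence of a fixed point, witnessed by two elements
without a common fixed point, and the presence of a linear part which is not a root of unity. -/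
theorem AffineAction.uniformFree {K : Type*} [Field K] [Algebra ℚ K]
    {Γ : Type*} [Group Γ] (hfg : Group.FG Γ) (h : AffineAction K Γ) : UniformFree Γ := by
  classical
  obtain ⟨χ, c, hinf, hc, hne⟩ := h
  set L := AlgebraicClosure ℚ
  have hLalg : Algebra.IsAlgebraic ℚ L := isAlgebraic_algebraicClosure_rat
  have hc1 : c 1 = 0 := by
    have := hc 1 1
    rw [mul_one, map_one, Units.val_one, one_mul] at this
    exact left_eq_add.1 this
  let ρ : Γ →* Matrix (Fin 2) (Fin 2) K :=
    { toFun := fun g => !![(χ g : K), c g; 0, 1]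
      map_one' := by
        rw [hc1, map_one, Units.val_one]
        ext i j; fin_cases i <;> fin_cases j <;> rfl
      map_mul' := fun g h => by
        rw [hc, map_mul, Units.val_mul, Matrix.mul_fin_two]
        congr 1
        ext i j; fin_cases i <;> fin_cases j <;> simp [add_comm] }
  obtain ⟨A, hA, ρA, hρA⟩ := exists_model hfg ρ
  obtain ⟨D₂, hspec⟩ := exists_specialization A
  have hAinj : Function.Injective (A.val : A →+* K) := Subtype.val_injective
  have h00 : ∀ g, A.val (ρA g 0 0) = χ g := fun g =>
    (congrFun (congrFun (hρA g) 0) 0).symm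
  have h01 : ∀ g, A.val (ρA g 0 1) = c g := fun g =>
    (congrFun (congrFun (hρA g) 0) 1).symm
  have h10 : ∀ g, ρA g 1 0 = 0 := fun g => hAinj (by
    rw [map_zero]; exact (congrFun (congrFun (hρA g) 1) 0).symm)
  have h11 : ∀ g, ρA g 1 1 = 1 := fun g => hAinj (by
    rw [map_one]; exact (congrFun (congrFun (hρA g) 1) 1).symm)
  -- two elements without a common fixed point
  obtain ⟨g₀, hg₀⟩ : ∃ g, χ g ≠ 1 := by
    by_contra! hcon
    exact hinf ((Set.finite_singleton 1).subset (by rintro _ ⟨g, rfl⟩; exact hcon g))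
  have hg₀' : (1 : K) - χ g₀ ≠ 0 := fun h0 => hg₀ (Units.ext (sub_eq_zero.1 h0).symm)
  obtain ⟨h₀, hh₀⟩ : ∃ h, c h * (1 - χ g₀) ≠ c g₀ * (1 - χ h) := by
    by_contra! hcon
    refine hne ⟨c g₀ / (1 - χ g₀), fun h => ?_⟩
    rw [div_mul_eq_mul_div, eq_div_iff hg₀', hcon h]
  set f₁ : A := ρA h₀ 0 1 * (1 - ρA g₀ 0 0) - ρA g₀ 0 1 * (1 - ρA h₀ 0 0) with hf₁
  have hf₁0 : f₁ ≠ 0 := by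
    intro h0
    have h1 := congrArg A.val h0
    rw [hf₁, map_sub, map_mul, map_mul, map_sub, map_sub, map_one, h01, h00, h01, h00,
      map_zero] at h1
    exact hh₀ (sub_eq_zero.1 h1)
  -- more values of the character than roots of unity of bounded degree
  set T : Set L := {x : L | x ∈ SInt L 1 ∧ (minpoly ℚ x).natDegree ≤ D₂ ∧
    ∀ v ∈ Places L 1, v x ≤ 1} with hT
  have hTf : T.Finite := northcott one_ne_zero _ _
  have hχinf : (Set.range fun g => ρA g 0 0).Infinite := by
    intro hfin
    refine hinf (Set.Finite.of_finite_image (f := fun x : Kˣ => (x : K))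
      ((hfin.image A.val).subset ?_) Units.val_injective.injOn)
    rintro _ ⟨_, ⟨g, rfl⟩, rfl⟩
    exact ⟨_, ⟨g, rfl⟩, h00 g⟩
  obtain ⟨t, ht, htc⟩ := hχinf.exists_subset_card_eq (hTf.toFinset.card + 1)
  set f₂ : A := ∏ p ∈ t.offDiag, (p.1 - p.2) with hf₂
  have hf₂0 : f₂ ≠ 0 := Finset.prod_ne_zero_iff.2 fun p hp =>
    sub_ne_zero.2 (Finset.mem_offDiag.1 hp).2.2
  obtain ⟨θ, E, hθ, hE, hED, hθE⟩ := hspec (f₁ * f₂) (mul_ne_zero hf₁0 hf₂0)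
  rw [map_mul] at hθ
  have hθ₁ := left_ne_zero_of_mul hθ
  have hθ₂ := right_ne_zero_of_mul hθ
  let ρθ : Γ →* Matrix (Fin 2) (Fin 2) L := (θ : A →+* L).mapMatrix.toMonoidHom.comp ρA
  have hentry : ∀ g i j, ρθ g i j = θ (ρA g i j) := fun g i j => rfl
  let χθ : Γ →* L :=
    { toFun := fun g => ρθ g 0 0
      map_one' := by rw [map_one]; rfl
      map_mul' := fun g h => by
        rw [map_mul, Matrix.mul_apply, Fin.sum_univ_two, hentry h 1 0, h10, map_zero, mul_zero,
          add_zero] }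
  have hχθ : ∀ g, χθ g = θ (ρA g 0 0) := fun g => rfl
  obtain ⟨m, hm, hint⟩ := exists_SInt_model hfg ρθ
  refine affine_uniformFree hm χθ (fun g => ρθ g 0 1) ?_ (fun g => hint g 0 0) E hE
    (fun g => hθE _) ?_ ?_
  · intro g h
    rw [map_mul, Matrix.mul_apply, Fin.sum_univ_two, hentry h 1 1, h11, map_one, mul_one,
      add_comm]
    rfl
  · by_contra! hcon
    have hsub : t.image θ ⊆ hTf.toFinset := by
      intro y hy
      obtain ⟨x, hx, rfl⟩ := Finset.mem_image.1 hy
      obtain ⟨g, rfl⟩ := ht hx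
      rw [Set.Finite.mem_toFinset]
      obtain ⟨n, hn, h1⟩ := isOfFinOrder_iff_pow_eq_one.1 (hcon g)
      rw [hχθ] at h1
      refine ⟨⟨0, ?_⟩, (natDegree_minpoly_le_finrank E hE (hθE _)).trans hED, fun v _ => ?_⟩
      · rw [pow_zero, one_mul]
        refine IsIntegral.of_pow hn ?_
        beta_reduce
        rw [h1]; exact isIntegral_one
      · have := congrArg v h1
        rw [map_pow, map_one] at this
        exact ((pow_eq_one_iff_of_nonneg (v.nonneg _) hn.ne').1 this).le
    have hcard : (t.image θ).card = t.card := by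
      refine Finset.card_image_of_injOn fun x hx y hy hxy => ?_
      by_contra hne
      refine hθ₂ ?_
      rw [hf₂, map_prod]
      refine Finset.prod_eq_zero (i := (x, y)) (Finset.mem_offDiag.2 ⟨hx, hy, hne⟩) ?_
      rw [map_sub, hxy, sub_self]
    have := Finset.card_le_card hsub
    omega
  · rintro ⟨u, hu⟩
    refine hθ₁ ?_
    have h1 := hu g₀
    have h2 := hu h₀
    rw [hχθ] at h1 h2
    rw [hentry] at h1 h2
    rw [hf₁, map_sub, map_mul, map_mul, map_sub, map_sub, map_one, h1, h2]
    ring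

end EMO

/-! ### Linear groups -/

namespace EMO

theorem IsFI.fg {Δ Γ : Type*} [Group Δ] [Group Γ] {ι : Δ →* Γ} (h : Function.Injective ι)
    (hi : ι.range.FiniteIndex) (hfg : Group.FG Γ) : Group.FG Δ := by
  have h1 : Group.FG ι.range := Subgroup.fg_of_index_ne_zero ι.range
  exact Group.fg_of_surjective (f := (MonoidHom.ofInjective h).symm.toMonoidHom)
    (MonoidHom.ofInjective h).symm.surjective

/-- A finitely generated linear group of exponential growth has uniformly short free pairs. -/
theorem uniformFree_of_linear {Γ : Type*} [Group Γ] (hfg : Group.FG Γ)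
    {n : ℕ} {F : Type*} [Field F] [CharZero F]
    (φ : Γ →* Matrix.GeneralLinearGroup (Fin n) F) (hφ : Function.Injective φ)
    (h : HasExponentialGrowth Γ) : UniformFree Γ := by
  obtain ⟨S, hS, hgr⟩ := h
  let K := AlgebraicClosure F
  have : CharZero K := charZero_of_injective_algebraMap (algebraMap F K).injective
  let V := Fin n → K
  let ρ : Γ →* Module.End K V :=
    (Matrix.toLinAlgEquiv' : Matrix (Fin n) (Fin n) K ≃ₐ[K] _).toAlgHom.toRingHom.toMonoidHom.comp
      ((algebraMap F K).mapMatrix.toMonoidHom.comp ((Units.coeHom _).comp φ))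
  have hρ : Function.Injective ρ := by
    refine (Matrix.toLinAlgEquiv' : Matrix (Fin n) (Fin n) K ≃ₐ[K] _).injective.comp ?_
    refine (Matrix.map_injective (algebraMap F K).injective).comp ?_
    exact Units.val_injective.comp hφ
  rcases structure_theorem K n Γ V ρ (by simp [V]) with
    ⟨Δ, _, ι, hι, h⟩ | ⟨Δ, _, ι, hι, h⟩ | ⟨Δ, _, ι, hι, hb⟩
  · exact UniformFree.of_isFI hι (h.uniformFree (IsFI.fg hι.1 hι.2 hfg))
  · exact UniformFree.of_isFI hι (h.uniformFree (IsFI.fg hι.1 hι.2 hfg))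
  · exact absurd (growthRate_le_of_blockBasis hι ρ hρ hb hS) (not_le.2 hgr)

end EMO

/-- **Eskin–Mozes–Oh.** A finitely generated group which is linear over a field of
characteristic `0` has exponential growth if and only if it has uniform exponential growth. -/
theorem exponential_growth_iff_uniform_exponential_growth
    {Γ : Type*} [Group Γ] (hfg : Group.FG Γ)
    {n : ℕ} (hn : 1 ≤ n) {F : Type*} [Field F] [CharZero F]
    (φ : Γ →* Matrix.GeneralLinearGroup (Fin n) F) (hφ : Function.Injective φ) :
    HasExponentialGrowth Γ ↔ HasUniformExponentialGrowth Γ :=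
  ⟨fun h => (EMO.uniformFree_of_linear hfg φ hφ h).uniformGrowth hfg,
    EMO.exponential_of_uniform⟩
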